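/- arXiv:1308.3284 — 7 statements merged into one kernel-verified Lean document; each statement's English description precedes it below -/
import Mathlib

section
/- Let 1 ≤ k ≤ n−1 and let t₁,…,t_{n−1} be distinct complex numbers whose set is stable under complex conjugation, so that f(t) := ∏_{i=1}^{n−1}(t − t_i) has real coefficients. Suppose the derivative f′ is squarefree over ℂ and has exactly ρ real roots, and set c := (n−2−ρ)/2. Then the number of k-dimensional ℂ-subspaces H ⊆ ℂⁿ that are real and satisfy dim(H ∩ F_{i+1}(∞)) ≥ i for i = 1,…,k−1 and H ∩ F_{n−k}(t_i) ≠ {0} for i = 1,…,n−1, equals the coefficient of x^{n−k−1} y^{k−1} in the polynomial (x+y)^ρ (x²+y²)^c. [Corollary counting the real solutions of a real osculating instance of the Schubert problem (□_{k,n}, □^{n−1}).] -/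
/-- The `m`-th derivative of the rational normal curve `γ(t) = (1, t, t²/2!, …, t^{n-1}/(n-1)!)`
in `ℂⁿ`, evaluated at `t`. -/
noncomputable def gammaVec (n m : ℕ) (t : ℂ) : Fin n → ℂ :=
  fun i => Polynomial.eval t
    (Polynomial.derivative^[m]
      (Polynomial.C ((Nat.factorial (i : ℕ) : ℂ))⁻¹ * Polynomial.X ^ (i : ℕ)))

/-- The `i`-dimensional subspace `F_i(t)` osculating the rational normal curve at `γ(t)`. -/
noncomputable def oscFlag (n i : ℕ) (t : ℂ) : Submodule ℂ (Fin n → ℂ) :=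
  Submodule.span ℂ (Set.range fun m : Fin i => gammaVec n (m : ℕ) t)

/-- `F_i(∞)`: the span of the last `i` standard basis vectors of `ℂⁿ`. -/
noncomputable def infFlag (n i : ℕ) : Submodule ℂ (Fin n → ℂ) :=
  Submodule.pi Set.univ fun j : Fin n =>
    if (j : ℕ) + i < n then (⊥ : Submodule ℂ ℂ) else ⊤

/-- A ℂ-subspace of `ℂⁿ` is real if it is stable under coordinatewise complex conjugation. -/
def IsRealSubspace {n : ℕ} (H : Submodule ℂ (Fin n → ℂ)) : Prop :=
  ∀ v ∈ H, (fun j => (starRingEnd ℂ) (v j)) ∈ H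

/-!
Identify `ℂⁿ` with the polynomials of degree less than `n` so that `F_{n-k}(t)` becomes the
multiples of `(X - t) ^ k` and `F_j(∞)` the polynomials of degree less than `j`. The flag
condition together with one incidence condition gives a solution `V` a subspace of dimension
`k - 1` in degrees less than `k`, and this hyperplane of `V` is annihilated by a monic polynomial
`g` of degree at most `k - 1` under the invariant form of binary forms of degree `k - 1`. That form
extends to the bilinear concomitant of `D ^ k`, which vanishes at `t` whenever its second argument
vanishes there to order `k`; so `V ∋ p ↦ ⟨g, p⟩` takes values that vanish at every `t_i`, that is,
multiples of `f`. Differentiating `⟨g, p⟩ = c f` gives `± g p⁽ᵏ⁾ = c f'`, hence `g ∣ f'` and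
`deg g = k - 1`. Conversely, each monic divisor of `f'` of degree `k - 1` determines such a `V`, and
`V` is real exactly when `g` is. Finally, the monic real divisors of the squarefree `f'` are the
products of subsets of its real prime factors, of which `ρ` are linear and `c` quadratic.
-/

open Module Polynomial

section FinrankMap

variable {K V W : Type*} [DivisionRing K] [AddCommGroup V] [Module K V] [AddCommGroup W]
  [Module K W]

lemma finrank_map_add_finrank_inf_ker (φ : V →ₗ[K] W) (S : Submodule K V) [FiniteDimensional K S] :
    finrank K (S.map φ) + finrank K ↥(S ⊓ LinearMap.ker φ) = finrank K S := by
  rw [← (φ.domRestrict S).finrank_range_add_finrank_ker, LinearMap.range_domRestrict,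
    LinearMap.ker_domRestrict, (Submodule.equivSubtypeMap S _).finrank_eq,
    Submodule.map_comap_subtype]

lemma finrank_map_eq_of_injective {φ : V →ₗ[K] W} (hφ : Function.Injective φ) (S : Submodule K V) :
    finrank K (S.map φ) = finrank K S :=
  (Submodule.equivMapOfInjective φ hφ S).finrank_eq.symm

lemma eq_sup_span_singleton {S U : Submodule K V} [FiniteDimensional K S] (hUS : U ≤ S)
    (hS : finrank K S ≤ finrank K U + 1) {w : V} (hwS : w ∈ S) (hwU : w ∉ U) :
    S = U ⊔ K ∙ w := by
  have hle : U ⊔ K ∙ w ≤ S := sup_le hUS ((Submodule.span_singleton_le_iff_mem _ _).2 hwS)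
  have : FiniteDimensional K ↥(U ⊔ K ∙ w) := Submodule.finiteDimensional_of_le hle
  have hlt : U < U ⊔ K ∙ w := by simpa using hwU
  exact (Submodule.eq_of_le_of_finrank_le hle
    (hS.trans (Submodule.finrank_lt_finrank_of_lt hlt))).symm

end FinrankMap

section Degree

lemma mem_degreeLT_succ_iff_natDegree_le {R : Type*} [Semiring R] {p : R[X]} {d : ℕ} :
    p ∈ degreeLT R (d + 1) ↔ p.natDegree ≤ d := by
  rw [degreeLT_succ_eq_degreeLE, mem_degreeLE, natDegree_le_iff_degree_le]

lemma finrank_degreeLT (K : Type*) [Field K] (d : ℕ) : finrank K (degreeLT K d) = d := by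
  simp [finrank_eq_card_basis (degreeLT.basis K d)]

lemma natDegree_le_of_natDegree_iterate_derivative_le {R : Type*} [Semiring R] [IsAddTorsionFree R]
    {p : R[X]} {d k : ℕ} (hp : (derivative^[k] p).natDegree ≤ d) : p.natDegree ≤ d + k := by
  induction k generalizing p with
  | zero => exact hp
  | succ k ih =>
    have := ih (p := derivative p) hp
    rw [natDegree_derivative] at this
    omega

lemma natDegree_le_of_iterate_derivative_succ_eq_zero {R : Type*} [Semiring R]
    [IsAddTorsionFree R] {p : R[X]} {m : ℕ} (hp : derivative^[m + 1] p = 0) : p.natDegree ≤ m := by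
  rw [Function.iterate_succ_apply', derivative_eq_zero] at hp
  simpa using natDegree_le_of_natDegree_iterate_derivative_le hp.le

lemma iterate_derivative_natDegree {R : Type*} [Semiring R] (p : R[X]) :
    derivative^[p.natDegree] p = C (p.natDegree.factorial • p.leadingCoeff) := by
  rw [eq_C_of_natDegree_le_zero ((natDegree_iterate_derivative p _).trans_eq (Nat.sub_self _)),
    coeff_iterate_derivative, zero_add, Nat.descFactorial_self, leadingCoeff]

lemma derivative_surjective (K : Type*) [Field K] [CharZero K] :
    Function.Surjective (derivative : K[X] → K[X]) := by
  intro p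
  induction p using Polynomial.induction_on' with
  | add p q hp hq =>
    obtain ⟨P, rfl⟩ := hp
    obtain ⟨Q, rfl⟩ := hq
    exact ⟨P + Q, derivative_add⟩
  | monomial i a =>
    refine ⟨monomial (i + 1) (a / (i + 1)), ?_⟩
    simp [div_mul_cancel₀ a (Nat.cast_add_one_ne_zero i)]

end Degree

section BilinearConcomitant

/-- The bilinear concomitant of the differential operator `D ^ (m + 1)`, in the sense of Lagrange's
identity `derivative_bilinearConcomitant`. On polynomials of degree at most `m` it is the invariant
bilinear form of binary forms of degree `m`. -/
noncomputable def bilinearConcomitant {R : Type*} [CommRing R] (m : ℕ) :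
    R[X] →ₗ[R] R[X] →ₗ[R] R[X] :=
  ∑ j ∈ Finset.range (m + 1), (-1 : R) ^ j •
    (LinearMap.mul R R[X]).compl₁₂ (derivative ^ (m - j)) (derivative ^ j)

variable {R : Type*} [CommRing R] {m : ℕ}

lemma bilinearConcomitant_apply (m : ℕ) (g q : R[X]) :
    bilinearConcomitant m g q =
      ∑ j ∈ Finset.range (m + 1), (-1 : R) ^ j • (derivative^[m - j] g * derivative^[j] q) := by
  simp [bilinearConcomitant, LinearMap.sum_apply, Module.End.pow_apply]

lemma derivative_bilinearConcomitant (m : ℕ) (g q : R[X]) :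
    derivative (bilinearConcomitant m g q) =
      derivative^[m + 1] g * q + (-1 : R) ^ m • (g * derivative^[m + 1] q) := by
  let a (j : ℕ) : R[X] := (-1 : R) ^ j • (derivative^[m + 1 - j] g * derivative^[j] q)
  have hterm (j : ℕ) (hj : j ∈ Finset.range (m + 1)) :
      derivative ((-1 : R) ^ j • (derivative^[m - j] g * derivative^[j] q)) = a j - a (j + 1) := by
    have hj : j < m + 1 := Finset.mem_range.1 hj
    simp only [a, derivative_smul, derivative_mul, ← Function.iterate_succ_apply', pow_succ,
      show m + 1 - j = (m - j) + 1 by omega, show m + 1 - (j + 1) = m - j by omega]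
    module
  rw [bilinearConcomitant_apply, derivative_sum, Finset.sum_congr rfl hterm,
    Finset.sum_range_sub']
  simp only [a, pow_succ, pow_zero, Nat.sub_self, Nat.sub_zero, Function.iterate_zero, id]
  module

lemma derivative_bilinearConcomitant_of_natDegree_le {g : R[X]} (hg : g.natDegree ≤ m) (q : R[X]) :
    derivative (bilinearConcomitant m g q) = (-1 : R) ^ m • (g * derivative^[m + 1] q) := by
  rw [derivative_bilinearConcomitant, iterate_derivative_eq_zero (Nat.lt_succ_of_le hg), zero_mul,
    zero_add]

lemma bilinearConcomitant_map {S : Type*} [CommRing S] (σ : R →+* S) (m : ℕ) (g q : R[X]) :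
    bilinearConcomitant m (g.map σ) (q.map σ) = (bilinearConcomitant m g q).map σ := by
  simp [bilinearConcomitant_apply, Polynomial.map_sum, iterate_derivative_map]

lemma bilinearConcomitant_C (m : ℕ) (g : R[X]) (c : R) :
    bilinearConcomitant m g (C c) = derivative^[m] g * C c := by
  rw [bilinearConcomitant_apply, Finset.sum_range_succ']
  simp [Function.iterate_succ_apply]

lemma natDegree_bilinearConcomitant_le {d : ℕ} {g q : R[X]} (hg : g.natDegree ≤ m)
    (hq : q.natDegree ≤ d) (hmd : m ≤ d) : (bilinearConcomitant m g q).natDegree ≤ d := by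
  rw [bilinearConcomitant_apply]
  refine natDegree_sum_le_of_forall_le _ _ fun j hj => ?_
  have hj : j < m + 1 := Finset.mem_range.1 hj
  calc ((-1 : R) ^ j • (derivative^[m - j] g * derivative^[j] q)).natDegree
      ≤ (derivative^[m - j] g).natDegree + (derivative^[j] q).natDegree :=
        (natDegree_smul_le _ _).trans natDegree_mul_le
    _ ≤ (g.natDegree - (m - j)) + (q.natDegree - j) :=
        add_le_add (natDegree_iterate_derivative _ _) (natDegree_iterate_derivative _ _)
    _ ≤ d := by omega

lemma eval_bilinearConcomitant_of_dvd {t : R} {q : R[X]} (hq : (X - C t) ^ (m + 1) ∣ q)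
    (g : R[X]) : (bilinearConcomitant m g q).eval t = 0 := by
  rw [bilinearConcomitant_apply, eval_finsetSum]
  refine Finset.sum_eq_zero fun j hj => ?_
  have hj : j < m + 1 := Finset.mem_range.1 hj
  have hdvd : X - C t ∣ derivative^[j] q :=
    (dvd_pow_self _ (by omega)).trans (pow_sub_dvd_iterate_derivative_of_pow_dvd j hq)
  simp [(dvd_iff_isRoot.1 hdvd).eq_zero]

lemma bilinearConcomitant_eq_C [IsAddTorsionFree R] {g q : R[X]} (hg : g.natDegree ≤ m)
    (hq : q.natDegree ≤ m) :
    bilinearConcomitant m g q = C ((bilinearConcomitant m g q).coeff 0) := by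
  apply eq_C_of_derivative_eq_zero
  rw [derivative_bilinearConcomitant_of_natDegree_le hg,
    iterate_derivative_eq_zero (Nat.lt_succ_of_le hq), mul_zero, smul_zero]

lemma natDegree_le_of_bilinearConcomitant_eq_zero [IsDomain R] [IsAddTorsionFree R] {g q : R[X]}
    (hg0 : g ≠ 0) (hg : g.natDegree ≤ m) (h : bilinearConcomitant m g q = 0) :
    q.natDegree ≤ m := by
  have hd := derivative_bilinearConcomitant_of_natDegree_le hg q
  rw [h, derivative_zero, eq_comm,
    smul_eq_zero_iff_right (pow_ne_zero _ (neg_ne_zero.2 one_ne_zero)), mul_eq_zero] at hd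
  exact natDegree_le_of_iterate_derivative_succ_eq_zero (hd.resolve_left hg0)

variable {K : Type*} [Field K] [CharZero K]

lemma exists_bilinearConcomitant_C_eq_C {g : K[X]} (hg : g ≠ 0) (a : K) :
    ∃ c, bilinearConcomitant g.natDegree g (C c) = C a := by
  have hb : g.natDegree.factorial • g.leadingCoeff ≠ 0 :=
    smul_ne_zero (Nat.factorial_ne_zero _) (leadingCoeff_ne_zero.2 hg)
  refine ⟨a / (g.natDegree.factorial • g.leadingCoeff), ?_⟩
  rw [bilinearConcomitant_C, iterate_derivative_natDegree, ← C_mul, mul_div_cancel₀ _ hb]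

lemma exists_monic_bilinearConcomitant_eq_zero {S : Submodule K K[X]} (hS : S ≤ degreeLT K (m + 1))
    (hdim : finrank K S ≤ m) :
    ∃ g : K[X], g.Monic ∧ g.natDegree ≤ m ∧ ∀ q ∈ S, bilinearConcomitant m g q = 0 := by
  have : FiniteDimensional K S := Submodule.finiteDimensional_of_le hS
  let Φ : degreeLT K (m + 1) →ₗ[K] Dual K S :=
    ((bilinearConcomitant m).compl₁₂ (degreeLT K (m + 1)).subtype S.subtype).compr₂ (lcoeff K 0)
  have hker : LinearMap.ker Φ ≠ ⊥ := by
    apply LinearMap.ker_ne_bot_of_finrank_lt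
    rw [Subspace.dual_finrank_eq, finrank_degreeLT]
    exact Nat.lt_succ_of_le hdim
  obtain ⟨⟨g, hg⟩, hgΦ, hg0⟩ := (Submodule.ne_bot_iff _).1 hker
  have hg0 : g ≠ 0 := fun h => hg0 (Subtype.ext h)
  have hgm : g.natDegree ≤ m := mem_degreeLT_succ_iff_natDegree_le.1 hg
  refine ⟨g.leadingCoeff⁻¹ • g, ?_, (natDegree_smul_le _ _).trans hgm, fun q hq => ?_⟩
  · rw [smul_eq_C_mul, mul_comm]
    exact monic_mul_leadingCoeff_inv hg0
  · have hcoeff : (bilinearConcomitant m g q).coeff 0 = 0 :=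
      LinearMap.congr_fun (LinearMap.mem_ker.1 hgΦ) ⟨q, hq⟩
    have hqm : q.natDegree ≤ m := mem_degreeLT_succ_iff_natDegree_le.1 (hS hq)
    rw [map_smul, LinearMap.smul_apply, bilinearConcomitant_eq_C hgm hqm, hcoeff, C_0, smul_zero]

end BilinearConcomitant

section ConcomitantSpace

variable {K : Type*} [Field K] {f g : K[X]}

/-- The polynomials of degree at most `deg f` whose bilinear concomitant with `g` is proportional
to `f`. For `g ∣ f'` these are the solutions of the osculating problem of `f`, see
`isOsculatingSpace_iff`. -/
noncomputable def concomitantSpace (f g : K[X]) : Submodule K K[X] :=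
  degreeLT K (f.natDegree + 1) ⊓ (K ∙ f).comap (bilinearConcomitant g.natDegree g)

lemma mem_concomitantSpace {p : K[X]} : p ∈ concomitantSpace f g ↔
    p.natDegree ≤ f.natDegree ∧ ∃ c : K, c • f = bilinearConcomitant g.natDegree g p := by
  rw [concomitantSpace, Submodule.mem_inf, mem_degreeLT_succ_iff_natDegree_le, Submodule.mem_comap,
    Submodule.mem_span_singleton]

instance finiteDimensional_concomitantSpace : FiniteDimensional K (concomitantSpace f g) :=
  Submodule.finiteDimensional_of_le inf_le_left

lemma natDegree_lt_of_dvd_derivative (hf' : derivative f ≠ 0) (hgf : g ∣ derivative f) :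
    g.natDegree < f.natDegree :=
  (natDegree_le_of_dvd hgf hf').trans_lt
    (natDegree_derivative_lt fun h => hf' (derivative_of_natDegree_zero h))

variable [CharZero K]

lemma exists_bilinearConcomitant_eq (hf' : derivative f ≠ 0) (hgf : g ∣ derivative f) :
    ∃ q : K[X], q.natDegree ≤ f.natDegree ∧ bilinearConcomitant g.natDegree g q = f := by
  obtain ⟨h, hh⟩ := id hgf
  obtain ⟨hg, hh0⟩ : g ≠ 0 ∧ h ≠ 0 := by simpa [hh] using hf'
  obtain ⟨q, hq⟩ := (derivative_surjective K).iterate (g.natDegree + 1)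
    ((-1 : K) ^ g.natDegree • h)
  have hderiv : derivative (bilinearConcomitant g.natDegree g q - f) = 0 := by
    rw [derivative_sub, derivative_bilinearConcomitant_of_natDegree_le le_rfl, hq, hh,
      mul_smul_comm, smul_smul, ← mul_pow, neg_one_mul, neg_neg, one_pow, one_smul, sub_self]
  obtain ⟨c, hc⟩ := exists_bilinearConcomitant_C_eq_C hg
    ((bilinearConcomitant g.natDegree g q - f).coeff 0)
  refine ⟨q - C c, ?_, ?_⟩
  · have hqh : (derivative^[g.natDegree + 1] q).natDegree ≤ h.natDegree :=
      hq ▸ natDegree_smul_le _ _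
    have hdeg := natDegree_derivative f
    rw [hh, natDegree_mul hg hh0] at hdeg
    have := natDegree_le_of_natDegree_iterate_derivative_le hqh
    have := natDegree_lt_of_dvd_derivative hf' hgf
    rw [natDegree_sub_C]
    omega
  · rw [map_sub, hc, ← eq_C_of_derivative_eq_zero hderiv, sub_sub_cancel]

lemma eq_of_bilinearConcomitant_eq_smul {m : ℕ} {g' q : K[X]} {c : K} (hf' : derivative f ≠ 0)
    (hg : g.Monic) (hg' : g'.Monic) (hgm : g.natDegree ≤ m) (hgm' : g'.natDegree ≤ m)
    (h : bilinearConcomitant m g q = f) (h' : bilinearConcomitant m g' q = c • f) : g = g' := by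
  have hd := derivative_bilinearConcomitant_of_natDegree_le hgm q
  have hd' := derivative_bilinearConcomitant_of_natDegree_le hgm' q
  have hq : derivative^[m + 1] q ≠ 0 := fun h0 => hf' (by rw [← h, hd, h0, mul_zero, smul_zero])
  have hmul : C c * g = g' := by
    apply mul_right_cancel₀ hq
    apply smul_right_injective _ (pow_ne_zero m (neg_ne_zero.2 one_ne_zero) : (-1 : K) ^ m ≠ 0)
    calc (-1 : K) ^ m • (C c * g * derivative^[m + 1] q)
        = c • derivative (bilinearConcomitant m g q) := by
          rw [hd, ← smul_eq_C_mul, smul_mul_assoc, smul_comm]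
      _ = (-1 : K) ^ m • (g' * derivative^[m + 1] q) := by rw [h, ← derivative_smul, ← h', hd']
  have hc : c = 1 := by simpa [hg.leadingCoeff, hg'.leadingCoeff] using congrArg leadingCoeff hmul
  simpa [hc] using hmul

lemma eq_of_concomitantSpace_eq {g' : K[X]} (hf' : derivative f ≠ 0) (hg : g.Monic)
    (hg' : g'.Monic) (hgf : g ∣ derivative f) (hdeg : g.natDegree = g'.natDegree)
    (h : concomitantSpace f g = concomitantSpace f g') : g = g' := by
  obtain ⟨q, hqf, hq⟩ := exists_bilinearConcomitant_eq hf' hgf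
  have hqV : q ∈ concomitantSpace f g := mem_concomitantSpace.2 ⟨hqf, 1, by rw [hq, one_smul]⟩
  obtain ⟨-, c, hc⟩ := mem_concomitantSpace.1 (h ▸ hqV)
  exact eq_of_bilinearConcomitant_eq_smul hf' hg hg' hdeg.le le_rfl (hdeg ▸ hq) hc.symm

lemma concomitantSpace_map_mem_iff {σ : K →+* K} (hσ : f.map σ = f) (hf' : derivative f ≠ 0)
    (hg : g.Monic) (hgf : g ∣ derivative f) :
    (∀ p ∈ concomitantSpace f g, p.map σ ∈ concomitantSpace f g) ↔ g.map σ = g := by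
  constructor
  · intro h
    obtain ⟨q, hqf, hq⟩ := exists_bilinearConcomitant_eq hf' hgf
    have hqV : q ∈ concomitantSpace f g := mem_concomitantSpace.2 ⟨hqf, 1, by rw [hq, one_smul]⟩
    obtain ⟨-, c, hc⟩ := mem_concomitantSpace.1 (h q hqV)
    have hqσ : bilinearConcomitant g.natDegree (g.map σ) (q.map σ) = f := by
      rw [bilinearConcomitant_map, hq, hσ]
    exact eq_of_bilinearConcomitant_eq_smul hf' (hg.map σ) hg natDegree_map_le le_rfl hqσ hc.symm
  · intro h p hp
    obtain ⟨hpf, c, hc⟩ := mem_concomitantSpace.1 hp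
    refine mem_concomitantSpace.2 ⟨natDegree_map_le.trans hpf, σ c, ?_⟩
    calc σ c • f = (c • f).map σ := by rw [Polynomial.map_smul, hσ]
      _ = bilinearConcomitant g.natDegree g (p.map σ) := by
        rw [hc, ← bilinearConcomitant_map, h]

lemma map_bilinearConcomitant_degreeLT (hg : g ≠ 0) :
    (degreeLT K (g.natDegree + 1)).map (bilinearConcomitant g.natDegree g) = K ∙ 1 := by
  apply le_antisymm
  · rintro _ ⟨q, hq, rfl⟩
    rw [bilinearConcomitant_eq_C le_rfl (mem_degreeLT_succ_iff_natDegree_le.1 hq),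
      ← mul_one (C _), ← smul_eq_C_mul]
    exact Submodule.smul_mem _ _ (Submodule.mem_span_singleton_self 1)
  · obtain ⟨c, hc⟩ := exists_bilinearConcomitant_C_eq_C hg 1
    rw [Submodule.span_singleton_le_iff_mem, ← C_1, ← hc]
    exact Submodule.mem_map_of_mem (mem_degreeLT_succ_iff_natDegree_le.2 (by simp))

lemma map_bilinearConcomitant_concomitantSpace (hf' : derivative f ≠ 0) (hgf : g ∣ derivative f) :
    (concomitantSpace f g).map (bilinearConcomitant g.natDegree g) = K ∙ f := by
  apply le_antisymm
  · exact Submodule.map_le_iff_le_comap.2 inf_le_right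
  · obtain ⟨q, hqf, hq⟩ := exists_bilinearConcomitant_eq hf' hgf
    exact (Submodule.span_singleton_le_iff_mem _ _).2
      ⟨q, mem_concomitantSpace.2 ⟨hqf, 1, by rw [hq, one_smul]⟩, hq⟩

lemma concomitantSpace_inf_ker (hf' : derivative f ≠ 0) (hgf : g ∣ derivative f) :
    concomitantSpace f g ⊓ LinearMap.ker (bilinearConcomitant g.natDegree g) =
      degreeLT K (g.natDegree + 1) ⊓ LinearMap.ker (bilinearConcomitant g.natDegree g) := by
  ext p
  simp only [Submodule.mem_inf, LinearMap.mem_ker, and_congr_left_iff, mem_concomitantSpace,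
    mem_degreeLT_succ_iff_natDegree_le]
  intro hp
  refine ⟨fun _ => natDegree_le_of_bilinearConcomitant_eq_zero (ne_zero_of_dvd_ne_zero hf' hgf)
    le_rfl hp, fun h => ⟨h.trans (natDegree_lt_of_dvd_derivative hf' hgf).le, 0, ?_⟩⟩
  rw [hp, zero_smul]

lemma finrank_concomitantSpace (hf' : derivative f ≠ 0) (hgf : g ∣ derivative f) :
    finrank K (concomitantSpace f g) = g.natDegree + 1 := by
  have hf : f ≠ 0 := fun h => hf' (by rw [h, derivative_zero])
  have h := finrank_map_add_finrank_inf_ker (bilinearConcomitant g.natDegree g)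
    (concomitantSpace f g)
  have h' := finrank_map_add_finrank_inf_ker (bilinearConcomitant g.natDegree g)
    (degreeLT K (g.natDegree + 1))
  rw [map_bilinearConcomitant_concomitantSpace hf' hgf, concomitantSpace_inf_ker hf' hgf,
    finrank_span_singleton hf] at h
  rw [map_bilinearConcomitant_degreeLT (ne_zero_of_dvd_ne_zero hf' hgf),
    finrank_span_singleton one_ne_zero, finrank_degreeLT] at h'
  omega

lemma le_finrank_concomitantSpace_inf_degreeLT (hf' : derivative f ≠ 0) (hgf : g ∣ derivative f)
    {i : ℕ} (hi : i ≤ g.natDegree) :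
    i ≤ finrank K ↥(concomitantSpace f g ⊓ degreeLT K (i + 1)) := by
  let T := bilinearConcomitant g.natDegree g
  have hle : degreeLT K (i + 1) ⊓ LinearMap.ker T ≤ concomitantSpace f g ⊓ degreeLT K (i + 1) :=
    le_inf ((inf_le_inf_right _ (degreeLT_mono (by omega))).trans
      ((concomitantSpace_inf_ker hf' hgf).symm.le.trans inf_le_left)) inf_le_left
  have hmap : finrank K ((degreeLT K (i + 1)).map T) ≤ 1 := by
    refine (Submodule.finrank_mono ?_).trans_eq (finrank_span_singleton (one_ne_zero (α := K[X])))
    rw [← map_bilinearConcomitant_degreeLT (ne_zero_of_dvd_ne_zero hf' hgf)]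
    exact Submodule.map_mono (degreeLT_mono (by omega))
  have hadd := finrank_map_add_finrank_inf_ker T (degreeLT K (i + 1))
  rw [finrank_degreeLT] at hadd
  have := Submodule.finrank_mono hle
  omega

lemma exists_mem_concomitantSpace_pow_dvd (hf' : derivative f ≠ 0) (hgf : g ∣ derivative f) {t : K}
    (ht : f.IsRoot t) :
    ∃ q ∈ concomitantSpace f g, q ≠ 0 ∧ (X - C t) ^ (g.natDegree + 1) ∣ q := by
  -- Drop the Taylor part `r` of `q` at `t`: its concomitant with `g` is the constant `f(t) = 0`.
  obtain ⟨q, hqf, hq⟩ := exists_bilinearConcomitant_eq hf' hgf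
  have hmonic : ((X - C t) ^ (g.natDegree + 1)).Monic := (monic_X_sub_C t).pow _
  set r := q %ₘ (X - C t) ^ (g.natDegree + 1)
  have hdvd : (X - C t) ^ (g.natDegree + 1) ∣ q - r := dvd_sub_comm.1 (dvd_modByMonic_sub _ _)
  have hrg : r.natDegree ≤ g.natDegree := by
    have := natDegree_modByMonic_lt q hmonic (ne_of_apply_ne natDegree (by simp))
    rwa [natDegree_pow, natDegree_X_sub_C, mul_one, Nat.lt_succ_iff] at this
  have hTr : bilinearConcomitant g.natDegree g r = 0 := by
    have heval := eval_bilinearConcomitant_of_dvd hdvd g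
    have hC := bilinearConcomitant_eq_C le_rfl hrg
    rw [map_sub, hq, eval_sub, ht.eq_zero, zero_sub, neg_eq_zero, hC, eval_C] at heval
    rw [hC, heval, C_0]
  refine ⟨q - r, mem_concomitantSpace.2 ⟨?_, 1, ?_⟩, ?_, hdvd⟩
  · exact (natDegree_sub_le_of_le hqf hrg).trans
      (max_le le_rfl (natDegree_lt_of_dvd_derivative hf' hgf).le)
  · rw [map_sub, hTr, hq, sub_zero, one_smul]
  · intro h
    rw [sub_eq_zero.1 h, hTr] at hq
    exact hf' (by rw [← hq, derivative_zero])

end ConcomitantSpace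

lemma mem_span_singleton_of_eval_eq_zero {K : Type*} [Field K] {f p : K[X]} (hf : f.Splits)
    (hf0 : f ≠ 0) (hroots : f.roots.Nodup) (hpf : p.natDegree ≤ f.natDegree)
    (hp : ∀ t, f.IsRoot t → p.eval t = 0) : p ∈ K ∙ f := by
  rcases eq_or_ne p 0 with rfl | hp0
  · exact zero_mem _
  have hle : f.roots ≤ p.roots := (Multiset.le_iff_subset hroots).2 fun t ht =>
    (mem_roots hp0).2 (hp t ((mem_roots hf0).1 ht))
  obtain ⟨u, hu⟩ := associated_of_dvd_of_natDegree_le (hf.dvd_of_roots_le_roots hf0 hle) hp0 hpf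
  obtain ⟨c, -, hc⟩ := Polynomial.isUnit_iff.1 u.isUnit
  exact Submodule.mem_span_singleton.2 ⟨c, by rw [← hu, ← hc, smul_eq_C_mul, mul_comm]⟩

lemma dvd_derivative_and_natDegree_eq_of_bilinearConcomitant_mem_span {K : Type*} [Field K]
    [CharZero K] {f g w : K[X]} {m : ℕ} (hg0 : g ≠ 0) (hgm : g.natDegree ≤ m)
    (hmw : m < w.natDegree) (hwf : w.natDegree ≤ f.natDegree)
    (h : bilinearConcomitant m g w ∈ K ∙ f) : g ∣ derivative f ∧ g.natDegree = m := by
  obtain ⟨c, hc⟩ := Submodule.mem_span_singleton.1 h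
  have hw : derivative^[m + 1] w ≠ 0 := fun h0 =>
    hmw.not_ge (natDegree_le_of_iterate_derivative_succ_eq_zero h0)
  have hsign : (-1 : K) ^ m ≠ 0 := pow_ne_zero m (neg_ne_zero.2 one_ne_zero)
  have hderiv : C c * derivative f = C ((-1) ^ m) * (g * derivative^[m + 1] w) := by
    rw [← smul_eq_C_mul, ← smul_eq_C_mul, ← derivative_smul, hc,
      derivative_bilinearConcomitant_of_natDegree_le hgm]
  have hc0 : c ≠ 0 := by
    rintro rfl
    rw [C_0, zero_mul, eq_comm, C_mul'] at hderiv
    exact smul_ne_zero hsign (mul_ne_zero hg0 hw) hderiv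
  constructor
  · rw [← dvd_C_mul hc0, hderiv]
    exact (dvd_mul_right _ _).mul_left _
  · have hdeg := congrArg natDegree hderiv
    rw [natDegree_C_mul hc0, natDegree_C_mul hsign, natDegree_mul hg0 hw, natDegree_derivative]
      at hdeg
    have := natDegree_iterate_derivative w (m + 1)
    omega

/-- The osculating problem of `f` in dimension `m + 1`, posed for spaces of polynomials of degree at
most `deg f`: the space meets the flag of the `degreeLT K (i + 1)` in excess, and for each root `t`
of `f` it contains a polynomial that vanishes at `t` to order `m + 1`. -/
structure IsOsculatingSpace {K : Type*} [Field K] (f : K[X]) (m : ℕ) (V : Submodule K K[X]) :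
    Prop where
  le_degreeLT : V ≤ degreeLT K (f.natDegree + 1)
  finrank_eq : finrank K V = m + 1
  le_finrank_inf : ∀ i ≤ m, i ≤ finrank K ↥(V ⊓ degreeLT K (i + 1))
  exists_pow_dvd : ∀ t, f.IsRoot t → ∃ q ∈ V, q ≠ 0 ∧ (X - C t) ^ (m + 1) ∣ q

namespace IsOsculatingSpace

variable {K : Type*} [Field K] {f : K[X]} {m : ℕ} {V : Submodule K K[X]}

lemma natDegree_le (hV : IsOsculatingSpace f m V) {p : K[X]} (hp : p ∈ V) :
    p.natDegree ≤ f.natDegree :=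
  mem_degreeLT_succ_iff_natDegree_le.1 (hV.le_degreeLT hp)

lemma finiteDimensional (hV : IsOsculatingSpace f m V) : FiniteDimensional K V :=
  Submodule.finiteDimensional_of_le hV.le_degreeLT

lemma le_natDegree (hV : IsOsculatingSpace f m V) : m ≤ f.natDegree := by
  have := Submodule.finrank_mono hV.le_degreeLT
  rwa [hV.finrank_eq, finrank_degreeLT, Nat.succ_le_succ_iff] at this

lemma exists_lt_natDegree (hV : IsOsculatingSpace f m V) {t : K} (ht : f.IsRoot t) :
    ∃ w ∈ V, m < w.natDegree ∧ (X - C t) ^ (m + 1) ∣ w := by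
  obtain ⟨w, hwV, hw0, hdvd⟩ := hV.exists_pow_dvd t ht
  refine ⟨w, hwV, ?_, hdvd⟩
  simpa [natDegree_pow] using natDegree_le_of_dvd hdvd hw0

lemma finrank_inf_degreeLT_le (hV : IsOsculatingSpace f m V) {t : K} (ht : f.IsRoot t) :
    finrank K ↥(V ⊓ degreeLT K (m + 1)) ≤ m := by
  have := hV.finiteDimensional
  obtain ⟨w, hwV, hwm, -⟩ := hV.exists_lt_natDegree ht
  have hlt : V ⊓ degreeLT K (m + 1) < V := inf_lt_left.2 fun h =>
    hwm.not_ge (mem_degreeLT_succ_iff_natDegree_le.1 (h hwV))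
  exact Nat.lt_succ_iff.1 ((Submodule.finrank_lt_finrank_of_lt hlt).trans_eq hV.finrank_eq)

lemma bilinearConcomitant_mem_span (hV : IsOsculatingSpace f m V) (hf : f.Splits) (hf0 : f ≠ 0)
    (hroots : f.roots.Nodup) {g : K[X]} (hgm : g.natDegree ≤ m)
    (hg : ∀ q ∈ V ⊓ degreeLT K (m + 1), bilinearConcomitant m g q = 0) {p : K[X]} (hp : p ∈ V) :
    bilinearConcomitant m g p ∈ K ∙ f := by
  have := hV.finiteDimensional
  refine mem_span_singleton_of_eval_eq_zero hf hf0 hroots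
    (natDegree_bilinearConcomitant_le hgm (hV.natDegree_le hp) hV.le_natDegree) fun t ht => ?_
  obtain ⟨w, hwV, hwm, hdvd⟩ := hV.exists_lt_natDegree ht
  have hV_eq : V = V ⊓ degreeLT K (m + 1) ⊔ K ∙ w := by
    refine eq_sup_span_singleton inf_le_left ?_ hwV fun hw =>
      hwm.not_ge (mem_degreeLT_succ_iff_natDegree_le.1 hw.2)
    rw [hV.finrank_eq]
    exact Nat.succ_le_succ (hV.le_finrank_inf m le_rfl)
  rw [hV_eq] at hp
  obtain ⟨u, hu, v, hv, rfl⟩ := Submodule.mem_sup.1 hp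
  obtain ⟨a, rfl⟩ := Submodule.mem_span_singleton.1 hv
  rw [map_add, map_smul, hg u hu, zero_add, eval_smul, eval_bilinearConcomitant_of_dvd hdvd,
    smul_zero]

variable [CharZero K]

lemma exists_eq_concomitantSpace (hV : IsOsculatingSpace f m V) (hf : f.Splits)
    (hroots : f.roots.Nodup) (hf' : derivative f ≠ 0) :
    ∃ g : K[X], g.Monic ∧ g.natDegree = m ∧ g ∣ derivative f ∧ V = concomitantSpace f g := by
  have hf0 : f ≠ 0 := fun h => hf' (by rw [h, derivative_zero])
  obtain ⟨t, ht⟩ := hf.exists_eval_eq_zero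
    (fun h => hf' (derivative_of_natDegree_zero (natDegree_eq_of_degree_eq_some h)))
  obtain ⟨w, hwV, hmw, -⟩ := hV.exists_lt_natDegree ht
  obtain ⟨g, hmonic, hgm, hg⟩ := exists_monic_bilinearConcomitant_eq_zero
    inf_le_right (hV.finrank_inf_degreeLT_le ht)
  have hspan {p : K[X]} (hp : p ∈ V) : bilinearConcomitant m g p ∈ K ∙ f :=
    hV.bilinearConcomitant_mem_span hf hf0 hroots hgm hg hp
  obtain ⟨hgf, rfl⟩ := dvd_derivative_and_natDegree_eq_of_bilinearConcomitant_mem_span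
    hmonic.ne_zero hgm hmw (hV.natDegree_le hwV) (hspan hwV)
  refine ⟨g, hmonic, rfl, hgf, Submodule.eq_of_le_of_finrank_eq
    (le_inf hV.le_degreeLT fun p hp => hspan hp) ?_⟩
  rw [hV.finrank_eq, finrank_concomitantSpace hf' hgf]

end IsOsculatingSpace

lemma isOsculatingSpace_concomitantSpace {K : Type*} [Field K] [CharZero K] {f g : K[X]}
    (hf' : derivative f ≠ 0) (hgf : g ∣ derivative f) :
    IsOsculatingSpace f g.natDegree (concomitantSpace f g) where
  le_degreeLT := inf_le_left
  finrank_eq := finrank_concomitantSpace hf' hgf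
  le_finrank_inf _ := le_finrank_concomitantSpace_inf_degreeLT hf' hgf
  exists_pow_dvd _ := exists_mem_concomitantSpace_pow_dvd hf' hgf

lemma isOsculatingSpace_iff {K : Type*} [Field K] [CharZero K] {f : K[X]} {m : ℕ}
    {V : Submodule K K[X]} (hf : f.Splits) (hroots : f.roots.Nodup) (hf' : derivative f ≠ 0) :
    IsOsculatingSpace f m V ↔
      ∃ g : K[X], g.Monic ∧ g.natDegree = m ∧ g ∣ derivative f ∧ V = concomitantSpace f g := by
  refine ⟨fun hV => hV.exists_eq_concomitantSpace hf hroots hf', ?_⟩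
  rintro ⟨g, -, rfl, hgf, rfl⟩
  exact isOsculatingSpace_concomitantSpace hf' hgf

lemma ncard_isOsculatingSpace_map_stable {K : Type*} [Field K] [CharZero K] {σ : K →+* K}
    {f : K[X]} (hσ : f.map σ = f) (hf : f.Splits) (hroots : f.roots.Nodup)
    (hf' : derivative f ≠ 0) (m : ℕ) :
    {V | IsOsculatingSpace f m V ∧ ∀ p ∈ V, p.map σ ∈ V}.ncard =
      {g : K[X] | (g.Monic ∧ g.natDegree = m ∧ g ∣ derivative f) ∧ g.map σ = g}.ncard := by
  rw [← Set.InjOn.ncard_image (f := concomitantSpace f)]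
  · congr 1
    ext V
    simp only [isOsculatingSpace_iff hf hroots hf', Set.mem_ofPred_eq, Set.mem_image]
    constructor
    · rintro ⟨⟨g, hg, hgm, hgf, rfl⟩, hV⟩
      exact ⟨g, ⟨⟨hg, hgm, hgf⟩, (concomitantSpace_map_mem_iff hσ hf' hg hgf).1 hV⟩, rfl⟩
    · rintro ⟨g, ⟨⟨hg, hgm, hgf⟩, hgσ⟩, rfl⟩
      exact ⟨⟨g, hg, hgm, hgf, rfl⟩, (concomitantSpace_map_mem_iff hσ hf' hg hgf).2 hgσ⟩
  · rintro g ⟨⟨hg, hgm, hgf⟩, -⟩ g' ⟨⟨hg', hgm', -⟩, -⟩ h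
    exact eq_of_concomitantSpace_eq hf' hg hg' hgf (hgm.trans hgm'.symm) h

lemma map_starRingEnd_eq_self_iff {g : ℂ[X]} :
    g.map (starRingEnd ℂ) = g ↔ ∃ p : ℝ[X], p.map Complex.ofRealHom = g := by
  constructor
  · intro h
    rw [← mem_lifts, lifts_iff_coeff_lifts]
    intro i
    have hi : starRingEnd ℂ (g.coeff i) = g.coeff i := by rw [← coeff_map, h]
    obtain ⟨r, hr⟩ := Complex.conj_eq_iff_real.1 hi
    exact ⟨r, hr.symm⟩
  · rintro ⟨p, rfl⟩
    rw [Polynomial.map_map]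
    congr 1
    ext r
    exact Complex.conj_ofReal r

lemma ncard_monic_dvd_map_starRingEnd_eq_self (P : ℝ[X]) (m : ℕ) :
    {g : ℂ[X] | (g.Monic ∧ g.natDegree = m ∧ g ∣ P.map Complex.ofRealHom) ∧
      g.map (starRingEnd ℂ) = g}.ncard =
    {p : ℝ[X] | p.Monic ∧ p.natDegree = m ∧ p ∣ P}.ncard := by
  rw [← Set.ncard_image_of_injective _ (map_injective _ Complex.ofRealHom.injective)]
  congr 1
  ext g
  simp only [Set.mem_ofPred_eq, Set.mem_image, map_starRingEnd_eq_self_iff]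
  constructor
  · rintro ⟨⟨hg, hgm, hgP⟩, p, rfl⟩
    exact ⟨p, ⟨monic_map_iff.1 hg, by rwa [natDegree_map] at hgm, (map_dvd_map' _).1 hgP⟩, rfl⟩
  · rintro ⟨p, ⟨hp, hpm, hpP⟩, rfl⟩
    exact ⟨⟨hp.map _, by rwa [natDegree_map], (map_dvd_map' _).2 hpP⟩, p, rfl⟩

section OsculatingPoly

lemma mem_span_X_sub_C_pow_of_dvd {K : Type*} [Field K] {n k : ℕ} {t : K} {q : K[X]}
    (hq : q ∈ degreeLT K n) (hdvd : (X - C t) ^ k ∣ q) :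
    q ∈ Submodule.span K ((fun j => (X - C t) ^ j) '' Set.Ico k n) := by
  obtain ⟨r, rfl⟩ := hdvd
  rw [← sum_taylor_eq r t, Polynomial.sum, Finset.mul_sum]
  refine Submodule.sum_mem _ fun j hj => ?_
  have hjr : j ≤ r.natDegree := (le_natDegree_of_mem_supp j hj).trans_eq (natDegree_taylor r t)
  have hr0 : r ≠ 0 := by rintro rfl; simp at hj
  have hjn : k + j < n := by
    rw [mem_degreeLT, ← natDegree_lt_iff_degree_lt (by simp [hr0, X_sub_C_ne_zero]),
      natDegree_mul (pow_ne_zero _ (X_sub_C_ne_zero t)) hr0, natDegree_pow, natDegree_X_sub_C]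
      at hq
    omega
  rw [mul_left_comm, ← pow_add, ← smul_eq_C_mul]
  exact Submodule.smul_mem _ _ (Submodule.subset_span ⟨k + j, ⟨Nat.le_add_right k j, hjn⟩, rfl⟩)

lemma gammaVec_apply (n m : ℕ) (t : ℂ) (i : Fin n) :
    gammaVec n m t i = if m ≤ i then t ^ ((i : ℕ) - m) / ((i : ℕ) - m).factorial else 0 := by
  have hi : ((i : ℕ).factorial : ℂ) ≠ 0 := Nat.cast_ne_zero.2 (Nat.factorial_ne_zero _)
  rw [gammaVec, iterate_derivative_C_mul, iterate_derivative_X_pow_eq_natCast_mul, eval_C_mul,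
    eval_mul, eval_natCast, eval_pow, eval_X]
  split_ifs with h
  · have hfac : (((i : ℕ) - m).factorial : ℂ) * (i : ℕ).descFactorial m = (i : ℕ).factorial := by
      exact_mod_cast Nat.factorial_mul_descFactorial h
    rw [← hfac] at hi ⊢
    have := left_ne_zero_of_mul hi
    have := right_ne_zero_of_mul hi
    field_simp
  · rw [Nat.descFactorial_of_lt (not_le.1 h), Nat.cast_zero, zero_mul, mul_zero]

/-- The identification of `ℂⁿ` with the polynomials of degree less than `n` that sends the point
`γ(t)` of the rational normal curve to `(X - t) ^ (n - 1) / (n - 1)!`. -/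
noncomputable def osculatingPolyEquiv (n : ℕ) : (Fin n → ℂ) ≃ₗ[ℂ] degreeLT ℂ n :=
  LinearEquiv.funCongrLeft ℂ ℂ Fin.revPerm ≪≫ₗ
    LinearEquiv.piCongrRight (fun j : Fin n =>
      LinearEquiv.smulOfNeZero ℂ ℂ ((-1) ^ (n - 1 - j) / ((j : ℕ).factorial : ℂ))
        (div_ne_zero (pow_ne_zero _ (neg_ne_zero.2 one_ne_zero))
          (Nat.cast_ne_zero.2 (Nat.factorial_ne_zero _)))) ≪≫ₗ
    (degreeLTEquiv ℂ n).symm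

/-- `osculatingPolyEquiv` as a map into all polynomials. -/
noncomputable def osculatingPoly (n : ℕ) : (Fin n → ℂ) →ₗ[ℂ] ℂ[X] :=
  (degreeLT ℂ n).subtype ∘ₗ osculatingPolyEquiv n

lemma osculatingPoly_injective (n : ℕ) : Function.Injective (osculatingPoly n) :=
  Subtype.val_injective.comp (osculatingPolyEquiv n).injective

lemma range_osculatingPoly (n : ℕ) : LinearMap.range (osculatingPoly n) = degreeLT ℂ n := by
  rw [osculatingPoly, LinearEquiv.range_comp, Submodule.range_subtype]

lemma osculatingPoly_mem_degreeLT {n : ℕ} (v : Fin n → ℂ) : osculatingPoly n v ∈ degreeLT ℂ n :=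
  (osculatingPolyEquiv n v).2

lemma coeff_osculatingPoly {n : ℕ} (v : Fin n → ℂ) (j : Fin n) :
    (osculatingPoly n v).coeff j =
      (-1) ^ (n - 1 - j) / ((j : ℕ).factorial : ℂ) * v j.rev := by
  change degreeLTEquiv ℂ n (osculatingPolyEquiv n v) j = _
  simp [osculatingPolyEquiv]

lemma coeff_osculatingPoly_of_le {n l : ℕ} (v : Fin n → ℂ) (hl : n ≤ l) :
    (osculatingPoly n v).coeff l = 0 :=
  coeff_eq_zero_of_degree_lt
    ((mem_degreeLT.1 (osculatingPoly_mem_degreeLT v)).trans_le (Nat.cast_le.2 hl))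

lemma osculatingPoly_gammaVec {n m : ℕ} (hm : m < n) (t : ℂ) :
    osculatingPoly n (gammaVec n m t) =
      ((-1) ^ m / ((n - 1 - m).factorial : ℂ)) • (X - C t) ^ (n - 1 - m) := by
  ext l
  rw [coeff_smul, sub_eq_add_neg, ← C_neg, coeff_X_add_C_pow, smul_eq_mul]
  rcases lt_or_ge l n with hl | hl
  · rw [show l = ((⟨l, hl⟩ : Fin n) : ℕ) from rfl, coeff_osculatingPoly, gammaVec_apply]
    simp only [Fin.val_rev]
    split_ifs with hlm
    · obtain ⟨d, rfl⟩ : ∃ d, n = l + m + d + 1 := ⟨n - 1 - l - m, by omega⟩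
      have hfac (i : ℕ) : (i.factorial : ℂ) ≠ 0 := Nat.cast_ne_zero.2 (Nat.factorial_ne_zero i)
      rw [Nat.cast_choose ℂ (by omega), show l + m + d + 1 - 1 - l = m + d by omega,
        show l + m + d + 1 - 1 - m = l + d by omega, show l + m + d + 1 - (l + 1) - m = d by omega,
        show l + d - l = d by omega, neg_pow t, pow_add]
      field_simp [hfac]
    · rw [Nat.choose_eq_zero_of_lt (by omega)]
      simp
  · rw [coeff_osculatingPoly_of_le _ hl, Nat.choose_eq_zero_of_lt (by omega)]
    simp

lemma infFlag_eq_comap_degreeLT (n j : ℕ) :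
    infFlag n j = (degreeLT ℂ j).comap (osculatingPoly n) := by
  ext v
  simp only [infFlag, Submodule.mem_pi, Set.mem_univ, true_implies, Submodule.mem_comap,
    mem_degreeLT, degree_lt_iff_coeff_zero]
  have hcoeff (i : Fin n) : (osculatingPoly n v).coeff i.rev = 0 ↔ v i = 0 := by
    rw [coeff_osculatingPoly, Fin.rev_rev]
    simp [Nat.factorial_ne_zero]
  constructor
  · intro h l hl
    rcases lt_or_ge l n with hln | hln
    · have hv := h (Fin.rev ⟨l, hln⟩)
      rw [if_pos (by rw [Fin.val_rev, Fin.val_mk]; omega), Submodule.mem_bot, ← hcoeff,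
        Fin.rev_rev] at hv
      exact hv
    · exact coeff_osculatingPoly_of_le v hln
  · intro h i
    split_ifs with hi
    · exact (hcoeff i).1 (h _ (by rw [Fin.val_rev]; omega))
    · exact Submodule.mem_top

lemma mem_oscFlag_iff {n k : ℕ} (hk : k ≤ n) {t : ℂ} {v : Fin n → ℂ} :
    v ∈ oscFlag n (n - k) t ↔ (X - C t) ^ k ∣ osculatingPoly n v := by
  constructor
  · intro hv
    induction hv using Submodule.span_induction with
    | mem _ h =>
      obtain ⟨i, rfl⟩ := h
      rw [osculatingPoly_gammaVec (by omega)]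
      exact dvd_smul_of_dvd _ (pow_dvd_pow _ (by omega))
    | zero => simp
    | add _ _ _ _ hx hy => simpa using dvd_add hx hy
    | smul c _ _ hx => simpa using dvd_smul_of_dvd c hx
  · intro hdvd
    suffices h : osculatingPoly n v ∈ (oscFlag n (n - k) t).map (osculatingPoly n) by
      obtain ⟨w, hw, hwv⟩ := h
      rwa [← osculatingPoly_injective n hwv]
    refine Submodule.span_le.2 ?_ (mem_span_X_sub_C_pow_of_dvd (osculatingPoly_mem_degreeLT v) hdvd)
    rintro _ ⟨j, ⟨hkj, hjn⟩, rfl⟩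
    have hc : (-1) ^ (n - 1 - j) / (j.factorial : ℂ) ≠ 0 :=
      div_ne_zero (pow_ne_zero _ (neg_ne_zero.2 one_ne_zero))
        (Nat.cast_ne_zero.2 (Nat.factorial_ne_zero _))
    have hγ := osculatingPoly_gammaVec (show n - 1 - j < n by omega) t
    rw [show n - 1 - (n - 1 - j) = j by omega] at hγ
    rw [SetLike.mem_coe, ← Submodule.smul_mem_iff _ hc, ← hγ]
    exact Submodule.mem_map_of_mem (Submodule.subset_span ⟨⟨n - 1 - j, by omega⟩, rfl⟩)

lemma osculatingPoly_conj {n : ℕ} (v : Fin n → ℂ) :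
    osculatingPoly n (fun j => starRingEnd ℂ (v j)) =
      (osculatingPoly n v).map (starRingEnd ℂ) := by
  ext l
  rw [coeff_map]
  rcases lt_or_ge l n with hl | hl
  · rw [show l = ((⟨l, hl⟩ : Fin n) : ℕ) from rfl, coeff_osculatingPoly, coeff_osculatingPoly]
    simp
  · rw [coeff_osculatingPoly_of_le _ hl, coeff_osculatingPoly_of_le _ hl, map_zero]

lemma isRealSubspace_iff_map_osculatingPoly {n : ℕ} {H : Submodule ℂ (Fin n → ℂ)} :
    IsRealSubspace H ↔ ∀ p ∈ H.map (osculatingPoly n),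
      p.map (starRingEnd ℂ) ∈ H.map (osculatingPoly n) := by
  simp only [Submodule.mem_map, forall_exists_index, and_imp, forall_apply_eq_imp_iff₂,
    ← osculatingPoly_conj, (osculatingPoly_injective n).eq_iff, exists_eq_right]
  rfl

lemma isOsculatingSpace_map_osculatingPoly_iff {f : ℂ[X]} {n m : ℕ} (hn : n = f.natDegree + 1)
    (hm : m < n) {H : Submodule ℂ (Fin n → ℂ)} :
    IsOsculatingSpace f m (H.map (osculatingPoly n)) ↔
      finrank ℂ H = m + 1 ∧ (∀ i ≤ m, i ≤ finrank ℂ ↥(H ⊓ infFlag n (i + 1))) ∧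
        ∀ t, f.IsRoot t → H ⊓ oscFlag n (n - (m + 1)) t ≠ ⊥ := by
  have hinj := osculatingPoly_injective n
  have hinf (i : ℕ) : finrank ℂ ↥(H.map (osculatingPoly n) ⊓ degreeLT ℂ (i + 1)) =
      finrank ℂ ↥(H ⊓ infFlag n (i + 1)) := by
    rw [infFlag_eq_comap_degreeLT, Submodule.map_inf_eq_map_inf_comap,
      finrank_map_eq_of_injective hinj]
  have hosc (t : ℂ) : (∃ q ∈ H.map (osculatingPoly n), q ≠ 0 ∧ (X - C t) ^ (m + 1) ∣ q) ↔
      H ⊓ oscFlag n (n - (m + 1)) t ≠ ⊥ := by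
    simp only [Submodule.ne_bot_iff, Submodule.mem_map, Submodule.mem_inf,
      mem_oscFlag_iff (Nat.succ_le_of_lt hm), exists_exists_and_eq_and, and_assoc,
      map_ne_zero_iff _ hinj]
    exact exists_congr fun v => and_congr_right fun _ => and_comm
  constructor
  · rintro ⟨-, hrank, hflag, hroot⟩
    rw [finrank_map_eq_of_injective hinj] at hrank
    exact ⟨hrank, fun i hi => hinf i ▸ hflag i hi, fun t ht => (hosc t).1 (hroot t ht)⟩
  · rintro ⟨hrank, hflag, hroot⟩
    refine ⟨?_, ?_, fun i hi => (hinf i).symm ▸ hflag i hi, fun t ht => (hosc t).2 (hroot t ht)⟩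
    · rw [← hn, ← range_osculatingPoly]
      exact LinearMap.map_le_range
    · rw [finrank_map_eq_of_injective hinj, hrank]

lemma ncard_isOsculatingSpace_eq_ncard_isRealSubspace {f : ℂ[X]} {n m : ℕ}
    (hn : n = f.natDegree + 1) (hm : m < n) :
    {V | IsOsculatingSpace f m V ∧ ∀ p ∈ V, p.map (starRingEnd ℂ) ∈ V}.ncard =
      {H : Submodule ℂ (Fin n → ℂ) | finrank ℂ H = m + 1 ∧ IsRealSubspace H ∧
        (∀ i ≤ m, i ≤ finrank ℂ ↥(H ⊓ infFlag n (i + 1))) ∧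
        ∀ t, f.IsRoot t → H ⊓ oscFlag n (n - (m + 1)) t ≠ ⊥}.ncard := by
  rw [← Set.ncard_preimage_of_injective_subset_range
    (Submodule.map_injective_of_injective (osculatingPoly_injective n))]
  · congr 1
    ext H
    simp only [Set.mem_preimage, Set.mem_ofPred_eq, isOsculatingSpace_map_osculatingPoly_iff hn hm,
      ← isRealSubspace_iff_map_osculatingPoly]
    tauto
  · rintro V ⟨hV, -⟩
    refine ⟨V.comap (osculatingPoly n), Submodule.map_comap_eq_self ?_⟩
    rw [range_osculatingPoly, hn]
    exact hV.le_degreeLT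

end OsculatingPoly

section Counting

open UniqueFactorizationMonoid

lemma coeff_prod_X_pow_add_X_pow {ι : Type*} (s : Finset ι) (w : ι → ℕ) (m : ℕ) :
    (∏ a ∈ s, (MvPolynomial.X 0 ^ w a + MvPolynomial.X 1 ^ w a) : MvPolynomial (Fin 2) ℤ).coeff
      (Finsupp.single 0 (∑ a ∈ s, w a - m) + Finsupp.single 1 m) =
    ((s.powerset.filter fun u => ∑ a ∈ u, w a = m).card : ℤ) := by
  classical
  have hterm (u : Finset ι) (hu : u ∈ s.powerset) :
      ((∏ a ∈ u, MvPolynomial.X 1 ^ w a) * ∏ a ∈ s \ u, MvPolynomial.X 0 ^ w a :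
        MvPolynomial (Fin 2) ℤ).coeff
          (Finsupp.single 0 (∑ a ∈ s, w a - m) + Finsupp.single 1 m) =
      if ∑ a ∈ u, w a = m then 1 else 0 := by
    have hsum := Finset.sum_sdiff (f := w) (Finset.mem_powerset.1 hu)
    rw [Finset.prod_pow_eq_pow_sum, Finset.prod_pow_eq_pow_sum, mul_comm,
      MvPolynomial.X_pow_eq_monomial, MvPolynomial.X_pow_eq_monomial, MvPolynomial.monomial_mul,
      MvPolynomial.coeff_monomial, mul_one]
    refine if_congr ⟨fun h => ?_, fun h => ?_⟩ rfl rfl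
    · simpa using DFunLike.congr_fun h 1
    · rw [← hsum, h, Nat.add_sub_cancel]
  rw [Finset.prod_congr rfl fun _ _ => add_comm _ _, Finset.prod_add, MvPolynomial.coeff_sum,
    Finset.sum_congr rfl hterm, Finset.sum_boole]

variable {K : Type*} [Field K] [DecidableEq K] {P : K[X]}

lemma mem_primeFactors_iff (hP : P ≠ 0) {q : K[X]} :
    q ∈ primeFactors P ↔ Irreducible q ∧ q.Monic ∧ q ∣ P := by
  rw [mem_primeFactors, Polynomial.mem_normalizedFactors_iff hP]

lemma primeFactors_prod_of_subset (hP : P ≠ 0) {S : Finset K[X]} (hS : S ⊆ primeFactors P) :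
    primeFactors (∏ q ∈ S, q) = S := by
  classical
  have hirr (q : K[X]) (hq : q ∈ S.val) := (mem_primeFactors_iff hP).1 (hS hq)
  rw [← toFinset_normalizedFactors, Finset.prod_eq_multiset_prod, Multiset.map_id',
    normalizedFactors_prod_eq _ fun q hq => (hirr q hq).1,
    Multiset.map_congr rfl fun q hq => (hirr q hq).2.1.normalize_eq_self, Multiset.map_id',
    Finset.val_toFinset]

lemma prod_primeFactors_eq_self {p : K[X]} (hp : p.Monic) (hsq : Squarefree p) :
    ∏ q ∈ primeFactors p, q = p := by
  rw [Finset.prod_eq_multiset_prod, primeFactors_val_eq_normalizedFactors hsq.isRadical,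
    Multiset.map_id', prod_normalizedFactors_eq hp.ne_zero, hp.normalize_eq_self]

lemma natDegree_prod_of_subset_primeFactors (hP : P ≠ 0) {S : Finset K[X]}
    (hS : S ⊆ primeFactors P) : (∏ q ∈ S, q).natDegree = ∑ q ∈ S, q.natDegree :=
  natDegree_prod_of_monic _ _ fun _ hq => ((mem_primeFactors_iff hP).1 (hS hq)).2.1

lemma sum_natDegree_primeFactors (hP : Squarefree P) :
    ∑ q ∈ primeFactors P, q.natDegree = P.natDegree := by
  rw [← natDegree_prod_of_subset_primeFactors hP.ne_zero subset_rfl]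
  exact natDegree_eq_of_degree_eq (degree_eq_degree_of_associated
    (radical_associated hP.isRadical hP.ne_zero))

lemma ncard_monic_dvd (hP : Squarefree P) (m : ℕ) :
    {p : K[X] | p.Monic ∧ p.natDegree = m ∧ p ∣ P}.ncard =
      ((primeFactors P).powerset.filter fun S => ∑ q ∈ S, q.natDegree = m).card := by
  have hP0 := hP.ne_zero
  rw [← Set.ncard_coe_finset, ← Set.InjOn.ncard_image (f := fun S : Finset K[X] => ∏ q ∈ S, q)]
  · congr 1
    ext p
    simp only [Set.mem_ofPred_eq, Set.mem_image, Finset.coe_filter, Finset.mem_powerset]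
    constructor
    · rintro ⟨hp, rfl, hpP⟩
      have hprod := prod_primeFactors_eq_self hp (hP.squarefree_of_dvd hpP)
      refine ⟨primeFactors p, ⟨fun q hq => ?_, ?_⟩, hprod⟩
      · obtain ⟨hirr, hmonic, hqp⟩ := (mem_primeFactors_iff hp.ne_zero).1 hq
        exact (mem_primeFactors_iff hP0).2 ⟨hirr, hmonic, hqp.trans hpP⟩
      · rw [← natDegree_prod_of_subset_primeFactors hp.ne_zero subset_rfl, hprod]
    · rintro ⟨S, ⟨hS, rfl⟩, rfl⟩
      exact ⟨monic_prod_of_monic _ _ fun q hq => ((mem_primeFactors_iff hP0).1 (hS hq)).2.1,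
        natDegree_prod_of_subset_primeFactors hP0 hS,
        (Finset.prod_dvd_prod_of_subset _ _ _ hS).trans radical_dvd_self⟩
  · intro S hS S' hS' h
    simp only [Finset.coe_filter, Finset.mem_powerset, Set.mem_ofPred_eq] at hS hS'
    rw [← primeFactors_prod_of_subset hP0 hS.1, ← primeFactors_prod_of_subset hP0 hS'.1]
    exact congrArg primeFactors h

lemma card_filter_natDegree_primeFactors_eq_one (hP : P ≠ 0) :
    ((primeFactors P).filter fun q => q.natDegree = 1).card = {x | P.IsRoot x}.ncard := by
  rw [← Set.ncard_coe_finset, ← Set.ncard_image_of_injective (f := fun x : K => X - C x) _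
    (sub_right_injective.comp C_injective)]
  congr 1
  ext q
  simp only [Finset.coe_filter, mem_primeFactors_iff hP, Set.mem_ofPred_eq, Set.mem_image]
  constructor
  · rintro ⟨⟨-, hq, hqP⟩, hdeg⟩
    have hX : X - C (-q.coeff 0) = q := by
      rw [C_neg, sub_neg_eq_add]
      exact (hq.eq_X_add_C hdeg).symm
    exact ⟨-q.coeff 0, dvd_iff_isRoot.1 (hX.dvd.trans hqP), hX⟩
  · rintro ⟨x, hx, rfl⟩
    exact ⟨⟨irreducible_X_sub_C x, monic_X_sub_C x, dvd_iff_isRoot.2 hx⟩, natDegree_X_sub_C x⟩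

lemma prod_primeFactors_X_pow_add_X_pow {P : ℝ[X]} (hP : Squarefree P) :
    (∏ q ∈ primeFactors P,
      (MvPolynomial.X 0 ^ q.natDegree + MvPolynomial.X 1 ^ q.natDegree) :
      MvPolynomial (Fin 2) ℤ) =
    (MvPolynomial.X 0 + MvPolynomial.X 1) ^ {x | P.IsRoot x}.ncard *
      (MvPolynomial.X 0 ^ 2 + MvPolynomial.X 1 ^ 2) ^
        ((P.natDegree - {x | P.IsRoot x}.ncard) / 2) := by
  have htwo (q : ℝ[X]) (hq : q ∈ (primeFactors P).filter fun q => ¬ q.natDegree = 1) :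
      q.natDegree = 2 := by
    obtain ⟨hq, hq1⟩ := Finset.mem_filter.1 hq
    have hirr := ((mem_primeFactors_iff hP.ne_zero).1 hq).1
    have := hirr.natDegree_pos
    have := hirr.natDegree_le_two
    omega
  have hone (q : ℝ[X]) (hq : q ∈ (primeFactors P).filter fun q => q.natDegree = 1) :
      q.natDegree = 1 := (Finset.mem_filter.1 hq).2
  have hdeg := sum_natDegree_primeFactors hP
  rw [← Finset.sum_filter_add_sum_filter_not _ fun q => q.natDegree = 1, Finset.sum_congr rfl hone,
    Finset.sum_congr rfl htwo, Finset.sum_const, Finset.sum_const,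
    card_filter_natDegree_primeFactors_eq_one hP.ne_zero] at hdeg
  rw [← Finset.prod_filter_mul_prod_filter_not _ fun q => q.natDegree = 1,
    Finset.prod_congr rfl fun q hq => by rw [hone q hq, pow_one, pow_one],
    Finset.prod_congr (s₁ := (primeFactors P).filter fun q => ¬ q.natDegree = 1) rfl
      fun q hq => by rw [htwo q hq],
    Finset.prod_const, Finset.prod_const, card_filter_natDegree_primeFactors_eq_one hP.ne_zero]
  congr 2
  simp only [smul_eq_mul] at hdeg
  omega

lemma ncard_monic_dvd_real {P : ℝ[X]} (hP : Squarefree P) (m : ℕ) :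
    ({p : ℝ[X] | p.Monic ∧ p.natDegree = m ∧ p ∣ P}.ncard : ℤ) =
      MvPolynomial.coeff (Finsupp.single 0 (P.natDegree - m) + Finsupp.single 1 m)
        ((MvPolynomial.X 0 + MvPolynomial.X 1) ^ {x | P.IsRoot x}.ncard *
          (MvPolynomial.X 0 ^ 2 + MvPolynomial.X 1 ^ 2) ^
            ((P.natDegree - {x | P.IsRoot x}.ncard) / 2) : MvPolynomial (Fin 2) ℤ) := by
  rw [ncard_monic_dvd hP, ← coeff_prod_X_pow_add_X_pow, sum_natDegree_primeFactors hP,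
    prod_primeFactors_X_pow_add_X_pow hP]

end Counting

section RealPoints

lemma map_prod_X_sub_C_eq_self {R ι : Type*} [CommRing R] [Fintype ι] {σ : R →+* R}
    (hσ : Function.Injective σ) {t : ι → R} (ht : Function.Injective t)
    (h : ∀ i, ∃ j, t j = σ (t i)) :
    (∏ i, (X - C (t i))).map σ = ∏ i, (X - C (t i)) := by
  choose e he using h
  have he_inj : Function.Injective e := fun i j hij =>
    ht (hσ (by rw [← he, ← he, hij]))
  rw [Polynomial.map_prod]
  exact Fintype.prod_bijective e (Finite.injective_iff_bijective.1 he_inj) _ _ fun i => by simp [he]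

lemma isRoot_prod_X_sub_C {R ι : Type*} [CommRing R] [IsDomain R] [Fintype ι] {t : ι → R} {x : R} :
    (∏ i, (X - C (t i))).IsRoot x ↔ ∃ i, x = t i := by
  simp [eval_prod, Finset.prod_eq_zero_iff, sub_eq_zero]

lemma ncard_isRoot_map_ofReal (P : ℝ[X]) :
    {z : ℂ | (P.map Complex.ofRealHom).IsRoot z ∧ z.im = 0}.ncard = {x | P.IsRoot x}.ncard := by
  rw [← Set.ncard_image_of_injective _ Complex.ofReal_injective]
  congr 1
  ext z
  constructor
  · rintro ⟨hz, him⟩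
    obtain ⟨x, rfl⟩ : ∃ x : ℝ, (x : ℂ) = z := ⟨z.re, Complex.ext rfl him.symm⟩
    exact ⟨x, (isRoot_map_iff Complex.ofRealHom.injective).1 hz, rfl⟩
  · rintro ⟨x, hx, rfl⟩
    exact ⟨IsRoot.map hx, Complex.ofReal_im x⟩

lemma squarefree_of_map {K L : Type*} [Field K] [Field L] [PerfectField L] {φ : K →+* L}
    {P : K[X]} (h : Squarefree (P.map φ)) : Squarefree P :=
  ((separable_map φ).1 (PerfectField.separable_iff_squarefree.2 h)).squarefree

lemma ncard_isOsculatingSpace_real {F : ℝ[X]} (hroots : (F.map Complex.ofRealHom).roots.Nodup)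
    (hF : Squarefree (derivative F)) (m : ℕ) :
    ({V | IsOsculatingSpace (F.map Complex.ofRealHom) m V ∧
        ∀ p ∈ V, p.map (starRingEnd ℂ) ∈ V}.ncard : ℤ) =
      MvPolynomial.coeff (Finsupp.single 0 ((derivative F).natDegree - m) + Finsupp.single 1 m)
        ((MvPolynomial.X 0 + MvPolynomial.X 1) ^ {x | (derivative F).IsRoot x}.ncard *
          (MvPolynomial.X 0 ^ 2 + MvPolynomial.X 1 ^ 2) ^
            (((derivative F).natDegree - {x | (derivative F).IsRoot x}.ncard) / 2) :
          MvPolynomial (Fin 2) ℤ) := by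
  have hconj := map_starRingEnd_eq_self_iff.2 ⟨F, rfl⟩
  have hF' : derivative (F.map Complex.ofRealHom) ≠ 0 := by
    rw [derivative_map]
    exact map_ne_zero hF.ne_zero
  rw [ncard_isOsculatingSpace_map_stable hconj (IsAlgClosed.splits _) hroots hF', derivative_map,
    ncard_monic_dvd_map_starRingEnd_eq_self, ncard_monic_dvd_real hF]

end RealPoints

/-- **Counting the real solutions of a real osculating instance of `(□_{k,n}, □^{n−1})`.**
Let `t₁, …, t_{n−1}` be distinct complex numbers stable under conjugation, let
`f = ∏ (t − t_i)`, suppose `f′` is squarefree with exactly `ρ` real roots, and set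
`c = (n−2−ρ)/2`.  Then the number of real `k`-planes `H` with `dim(H ∩ F_{i+1}(∞)) ≥ i`
for `1 ≤ i ≤ k−1` and `H ∩ F_{n−k}(t_i) ≠ 0` for all `i` equals the coefficient of
`x^{n−k−1} y^{k−1}` in `(x+y)^ρ (x²+y²)^c`. -/
theorem real_osculating_count (k n ρ : ℕ) (hk : 1 ≤ k) (hkn : k ≤ n - 1)
    (t : Fin (n - 1) → ℂ) (ht : Function.Injective t)
    (hconj : ∀ i, ∃ j, t j = (starRingEnd ℂ) (t i))
    (f : Polynomial ℂ) (hf : f = ∏ i, (Polynomial.X - Polynomial.C (t i)))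
    (hsf : Squarefree (Polynomial.derivative f))
    (hρ : {z : ℂ | (Polynomial.derivative f).IsRoot z ∧ z.im = 0}.ncard = ρ) :
    ({H : Submodule ℂ (Fin n → ℂ) |
        Module.finrank ℂ H = k ∧ IsRealSubspace H ∧
        (∀ i : ℕ, 1 ≤ i → i ≤ k - 1 →
          i ≤ Module.finrank ℂ ↥(H ⊓ infFlag n (i + 1))) ∧
        (∀ i : Fin (n - 1), H ⊓ oscFlag n (n - k) (t i) ≠ ⊥)}.ncard : ℤ)
      = MvPolynomial.coeff
          (Finsupp.single 0 (n - k - 1) + Finsupp.single 1 (k - 1))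
          (((MvPolynomial.X 0 + MvPolynomial.X 1) ^ ρ *
            (MvPolynomial.X 0 ^ 2 + MvPolynomial.X 1 ^ 2) ^ ((n - 2 - ρ) / 2) :
            MvPolynomial (Fin 2) ℤ)) := by
  obtain ⟨m, rfl⟩ : ∃ m, k = m + 1 := ⟨k - 1, (Nat.sub_add_cancel hk).symm⟩
  have hdeg : f.natDegree = n - 1 := by simp [hf]
  have hsep : f.Separable := hf ▸ separable_prod_X_sub_C_iff.2 ht
  have hroot (z : ℂ) : f.IsRoot z ↔ ∃ i, z = t i := hf ▸ isRoot_prod_X_sub_C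
  obtain ⟨F, rfl⟩ := map_starRingEnd_eq_self_iff.1
    (hf ▸ map_prod_X_sub_C_eq_self (starRingEnd ℂ).injective ht hconj)
  have hdeg' : (derivative F).natDegree = n - 2 := by
    rw [natDegree_derivative, ← natDegree_map Complex.ofRealHom, hdeg, Nat.sub_sub]
  have hflag (a : ℕ → ℕ) : (∀ i, 1 ≤ i → i ≤ m → i ≤ a i) ↔ ∀ i ≤ m, i ≤ a i :=
    ⟨fun h i hi => i.eq_zero_or_pos.elim (· ▸ Nat.zero_le _) (h i · hi), fun h i _ => h i⟩
  rw [derivative_map] at hsf hρ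
  have hcount := ncard_isOsculatingSpace_real (nodup_roots hsep) (squarefree_of_map hsf) m
  rw [ncard_isOsculatingSpace_eq_ncard_isRealSubspace (n := n) (by omega) (by omega),
    ← ncard_isRoot_map_ofReal, hρ, hdeg'] at hcount
  simp only [hroot, forall_exists_index, forall_eq_apply_imp_iff] at hcount
  rw [Nat.add_sub_cancel, show n - (m + 1) - 1 = n - 2 - m by omega, ← hcount]
  simp only [hflag fun i => finrank ℂ ↥(_ ⊓ infFlag n (i + 1))]
end

section
/- Let 1 ≤ k < n and let ρ ≥ 0 be an integer with ρ ≡ n (mod 2), ρ ≤ n−2, and ρ < n−4. Then ν(k,n,ρ) ≤ ν(k,n,ρ+2). [Monotonicity of the real factorization counts, from the Remark following Corollary 6: ν(k,n,ρ_□ − 1) is the lower bound for the number of real solutions of osculation type ρ_□.] -/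
/-!
Since `(x + y)² = (x² + y²) + 2xy`, replacing one factor `x² + y²` by `(x + y)²` in
`(x + y)^ρ (x² + y²)^(c + 1)` adds `2xy (x + y)^ρ (x² + y²)^c`, which has no negative coefficient.
-/

/-- `ν(k, n, ρ)`: the coefficient of `x^{n−k−1} y^{k−1}` in the polynomial
`(x+y)^ρ (x²+y²)^c ∈ ℤ[x,y]`, where `c = (n−2−ρ)/2`. -/
noncomputable def nu (k n ρ : ℕ) : ℤ :=
  MvPolynomial.coeff (Finsupp.single 0 (n - k - 1) + Finsupp.single 1 (k - 1))
    (((MvPolynomial.X 0 + MvPolynomial.X 1) ^ ρ *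
      (MvPolynomial.X 0 ^ 2 + MvPolynomial.X 1 ^ 2) ^ ((n - 2 - ρ) / 2) :
      MvPolynomial (Fin 2) ℤ))

open MvPolynomial

section NonnegCoeff

variable {σ R : Type*} [CommSemiring R] [PartialOrder R] [IsOrderedRing R]

variable (σ R) in
/-- The subsemiring of polynomials with nonnegative coefficients. Differences lying in it express
coefficientwise inequalities, and its closure properties give positivity of products and powers. -/
def nonnegCoeff : Subsemiring (MvPolynomial σ R) where
  carrier := {p | ∀ d, 0 ≤ coeff d p}
  zero_mem' d := (coeff_zero d).ge
  one_mem' d := by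
    classical
    rw [coeff_one]
    split_ifs
    exacts [zero_le_one, le_rfl]
  add_mem' hp hq d := by
    rw [coeff_add]
    exact add_nonneg (hp d) (hq d)
  mul_mem' hp hq d := by
    classical
    rw [coeff_mul]
    exact Finset.sum_nonneg fun x _ ↦ mul_nonneg (hp x.1) (hq x.2)

theorem X_mem_nonnegCoeff (i : σ) : (X i : MvPolynomial σ R) ∈ nonnegCoeff σ R := fun d ↦ by
  classical
  rw [coeff_X]
  split_ifs
  exacts [zero_le_one, le_rfl]

theorem coeff_add_pow_mul_sq_add_sq_pow_succ_le {p q : MvPolynomial σ R}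
    (hp : p ∈ nonnegCoeff σ R) (hq : q ∈ nonnegCoeff σ R) (ρ c : ℕ) (d : σ →₀ ℕ) :
    coeff d ((p + q) ^ ρ * (p ^ 2 + q ^ 2) ^ (c + 1)) ≤
      coeff d ((p + q) ^ (ρ + 2) * (p ^ 2 + q ^ 2) ^ c) := by
  have expand_sq : (p + q) ^ (ρ + 2) * (p ^ 2 + q ^ 2) ^ c =
      (p + q) ^ ρ * (p ^ 2 + q ^ 2) ^ (c + 1) +
        2 * p * q * ((p + q) ^ ρ * (p ^ 2 + q ^ 2) ^ c) := by
    ring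
  have cross_term_mem :
      2 * p * q * ((p + q) ^ ρ * (p ^ 2 + q ^ 2) ^ c) ∈ nonnegCoeff σ R :=
    mul_mem (mul_mem (mul_mem (ofNat_mem _ 2) hp) hq)
      (mul_mem (pow_mem (add_mem hp hq) ρ)
        (pow_mem (add_mem (pow_mem hp 2) (pow_mem hq 2)) c))
  rw [expand_sq, coeff_add]
  exact le_add_of_nonneg_right (cross_term_mem d)

end NonnegCoeff

theorem nu_eq_coeff {i j ρ c : ℕ} (hdeg : i + j = ρ + 2 * c) :
    nu (j + 1) (i + j + 2) ρ =
      coeff (Finsupp.single 0 i + Finsupp.single 1 j)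
        ((X 0 + X 1) ^ ρ * (X 0 ^ 2 + X 1 ^ 2) ^ c : MvPolynomial (Fin 2) ℤ) := by
  have hi : i + j + 2 - (j + 1) - 1 = i := by omega
  have hc : (i + j + 2 - 2 - ρ) / 2 = c := by omega
  rw [nu, hi, hc, Nat.add_sub_cancel]

theorem nu_monotone_general (k n ρ : ℕ) (hk : 1 ≤ k) (hkn : k < n)
    (hpar : ρ % 2 = n % 2) (hle : ρ + 4 ≤ n) :
    nu k n ρ ≤ nu k n (ρ + 2) := by
  obtain ⟨j, rfl⟩ : ∃ j, k = j + 1 := ⟨k - 1, by omega⟩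
  obtain ⟨i, rfl⟩ : ∃ i, n = i + j + 2 := ⟨n - j - 2, by omega⟩
  obtain ⟨c, hdeg⟩ : ∃ c, i + j = ρ + 2 * (c + 1) := ⟨(i + j - ρ) / 2 - 1, by omega⟩
  rw [nu_eq_coeff hdeg, nu_eq_coeff (ρ := ρ + 2) (c := c) (by omega)]
  exact coeff_add_pow_mul_sq_add_sq_pow_succ_le (X_mem_nonnegCoeff 0) (X_mem_nonnegCoeff 1) ρ c _

/-- **Monotonicity of the real factorization counts.** For `1 ≤ k < n` and
`ρ ≡ n (mod 2)` with `ρ ≤ n−2` and `ρ < n−4`, we have `ν(k,n,ρ) ≤ ν(k,n,ρ+2)`. -/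
theorem nu_monotone (k n ρ : ℕ) (hk : 1 ≤ k) (hkn : k < n)
    (hpar : ρ % 2 = n % 2) (hle : ρ ≤ n - 2) (hlt : ρ < n - 4) :
    nu k n ρ ≤ nu k n (ρ + 2) :=
  nu_monotone_general k n ρ hk hkn hpar (by omega)
end

section
/- Let 1 ≤ k < n and let ρ ≥ 0 be an integer with ρ ≡ n (mod 2) and ρ ≤ n−2. Then binom(⌊(n−2)/2⌋ ; ⌊(k−1)/2⌋, ⌊(n−k−1)/2⌋) ≤ ν(k,n,ρ) ≤ binom(n−2, k−1), where the multinomial coefficient binom(N; a, b) is defined to be N!/(a!·b!) if a + b = N and 0 otherwise. [The two-sided bounds on the numbers of real factorizations from the Remark following Corollary 6.] -/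
/-- The multinomial coefficient `binom(N; a, b) = N!/(a!·b!)` if `a + b = N`,
and `0` otherwise. -/
def multinom (N a b : ℕ) : ℕ :=
  if a + b = N then N.factorial / (a.factorial * b.factorial) else 0

/-!
Since `(x + y)² = x² + y² + 2xy`, replacing a factor `x² + y²` by `(x + y)²` can only increase the
coefficients (computed in `ℕ`, where the cross term is nonnegative for free), so `ν(k, n, ρ)` is
monotone in `ρ` within a parity class. At the top, `ρ = n - 2`, it is the coefficient
`binom(n-2, k-1)` of `(x + y)^(n-2)`. At the bottom, `ρ = n % 2`, the polynomial is `(x² + y²)^N`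
or `(x + y)(x² + y²)^N`; each monomial there comes from exactly one monomial of `(x + y)^N`, and
`ν` equals the lower bound.
-/

open MvPolynomial

theorem multinom_comm (N a b : ℕ) : multinom N a b = multinom N b a := by
  simp only [multinom, add_comm, mul_comm]

theorem multinom_add (a b : ℕ) : multinom (a + b) a b = (a + b).choose a := by
  rw [multinom, if_pos rfl, Nat.choose_symm_add, Nat.add_choose]

section Monotonicity

variable {σ R : Type*} [CommSemiring R] [Preorder R] [CanonicallyOrderedAdd R]

theorem coeff_mul_sq_add_sq_le (p f g : MvPolynomial σ R) (m : σ →₀ ℕ) :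
    coeff m (p * (f ^ 2 + g ^ 2)) ≤ coeff m (p * (f + g) ^ 2) := by
  have expansion : p * (f + g) ^ 2 = p * (f ^ 2 + g ^ 2) + p * (2 * f * g) := by ring
  rw [expansion, coeff_add]
  exact le_self_add

theorem coeff_mul_sq_add_sq_pow_le (p f g : MvPolynomial σ R) (m : σ →₀ ℕ) (d : ℕ) :
    coeff m (p * (f ^ 2 + g ^ 2) ^ d) ≤ coeff m (p * (f + g) ^ (2 * d)) := by
  induction d generalizing p with
  | zero => simp
  | succ d ih =>
    calc coeff m (p * (f ^ 2 + g ^ 2) ^ (d + 1))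
        = coeff m (p * (f ^ 2 + g ^ 2) ^ d * (f ^ 2 + g ^ 2)) := by rw [pow_succ, mul_assoc]
      _ ≤ coeff m (p * (f ^ 2 + g ^ 2) ^ d * (f + g) ^ 2) := coeff_mul_sq_add_sq_le ..
      _ = coeff m (p * (f + g) ^ 2 * (f ^ 2 + g ^ 2) ^ d) := by rw [mul_right_comm]
      _ ≤ coeff m (p * (f + g) ^ 2 * (f + g) ^ (2 * d)) := ih _
      _ = coeff m (p * (f + g) ^ (2 * (d + 1))) := by ring_nf

end Monotonicity

section Coefficients

variable {σ R : Type*} [CommSemiring R]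

theorem coeff_single_add_smul_X_mul_expand [DecidableEq σ] {q : ℕ} (hq : 2 ≤ q) (s t : σ)
    (d : σ →₀ ℕ) (φ : MvPolynomial σ R) :
    coeff (Finsupp.single t 1 + q • d) (X s * expand q φ) = if s = t then coeff d φ else 0 := by
  split_ifs with hst
  · rw [hst, coeff_X_mul, coeff_expand_smul q (by omega)]
  · rw [coeff_X_mul']
    split_ifs
    · refine coeff_expand_of_not_dvd (i := t) φ ?_
      have exponent :
          (Finsupp.single t 1 + q • d - Finsupp.single s 1 : σ →₀ ℕ) t = 1 + q * d t := by
        simp [hst]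
      rw [exponent, ← Nat.dvd_add_iff_left (dvd_mul_right q (d t)), Nat.dvd_one]
      omega
    · rfl

theorem coeff_single_add_smul_sum_X_mul_expand [Fintype σ] {q : ℕ} (hq : 2 ≤ q) (t : σ)
    (d : σ →₀ ℕ) (φ : MvPolynomial σ R) :
    coeff (Finsupp.single t 1 + q • d) ((∑ s, X s) * expand q φ) = coeff d φ := by
  classical
  simp [Finset.sum_mul, coeff_sum, coeff_single_add_smul_X_mul_expand hq]

theorem coeff_add_pow_eq_multinom (d : Fin 2 →₀ ℕ) (N : ℕ) :
    coeff d ((X 0 + X 1 : MvPolynomial (Fin 2) R) ^ N) = multinom N (d 0) (d 1) := by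
  rw [coeff_add_pow]
  split_ifs with h
  · rw [Finset.HasAntidiagonal.mem_antidiagonal] at h
    rw [← h, multinom_add]
  · rw [Finset.HasAntidiagonal.mem_antidiagonal] at h
    rw [multinom, if_neg h, Nat.cast_zero]

theorem X_pow_add_X_pow_pow_eq_expand (q N : ℕ) (s t : σ) :
    (X s ^ q + X t ^ q : MvPolynomial σ R) ^ N = expand q ((X s + X t) ^ N) := by
  simp only [map_pow, map_add, expand_X]

theorem coeff_X_pow_add_X_pow_pow {q i j N : ℕ} (hq : q ≠ 0) (h : i + j = q * N) :
    coeff (Finsupp.single 0 i + Finsupp.single 1 j)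
      ((X 0 ^ q + X 1 ^ q : MvPolynomial (Fin 2) R) ^ N) = multinom N (i / q) (j / q) := by
  rw [X_pow_add_X_pow_pow_eq_expand]
  by_cases hi : q ∣ i
  · have hj : q ∣ j := (Nat.dvd_add_right hi).1 (h ▸ dvd_mul_right q N)
    have exponents : (Finsupp.single 0 i + Finsupp.single 1 j : Fin 2 →₀ ℕ) =
        q • (Finsupp.single 0 (i / q) + Finsupp.single 1 (j / q)) := by
      rw [smul_add, Finsupp.smul_single, Finsupp.smul_single, smul_eq_mul, smul_eq_mul,
        Nat.mul_div_cancel' hi, Nat.mul_div_cancel' hj]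
    rw [exponents, coeff_expand_smul q hq, coeff_add_pow_eq_multinom]
    simp
  · have hN : i / q + j / q ≠ N := by
      rintro rfl
      have remainder : i % q = 0 := by
        have hi_div := Nat.div_add_mod i q
        have hj_div := Nat.div_add_mod j q
        rw [mul_add] at h
        omega
      exact hi (Nat.dvd_of_mod_eq_zero remainder)
    rw [coeff_expand_of_not_dvd (i := 0) _ (by simpa using hi), multinom, if_neg hN, Nat.cast_zero]

theorem coeff_X_add_X_mul_sq_add_sq_pow {i j : ℕ} (h : Odd (i + j)) (N : ℕ) :
    coeff (Finsupp.single 0 i + Finsupp.single 1 j)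
      ((X 0 + X 1) * (X 0 ^ 2 + X 1 ^ 2) ^ N : MvPolynomial (Fin 2) R) =
        multinom N (i / 2) (j / 2) := by
  obtain ⟨t, exponents⟩ : ∃ t : Fin 2, (Finsupp.single 0 i + Finsupp.single 1 j : Fin 2 →₀ ℕ) =
      Finsupp.single t 1 + 2 • (Finsupp.single 0 (i / 2) + Finsupp.single 1 (j / 2)) := by
    simp only [smul_add, Finsupp.smul_single, smul_eq_mul]
    rcases Nat.even_or_odd i with hi | hi
    · have hj : Odd j := (Nat.odd_add'.1 h).2 hi
      refine ⟨1, ?_⟩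
      rw [Nat.two_mul_div_two_of_even hi, add_left_comm, ← Finsupp.single_add, add_comm 1,
        Nat.two_mul_div_two_add_one_of_odd hj]
    · have hj : Even j := (Nat.odd_add.1 h).1 hi
      refine ⟨0, ?_⟩
      rw [Nat.two_mul_div_two_of_even hj, ← add_assoc, ← Finsupp.single_add, add_comm 1,
        Nat.two_mul_div_two_add_one_of_odd hi]
  rw [exponents, X_pow_add_X_pow_pow_eq_expand, ← Fin.sum_univ_two,
    coeff_single_add_smul_sum_X_mul_expand le_rfl, Fin.sum_univ_two, coeff_add_pow_eq_multinom]
  simp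

end Coefficients

theorem nu_eq_natCast_coeff (k n ρ : ℕ) :
    nu k n ρ = (coeff (Finsupp.single 0 (n - k - 1) + Finsupp.single 1 (k - 1))
      ((X 0 + X 1) ^ ρ * (X 0 ^ 2 + X 1 ^ 2) ^ ((n - 2 - ρ) / 2) :
        MvPolynomial (Fin 2) ℕ) : ℕ) := by
  rw [← Nat.coe_castRingHom, ← coeff_map]
  simp [nu]

theorem nu_le_nu {n ρ ρ' : ℕ} (k : ℕ) (hρ : ρ ≤ ρ') (hpar : ρ % 2 = ρ' % 2) (hρ' : ρ' ≤ n - 2) :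
    nu k n ρ ≤ nu k n ρ' := by
  obtain ⟨d, rfl⟩ : ∃ d, ρ' = ρ + 2 * d := ⟨(ρ' - ρ) / 2, by omega⟩
  have exponent : (n - 2 - ρ) / 2 = (n - 2 - (ρ + 2 * d)) / 2 + d := by omega
  rw [nu_eq_natCast_coeff, nu_eq_natCast_coeff, exponent, pow_add _ _ d, ← mul_assoc,
    pow_add _ ρ, mul_right_comm _ (_ ^ (2 * d))]
  exact_mod_cast coeff_mul_sq_add_sq_pow_le ..

theorem nu_sub_two {k n : ℕ} (hk : 1 ≤ k) (hkn : k < n) :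
    nu k n (n - 2) = (n - 2).choose (k - 1) := by
  have degree : n - 2 = k - 1 + (n - k - 1) := by omega
  rw [nu, Nat.sub_self, Nat.zero_div, pow_zero, mul_one, coeff_add_pow_eq_multinom, multinom_comm,
    degree]
  simp [multinom_add]

theorem nu_mod_two {k n : ℕ} (hk : 1 ≤ k) (hkn : k < n) :
    nu k n (n % 2) = multinom ((n - 2) / 2) ((k - 1) / 2) ((n - k - 1) / 2) := by
  have exponent : (n - 2 - n % 2) / 2 = (n - 2) / 2 := by omega
  rw [nu, exponent, multinom_comm]
  rcases Nat.mod_two_eq_zero_or_one n with hn | hn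
  · rw [hn, pow_zero, one_mul, coeff_X_pow_add_X_pow_pow two_ne_zero (by omega)]
  · rw [hn, pow_one, coeff_X_add_X_mul_sq_add_sq_pow (Nat.odd_iff.2 (by omega))]

/-- **Two-sided bounds on the real factorization counts.** For `1 ≤ k < n` and
`ρ ≡ n (mod 2)` with `ρ ≤ n−2`,
`binom(⌊(n−2)/2⌋; ⌊(k−1)/2⌋, ⌊(n−k−1)/2⌋) ≤ ν(k,n,ρ) ≤ binom(n−2, k−1)`. -/
theorem nu_bounds (k n ρ : ℕ) (hk : 1 ≤ k) (hkn : k < n)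
    (hpar : ρ % 2 = n % 2) (hle : ρ ≤ n - 2) :
    (multinom ((n - 2) / 2) ((k - 1) / 2) ((n - k - 1) / 2) : ℤ) ≤ nu k n ρ ∧
      nu k n ρ ≤ ((n - 2).choose (k - 1) : ℤ) := by
  constructor
  · rw [← nu_mod_two hk hkn]
    exact nu_le_nu k (hpar ▸ Nat.mod_le ρ 2) (by omega) hle
  · rw [← nu_sub_two hk hkn]
    exact nu_le_nu k hle (by omega) le_rfl
end

section
/- Let n ≥ 3, r ≥ 2, and let a₁,…,a_r ≥ 1 be integers with a₁ + ⋯ + a_r = 2(n−2). Then K_{n−2}(a₁,…,a_r) = K_{n−2}(a₁,…,a_{r−2}, a_{r−1}+a_r) + K_{n−3}(a₁,…,a_{r−2}, a_{r−1}−1, a_r−1). [Schubert's recursion (formula (11)) for the numbers of solutions of special Schubert problems on Gr(2,n).] -/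
/-- The two-row Kostka number `K_m(a)` for a sequence `a = (a₁, …, a_r)` of integers:
the number of semistandard Young tableaux of rectangular shape `(m, m)` (two rows of
length `m`, rows weakly increasing, columns strictly increasing) with entries in
`{1, …, r}` (encoded as `Fin a.length`) in which the entry `i` occurs exactly `a_i`
times.  If some `a_i < 0` or `a₁ + ⋯ + a_r ≠ 2m`, no such tableau exists and
`K_m(a) = 0`. -/
noncomputable def Kostka (m : ℕ) (a : List ℤ) : ℕ :=
  Set.ncard {T : Fin 2 → Fin m → Fin a.length |
    (∀ p, Monotone (T p)) ∧
    (∀ q, T 0 q < T 1 q) ∧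
    (∀ i : Fin a.length, a.get i =
      (((Finset.univ : Finset (Fin 2 × Fin m)).filter
        fun pq => T pq.1 pq.2 = i).card : ℤ))}

/-!
Let `k < k + 1` be the two largest letters of a tableau of shape `(m + 1, m + 1)`. If the top row
ends in `k`, then the last column is `(k, k + 1)`, and deleting it leaves an arbitrary tableau of
shape `(m, m)` with one `k` and one `k + 1` fewer. Otherwise both letters occur in the bottom row
only, and renaming `k + 1` to `k` yields an arbitrary tableau of the merged content: the letters to
be renamed back are the last ones of the bottom row, as many as the content prescribes.
-/

open Finset

section Content

variable {ι α β : Type*} [Fintype ι] [DecidableEq α] [DecidableEq β]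

/-- The content of a word `u`: the number of occurrences of each letter. It is `ℤ`-valued, like the
contents prescribed in `Kostka`, so that contents can be subtracted. -/
def content (u : ι → α) (a : α) : ℤ :=
  #{q | u q = a}

lemma content_nonneg (u : ι → α) (a : α) : 0 ≤ content u a :=
  Int.natCast_nonneg _

lemma content_le_card (u : ι → α) (a : α) : content u a ≤ Fintype.card ι :=
  Int.ofNat_le.mpr (card_le_univ _)

lemma content_eq_zero_iff {u : ι → α} {a : α} : content u a = 0 ↔ ∀ q, u q ≠ a := by
  simp [content, filter_eq_empty_iff]

lemma content_apply_self_pos (u : ι → α) (q : ι) : 0 < content u (u q) :=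
  (content_nonneg u _).lt_of_ne' fun h => content_eq_zero_iff.mp h q rfl

lemma content_eq_sum (u : ι → α) (a : α) : content u a = ∑ q, if u q = a then 1 else 0 := by
  simp [content]

lemma content_comp_of_injective {g : α → β} (hg : g.Injective) (u : ι → α) (a : α) :
    content (g ∘ u) (g a) = content u a := by
  simp [content, hg.eq_iff]

lemma content_snoc {m : ℕ} (u : Fin m → α) (c : α) :
    content (Fin.snoc u c : Fin (m + 1) → α) = content u + Pi.single c 1 := by
  ext a
  simp only [content_eq_sum, Fin.sum_univ_castSucc, Fin.snoc_castSucc, Fin.snoc_last,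
    Pi.add_apply, Pi.single_apply, eq_comm (a := a)]

end Content

section Words

variable {m : ℕ} {α : Type*}

lemma monotone_snoc_iff [Preorder α] {u : Fin m → α} {c : α} :
    Monotone (Fin.snoc u c : Fin (m + 1) → α) ↔ Monotone u ∧ ∀ q, u q ≤ c := by
  refine ⟨fun h => ⟨fun i j hij => ?_, fun q => ?_⟩, fun ⟨hu, hc⟩ i j hij => ?_⟩
  · simpa using h (Fin.castSucc_le_castSucc_iff.mpr hij)
  · simpa using h (Fin.le_last q.castSucc)
  · induction j using Fin.lastCases with
    | last => induction i using Fin.lastCases <;> simp [hc]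
    | cast j =>
      induction i using Fin.lastCases with
      | last => exact absurd hij (Fin.castSucc_lt_last j).not_ge
      | cast i => simpa using hu (Fin.castSucc_le_castSucc_iff.mp hij)

lemma card_filter_rev_lt {c : ℕ} (hc : c ≤ m) : #{q : Fin m | (q.rev : ℕ) < c} = c := by
  rw [card_equiv (t := {q : Fin m | (q : ℕ) < c}) Fin.revPerm (by simp), Fin.card_filter_val_lt,
    min_eq_right hc]

lemma mem_iff_rev_lt_card_of_isUpperSet {s : Finset (Fin m)} (hs : IsUpperSet (s : Set (Fin m)))
    (q : Fin m) : q ∈ s ↔ (q.rev : ℕ) < #s := by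
  rw [Fin.val_rev]
  refine ⟨fun hq => ?_, fun hlt => by_contra fun hq => ?_⟩
  · have hsub : Ici q ⊆ s := fun j hj => hs (mem_Ici.mp hj) hq
    have hcard := card_le_card hsub
    rw [Fin.card_Ici] at hcard
    omega
  · have hsub : s ⊆ Ioi q := fun j hj => mem_Ioi.mpr (lt_of_not_ge fun hjq => hq (hs hjq hj))
    have hcard := card_le_card hsub
    rw [Fin.card_Ioi] at hcard
    omega

lemma eq_iff_rev_lt_content [PartialOrder α] [DecidableEq α] {v : Fin m → α} {k : α}
    (hv : Monotone v) (hk : ∀ q, v q ≤ k) (q : Fin m) :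
    v q = k ↔ ((q.rev : ℕ) : ℤ) < content v k := by
  have hupper : IsUpperSet (({j | v j = k} : Finset (Fin m)) : Set (Fin m)) := by
    intro i j hij hi
    simp only [mem_coe, mem_filter_univ] at hi ⊢
    exact (hk j).antisymm (hi ▸ hv hij)
  rw [content, Nat.cast_lt, ← mem_iff_rev_lt_card_of_isUpperSet hupper, mem_filter_univ]

end Words

section Tableau

variable {m : ℕ} {α β : Type*} [LinearOrder α] [LinearOrder β]

/-- `IsTwoRowTableau f u v` says that the rows `u` (top) and `v` (bottom) form a semistandard
Young tableau of shape `(m, m)` with content `f`. -/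
structure IsTwoRowTableau (f : α → ℤ) (u v : Fin m → α) : Prop where
  monotone_top : Monotone u
  monotone_bot : Monotone v
  top_lt_bot : ∀ q, u q < v q
  content_add_content : content u + content v = f

/-- The set of semistandard Young tableaux of shape `(m, m)` with content `f`, encoded as pairs of
rows. -/
def twoRowTableaux (m : ℕ) (f : α → ℤ) : Set ((Fin m → α) × (Fin m → α)) :=
  {T | IsTwoRowTableau f T.1 T.2}

lemma mem_twoRowTableaux {f : α → ℤ} {T : (Fin m → α) × (Fin m → α)} :
    T ∈ twoRowTableaux m f ↔ IsTwoRowTableau f T.1 T.2 :=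
  Iff.rfl

namespace IsTwoRowTableau

variable {f : α → ℤ} {u v : Fin m → α}

lemma apply_top_pos (h : IsTwoRowTableau f u v) (q : Fin m) : 0 < f (u q) :=
  h.content_add_content ▸ add_pos_of_pos_of_nonneg (content_apply_self_pos u q) (content_nonneg v _)

lemma apply_bot_pos (h : IsTwoRowTableau f u v) (q : Fin m) : 0 < f (v q) :=
  h.content_add_content ▸ add_pos_of_nonneg_of_pos (content_nonneg u _) (content_apply_self_pos v q)

end IsTwoRowTableau

lemma isTwoRowTableau_comp_iff (g : α ↪o β) {f : β → ℤ} (hf : ∀ b ∉ Set.range g, f b = 0)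
    {u v : Fin m → α} : IsTwoRowTableau f (g ∘ u) (g ∘ v) ↔ IsTwoRowTableau (f ∘ g) u v := by
  have hcontent : content (g ∘ u) + content (g ∘ v) = f ↔ content u + content v = f ∘ g := by
    refine ⟨fun h => ?_, fun h => funext fun b => ?_⟩
    · ext a
      simp [← h, content_comp_of_injective g.injective]
    · by_cases hb : b ∈ Set.range g
      · obtain ⟨a, rfl⟩ := hb
        simpa [content_comp_of_injective g.injective] using congrFun h a
      · have hzero (w : Fin m → α) : content (g ∘ w) b = 0 :=
          content_eq_zero_iff.mpr fun q hq => hb ⟨w q, hq⟩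
        simp [hzero, hf b hb]
  constructor
  · rintro ⟨hu, hv, hcol, h⟩
    exact ⟨fun i j hij => g.le_iff_le.mp (hu hij), fun i j hij => g.le_iff_le.mp (hv hij),
      fun q => g.lt_iff_lt.mp (hcol q), hcontent.mp h⟩
  · rintro ⟨hu, hv, hcol, h⟩
    exact ⟨g.monotone.comp hu, g.monotone.comp hv, fun q => g.lt_iff_lt.mpr (hcol q),
      hcontent.mpr h⟩

lemma twoRowTableaux_subset_range (g : α ↪o β) {f : β → ℤ} (hf : ∀ b ∉ Set.range g, f b = 0) :
    twoRowTableaux m f ⊆ Set.range (Prod.map (g ∘ ·) (g ∘ ·)) := by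
  rintro ⟨u, v⟩ h
  have hu (q) : u q ∈ Set.range g := by_contra fun hq => (h.apply_top_pos q).ne' (hf _ hq)
  have hv (q) : v q ∈ Set.range g := by_contra fun hq => (h.apply_bot_pos q).ne' (hf _ hq)
  choose u' hu' using hu
  choose v' hv' using hv
  exact ⟨(u', v'), Prod.ext (funext hu') (funext hv')⟩

lemma ncard_twoRowTableaux_comp (g : α ↪o β) {f : β → ℤ} (hf : ∀ b ∉ Set.range g, f b = 0) :
    (twoRowTableaux m (f ∘ g)).ncard = (twoRowTableaux m f).ncard := by
  have hinj : Function.Injective (Prod.map (g ∘ ·) (g ∘ ·) : (Fin m → α) × (Fin m → α) → _) :=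
    g.injective.comp_left.prodMap g.injective.comp_left
  rw [← Set.ncard_preimage_of_injective_subset_range hinj (twoRowTableaux_subset_range g hf)]
  exact congrArg Set.ncard (Set.ext fun _ => (isTwoRowTableau_comp_iff g hf).symm)

lemma finite_twoRowTableaux [Finite α] (g : α ↪o β) {f : β → ℤ}
    (hf : ∀ b ∉ Set.range g, f b = 0) : (twoRowTableaux m f).Finite :=
  (Set.finite_range _).subset (twoRowTableaux_subset_range g hf)

lemma isTwoRowTableau_snoc_iff {f : α → ℤ} {u v : Fin m → α} {s t : α} :
    IsTwoRowTableau f (Fin.snoc u s : Fin (m + 1) → α) (Fin.snoc v t) ↔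
      IsTwoRowTableau (f - Pi.single s 1 - Pi.single t 1) u v ∧
        (∀ q, u q ≤ s) ∧ (∀ q, v q ≤ t) ∧ s < t := by
  have hcontent : content (Fin.snoc u s : Fin (m + 1) → α) + content (Fin.snoc v t) = f ↔
      content u + content v = f - Pi.single s 1 - Pi.single t 1 := by
    rw [content_snoc, content_snoc, eq_sub_iff_add_eq, eq_sub_iff_add_eq]
    abel_nf
  have hcol : (∀ q, (Fin.snoc u s : Fin (m + 1) → α) q < (Fin.snoc v t : Fin (m + 1) → α) q) ↔
      (∀ q, u q < v q) ∧ s < t := by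
    simp [Fin.forall_fin_succ']
  constructor
  · rintro ⟨hu, hv, h, hf⟩
    rw [monotone_snoc_iff] at hu hv
    rw [hcol] at h
    exact ⟨⟨hu.1, hv.1, h.1, hcontent.mp hf⟩, hu.2, hv.2, h.2⟩
  · rintro ⟨⟨hu, hv, h, hf⟩, hus, hvt, hst⟩
    exact ⟨monotone_snoc_iff.mpr ⟨hu, hus⟩, monotone_snoc_iff.mpr ⟨hv, hvt⟩,
      hcol.mpr ⟨h, hst⟩, hcontent.mpr hf⟩

end Tableau

section TopLetters

variable {m k : ℕ} {f : ℕ → ℤ} {u v : Fin m → ℕ}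

namespace IsTwoRowTableau

lemma bot_le (h : IsTwoRowTableau f u v) (hf : ∀ i, k < i → f i = 0) (q : Fin m) : v q ≤ k :=
  le_of_not_gt fun hq => (h.apply_bot_pos q).ne' (hf _ hq)

lemma top_lt (h : IsTwoRowTableau f u v) (hf : ∀ i, k < i → f i = 0) (q : Fin m) : u q < k :=
  (h.top_lt_bot q).trans_le (h.bot_le hf q)

end IsTwoRowTableau

lemma ncard_twoRowTableaux_top_last_eq (hf : ∀ i, k + 1 < i → f i = 0) :
    {T ∈ twoRowTableaux (m + 1) f | T.1 (Fin.last m) = k}.ncard =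
      (twoRowTableaux m (f - Pi.single k 1 - Pi.single (k + 1) 1)).ncard := by
  let appendColumn (T : (Fin m → ℕ) × (Fin m → ℕ)) : (Fin (m + 1) → ℕ) × (Fin (m + 1) → ℕ) :=
    (Fin.snoc T.1 k, Fin.snoc T.2 (k + 1))
  have hinj : appendColumn.Injective := fun T T' h => by
    simpa [appendColumn, Fin.snoc_inj, Prod.ext_iff] using h
  have hrange : {T ∈ twoRowTableaux (m + 1) f | T.1 (Fin.last m) = k} ⊆ Set.range appendColumn := by
    rintro ⟨u, v⟩ ⟨h, rfl : u (Fin.last m) = k⟩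
    have hlast : v (Fin.last m) = u (Fin.last m) + 1 :=
      (h.bot_le hf _).antisymm (h.top_lt_bot _)
    refine ⟨(Fin.init u, Fin.init v), Prod.ext (Fin.snoc_init_self u) ?_⟩
    simp only [appendColumn, ← hlast, Fin.snoc_init_self]
  have hf' (i : ℕ) (hi : k + 1 < i) :
      (f - Pi.single k 1 - Pi.single (k + 1) 1 : ℕ → ℤ) i = 0 := by
    simp [hf i hi, show i ≠ k by omega, show i ≠ k + 1 by omega]
  rw [← Set.ncard_preimage_of_injective_subset_range hinj hrange]
  congr 1
  ext ⟨u, v⟩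
  simp only [appendColumn, Set.mem_preimage, Set.mem_ofPred_eq, mem_twoRowTableaux,
    isTwoRowTableau_snoc_iff, Fin.snoc_last, lt_add_one, and_true]
  exact and_iff_left_of_imp fun h => ⟨fun q => Nat.lt_succ_iff.mp (h.top_lt hf' q), h.bot_le hf'⟩

/-- The content obtained from `f` by renaming the letter `k + 1` to `k`. -/
def mergeLetters (k : ℕ) (f : ℕ → ℤ) : ℕ → ℤ :=
  f + Pi.single k (f (k + 1)) - Pi.single (k + 1) (f (k + 1))

lemma mergeLetters_apply_self (k : ℕ) (f : ℕ → ℤ) : mergeLetters k f k = f k + f (k + 1) := by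
  simp [mergeLetters]

lemma mergeLetters_add (k : ℕ) (f g : ℕ → ℤ) :
    mergeLetters k (f + g) = mergeLetters k f + mergeLetters k g := by
  simp only [mergeLetters, Pi.add_apply, Pi.single_add]
  abel

lemma mergeLetters_eq_self (hf : f (k + 1) = 0) : mergeLetters k f = f := by
  simp [mergeLetters, hf]

lemma mergeLetters_eq_zero (hf : ∀ i, k + 1 < i → f i = 0) (i : ℕ) (hi : k < i) :
    mergeLetters k f i = 0 := by
  rcases (Nat.succ_le_of_lt hi).eq_or_lt with rfl | hi'
  · simp [mergeLetters]
  · simp [mergeLetters, hf i hi', hi.ne', hi'.ne']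

lemma eq_of_mergeLetters_eq {g : ℕ → ℤ} (h : mergeLetters k f = mergeLetters k g)
    (hk : f (k + 1) = g (k + 1)) : f = g := by
  simpa [mergeLetters, hk] using h

lemma content_min (hv : ∀ q, v q ≤ k + 1) :
    content (fun q => min (v q) k) = mergeLetters k (content v) := by
  ext i
  rcases eq_or_ne i k with rfl | hik
  · simp only [mergeLetters_apply_self, content_eq_sum, ← sum_add_distrib]
    exact sum_congr rfl fun q _ => by grind
  rcases eq_or_ne i (k + 1) with rfl | hik'
  · rw [content_eq_zero_iff.mpr fun q => by omega]
    simp [mergeLetters]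
  · simp only [mergeLetters, Pi.add_apply, Pi.sub_apply, Pi.single_eq_of_ne hik,
      Pi.single_eq_of_ne hik', add_zero, sub_zero, content_eq_sum]
    exact sum_congr rfl fun q _ => by grind

/-- The word `v` with its last `c` letters replaced by `k + 1`. If `v` is weakly increasing with
largest letter `k`, this is the weakly increasing word obtained by renaming `c` of the letters `k`
to `k + 1`. -/
def raiseLast (k c : ℕ) (v : Fin m → ℕ) (q : Fin m) : ℕ :=
  if (q.rev : ℕ) < c then k + 1 else v q

lemma raiseLast_min {c : ℕ} (hv : Monotone v) (hvk : ∀ q, v q ≤ k + 1)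
    (hc : content v (k + 1) = c) : raiseLast k c (fun q => min (v q) k) = v := by
  ext q
  have htop := eq_iff_rev_lt_content hv hvk q
  grind [raiseLast]

lemma min_raiseLast {c : ℕ} (hv : Monotone v) (hvk : ∀ q, v q ≤ k) (hc : c ≤ content v k) :
    (fun q => min (raiseLast k c v q) k) = v := by
  ext q
  have htop := eq_iff_rev_lt_content hv hvk q
  grind [raiseLast]

lemma monotone_raiseLast (c : ℕ) (hv : Monotone v) (hvk : ∀ q, v q ≤ k) :
    Monotone (raiseLast k c v) := by
  intro i j hij
  have hvij := hv hij
  have hvi := hvk i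
  grind [raiseLast]

lemma le_raiseLast (c : ℕ) (hvk : ∀ q, v q ≤ k) (q : Fin m) : v q ≤ raiseLast k c v q := by
  grind [raiseLast]

lemma raiseLast_le (c : ℕ) (hvk : ∀ q, v q ≤ k) (q : Fin m) : raiseLast k c v q ≤ k + 1 := by
  grind [raiseLast]

lemma content_raiseLast {c : ℕ} (hvk : ∀ q, v q ≤ k) (hc : c ≤ m) :
    content (raiseLast k c v) (k + 1) = c := by
  have htop (q : Fin m) : raiseLast k c v q = k + 1 ↔ (q.rev : ℕ) < c := by
    grind [raiseLast]
  simp_rw [content, htop, card_filter_rev_lt hc]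

lemma mergeLetters_content_top (hu : ∀ q, u q < k) : mergeLetters k (content u) = content u :=
  mergeLetters_eq_self (content_eq_zero_iff.mpr fun q => ((hu q).trans (lt_add_one k)).ne)

lemma isTwoRowTableau_min (h : IsTwoRowTableau f u v) (hf : ∀ i, k + 1 < i → f i = 0)
    (hu : ∀ q, u q < k) : IsTwoRowTableau (mergeLetters k f) u (fun q => min (v q) k) where
  monotone_top := h.monotone_top
  monotone_bot := h.monotone_bot.min monotone_const
  top_lt_bot q := lt_min (h.top_lt_bot q) (hu q)
  content_add_content := by
    rw [content_min (h.bot_le hf), ← h.content_add_content, mergeLetters_add,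
      mergeLetters_content_top hu]

lemma IsTwoRowTableau.content_bot (h : IsTwoRowTableau f u v) {i : ℕ} (hi : ∀ q, u q ≠ i) :
    content v i = f i := by
  rw [← h.content_add_content, Pi.add_apply, content_eq_zero_iff.mpr hi, zero_add]

lemma le_content_bot_of_mergeLetters {c : ℕ} (h : IsTwoRowTableau (mergeLetters k f) u v)
    (hf : ∀ i, k + 1 < i → f i = 0) (hk : 0 ≤ f k) (hc : f (k + 1) = c) : c ≤ content v k := by
  rw [h.content_bot fun q => (h.top_lt (mergeLetters_eq_zero hf) q).ne, mergeLetters_apply_self, hc]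
  exact le_add_of_nonneg_left hk

lemma isTwoRowTableau_raiseLast {c : ℕ} (h : IsTwoRowTableau (mergeLetters k f) u v)
    (hf : ∀ i, k + 1 < i → f i = 0) (hk : 0 ≤ f k) (hc : f (k + 1) = c) :
    IsTwoRowTableau f u (raiseLast k c v) := by
  have hu := h.top_lt (mergeLetters_eq_zero hf)
  have hv := h.bot_le (mergeLetters_eq_zero hf)
  have hcv := le_content_bot_of_mergeLetters h hf hk hc
  have hcm : c ≤ m := by simpa using hcv.trans (content_le_card v k)
  refine ⟨h.monotone_top, monotone_raiseLast c h.monotone_bot hv,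
    fun q => (h.top_lt_bot q).trans_le (le_raiseLast c hv q), eq_of_mergeLetters_eq (k := k) ?_ ?_⟩
  · rw [mergeLetters_add, ← content_min (raiseLast_le c hv), min_raiseLast h.monotone_bot hv hcv,
      mergeLetters_content_top hu, h.content_add_content]
  · rw [Pi.add_apply, content_raiseLast hv hcm, hc,
      content_eq_zero_iff.mpr fun q => ((hu q).trans (lt_add_one k)).ne, zero_add]

lemma ncard_twoRowTableaux_top_lt (hf : ∀ i, k + 1 < i → f i = 0) (hk : 0 ≤ f k)
    (hk' : 0 ≤ f (k + 1)) :
    {T ∈ twoRowTableaux m f | ∀ q, T.1 q < k}.ncard =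
      (twoRowTableaux m (mergeLetters k f)).ncard := by
  obtain ⟨c, hc⟩ := Int.eq_ofNat_of_zero_le hk'
  have hbij : Set.BijOn (fun T : (Fin m → ℕ) × (Fin m → ℕ) => (T.1, fun q => min (T.2 q) k))
      {T ∈ twoRowTableaux m f | ∀ q, T.1 q < k} (twoRowTableaux m (mergeLetters k f)) := by
    refine Set.InvOn.bijOn (f' := fun T => (T.1, raiseLast k c T.2)) ⟨?_, ?_⟩ ?_ ?_
    · rintro ⟨u, v⟩ ⟨h, hu⟩
      have hcv : content v (k + 1) = c :=
        (h.content_bot fun q => ((hu q).trans (lt_add_one k)).ne).trans hc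
      exact Prod.ext rfl (raiseLast_min h.monotone_bot (h.bot_le hf) hcv)
    · exact fun T h => Prod.ext rfl <| min_raiseLast h.monotone_bot
        (h.bot_le (mergeLetters_eq_zero hf)) (le_content_bot_of_mergeLetters h hf hk hc)
    · exact fun T ⟨h, hu⟩ => isTwoRowTableau_min h hf hu
    · exact fun T h =>
        ⟨isTwoRowTableau_raiseLast h hf hk hc, h.top_lt (mergeLetters_eq_zero hf)⟩
  exact hbij.ncard_eq

lemma ncard_twoRowTableaux_succ (hf : ∀ i, k + 1 < i → f i = 0) (hk : 0 ≤ f k)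
    (hk' : 0 ≤ f (k + 1)) :
    (twoRowTableaux (m + 1) f).ncard = (twoRowTableaux (m + 1) (mergeLetters k f)).ncard +
      (twoRowTableaux m (f - Pi.single k 1 - Pi.single (k + 1) 1)).ncard := by
  have hfinite : (twoRowTableaux (m + 1) f).Finite :=
    finite_twoRowTableaux (Fin.valOrderEmb (k + 2)) fun i hi =>
      hf i (not_lt.mp fun hlt => hi ⟨⟨i, hlt⟩, rfl⟩)
  have hsdiff : twoRowTableaux (m + 1) f \ {T | T.1 (Fin.last m) = k} =
      {T ∈ twoRowTableaux (m + 1) f | ∀ q, T.1 q < k} := by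
    ext T
    refine and_congr_right fun h => ⟨fun hlast q => ?_, fun hlt => (hlt _).ne⟩
    have hle := Nat.lt_succ_iff.mp (h.top_lt hf (Fin.last m))
    exact (h.monotone_top (Fin.le_last q)).trans_lt (hle.lt_of_ne hlast)
  rw [← ncard_twoRowTableaux_top_lt hf hk hk', ← ncard_twoRowTableaux_top_last_eq hf, ← hsdiff]
  exact (Set.ncard_inter_add_ncard_sdiff_eq_ncard _ _ hfinite).symm.trans (add_comm _ _)

end TopLetters

section Kostka

lemma kostka_eq_ncard_twoRowTableaux_get (m : ℕ) (a : List ℤ) :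
    Kostka m a = (twoRowTableaux m a.get).ncard := by
  let rows := finTwoArrowEquiv (Fin m → Fin a.length)
  rw [← Set.ncard_preimage_of_injective_subset_range rows.injective
    (rows.surjective.range_eq ▸ Set.subset_univ _), Kostka]
  congr 1
  ext T
  have hcontent (i : Fin a.length) :
      (#{pq : Fin 2 × Fin m | T pq.1 pq.2 = i} : ℤ) = content (T 0) i + content (T 1) i := by
    rw [card_filter, Fintype.sum_prod_type, Fin.sum_univ_two, ← card_filter, ← card_filter,
      Nat.cast_add, content, content]
  simp only [Set.mem_ofPred_eq, hcontent]
  constructor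
  · rintro ⟨hmono, hcol, ha⟩
    exact ⟨hmono 0, hmono 1, hcol, funext fun i => (ha i).symm⟩
  · rintro ⟨htop, hbot, hcol, ha⟩
    exact ⟨Fin.forall_fin_two.mpr ⟨htop, hbot⟩, hcol, fun i => (congrFun ha i).symm⟩

lemma kostka_eq_ncard_twoRowTableaux_toFinsupp (m : ℕ) (a : List ℤ) :
    Kostka m a = (twoRowTableaux m a.toFinsupp).ncard := by
  have hget : a.get = a.toFinsupp ∘ Fin.valOrderEmb a.length := by
    ext i
    simp
  rw [kostka_eq_ncard_twoRowTableaux_get, hget, ncard_twoRowTableaux_comp]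
  exact fun i hi => List.getD_eq_default _ _ (not_lt.mp fun hlt => hi ⟨⟨i, hlt⟩, rfl⟩)

lemma coe_toFinsupp_append_singleton (a : List ℤ) (x : ℤ) :
    ⇑(a ++ [x]).toFinsupp = (⇑a.toFinsupp + Pi.single a.length x : ℕ → ℤ) := by
  rw [List.toFinsupp_concat_eq_toFinsupp_add_single, Finsupp.coe_add, Finsupp.single_eq_pi_single]

lemma coe_toFinsupp_append_pair (a : List ℤ) (x y : ℤ) :
    ⇑(a ++ [x, y]).toFinsupp =
      (⇑a.toFinsupp + Pi.single a.length x + Pi.single (a.length + 1) y : ℕ → ℤ) := by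
  rw [List.append_cons, coe_toFinsupp_append_singleton, coe_toFinsupp_append_singleton]
  simp

lemma toFinsupp_append_pair_length_add_one (a : List ℤ) (x y : ℤ) :
    (a ++ [x, y]).toFinsupp (a.length + 1) = y := by
  simp

lemma mergeLetters_toFinsupp_append_pair (a : List ℤ) (x y : ℤ) :
    mergeLetters a.length (a ++ [x, y]).toFinsupp = (a ++ [x + y]).toFinsupp := by
  rw [mergeLetters, toFinsupp_append_pair_length_add_one, coe_toFinsupp_append_pair,
    coe_toFinsupp_append_singleton, Pi.single_add]
  abel

lemma toFinsupp_append_pair_sub_single (a : List ℤ) (x y : ℤ) :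
    (⇑(a ++ [x, y]).toFinsupp - Pi.single a.length 1 - Pi.single (a.length + 1) 1 : ℕ → ℤ) =
      (a ++ [x - 1, y - 1]).toFinsupp := by
  simp only [coe_toFinsupp_append_pair, Pi.single_sub]
  abel

end Kostka

theorem schubert_recursion_general (m : ℕ) (b : List ℤ) {x y : ℤ} (hx : 0 ≤ x) (hy : 0 ≤ y) :
    Kostka (m + 1) (b ++ [x, y]) =
      Kostka (m + 1) (b ++ [x + y]) + Kostka m (b ++ [x - 1, y - 1]) := by
  simp only [kostka_eq_ncard_twoRowTableaux_toFinsupp, ← mergeLetters_toFinsupp_append_pair,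
    ← toFinsupp_append_pair_sub_single]
  apply ncard_twoRowTableaux_succ
  · exact fun i hi => List.getD_eq_default _ _ (List.length_append.trans_le hi)
  · simpa using hx
  · rwa [toFinsupp_append_pair_length_add_one]

/-- **Schubert's recursion for special Schubert problems on `Gr(2, n)`.**
For `n ≥ 3` and positive integers `a₁, …, a_r` (here `a = b ++ [x, y]`, so `r ≥ 2`)
with `a₁ + ⋯ + a_r = 2(n−2)`:
`K_{n−2}(a₁,…,a_r) = K_{n−2}(a₁,…,a_{r−2}, a_{r−1}+a_r) + K_{n−3}(a₁,…,a_{r−2}, a_{r−1}−1, a_r−1)`. -/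
theorem schubert_recursion (n : ℕ) (hn : 3 ≤ n) (b : List ℤ) (x y : ℤ)
    (hpos : ∀ z ∈ b ++ [x, y], 1 ≤ z)
    (hsum : (b ++ [x, y]).sum = 2 * ((n : ℤ) - 2)) :
    Kostka (n - 2) (b ++ [x, y]) =
      Kostka (n - 2) (b ++ [x + y]) + Kostka (n - 3) (b ++ [x - 1, y - 1]) := by
  obtain ⟨m, rfl⟩ := Nat.exists_eq_add_of_le' hn
  exact schubert_recursion_general m b (zero_le_one.trans (hpos x (by simp)))
    (zero_le_one.trans (hpos y (by simp)))
end

section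
/- Let n ≥ 4 and let a = (a₁,…,a_r) be a reduced special Schubert problem for Gr(2,n), i.e., 1 ≤ a_i ≤ n−3 for all i, a_i + a_j ≤ n−2 for all i < j, and a₁ + ⋯ + a_r = 2(n−2). If a is not the sequence (1,1,1,1), then there is a permutation (b₁,…,b_r) of (a₁,…,a_r) such that K_{n−2}(b₁,…,b_{r−2}, b_{r−1}+b_r) ≠ K_{n−3}(b₁,…,b_{r−2}, b_{r−1}−1, b_r−1); and when a = (1,1,1,1) both of these numbers equal 1. [Lemma of Brooks–Martín del Campo–Sottile used to prove that all Schubert problems in Gr(2,n) have at least alternating Galois groups.] -/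
/-!
The Kostka number of shape `(m, m)` and content `a` is the multiplicity of the trivial
representation in the representation `⨂ V_{a_i}` of `SL₂`. As
`V_x ⊗ V_y = V_{x+y} ⊕ (V_{x-1} ⊗ V_{y-1})`, the two Kostka numbers to be compared add up to that
of `a`, so they differ unless `V_{x+y}` occurs in the product of the remaining factors with exactly
half that multiplicity.

If `x < y` are entries of `a` and `z` is a third one, the pairs `(x, z)` and `(y, z)` lead to
different multiplicities, so one of them works. If all `p + 2` entries equal `k`, equality would
mean that `V_{2k}` occurs in `V_k^{⊗p}` as often as `V_0, V_2, …, V_{2k-2}` together. The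
multiplicity of `V_{2s}` divided by its dimension `2s + 1` decreases with `s`, whence that total is
at least `k² / (2k + 1)` times the multiplicity of `V_{2k}`, which settles `k ≥ 3`. For `k = 1` the
trivial representation is too rare. For `k = 2` the multiplicities of `V_0` are the Riordan numbers
`R_p`, whose recurrence turns the equality into `p R_p = 4 R_{p+1} + 3 R_p`, and `R_{p+1} ≤ 3 R_p`
leaves only `p ≤ 15`.
-/

/-! ### Clebsch–Gordan multiplicities -/

/-- The multiplicity of the irreducible `SL₂`-representation `V_d` of dimension `d + 1` in
`⨂ V_x`, `x ∈ l`, computed by the Clebsch–Gordan rule. The subtraction is exact since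
`v ≤ min x d`. -/
def irredMult : List ℕ → ℕ → ℕ
  | [], d => if d = 0 then 1 else 0
  | x :: l, d => ∑ v ∈ Finset.range (min x d + 1), irredMult l (d + x - 2 * v)

/-- The multiplicity of the weight `e` in the `SL₂`-representation `⨂ V_x`, `x ∈ l`. It is
integer-valued because only differences of weight multiplicities are of interest. -/
def weightMult : List ℕ → ℤ → ℤ
  | [], e => if e = 0 then 1 else 0
  | x :: l, e => ∑ v ∈ Finset.range (x + 1), weightMult l (e + x - 2 * v)

theorem weightMult_neg (l : List ℕ) (e : ℤ) : weightMult l (-e) = weightMult l e := by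
  induction l generalizing e with
  | nil => simp [weightMult]
  | cons x l ih =>
    simp only [weightMult]
    rw [← Finset.sum_range_reflect]
    refine Finset.sum_congr rfl fun v hv => ?_
    rw [Finset.mem_range] at hv
    rw [← ih]
    congr 1
    omega

theorem weightMult_perm {l l' : List ℕ} (h : l.Perm l') (e : ℤ) :
    weightMult l e = weightMult l' e := by
  induction h generalizing e with
  | nil => rfl
  | cons x _ ih => simp only [weightMult, ih]
  | swap x y l =>
    simp only [weightMult]
    rw [Finset.sum_comm]
    refine Finset.sum_congr rfl fun v _ => Finset.sum_congr rfl fun w _ => ?_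
    congr 1
    ring
  | trans _ _ ih₁ ih₂ => rw [ih₁, ih₂]

theorem sum_range_eq_sum_range_min_of_antisymm (g : ℤ → ℤ) (hg : ∀ e, g (-e - 2) = -g e) (x d : ℕ) :
    ∑ v ∈ Finset.range (x + 1), g (d + x - 2 * v) =
      ∑ v ∈ Finset.range (min x d + 1), g (d + x - 2 * v) := by
  have htail : ∑ v ∈ Finset.Ico (min x d + 1) (x + 1), g (d + x - 2 * v) =
      -∑ v ∈ Finset.Ico (min x d + 1) (x + 1), g (d + x - 2 * v) := by
    rw [← Finset.sum_neg_distrib]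
    refine Finset.sum_nbij' (fun v => d + 1 + x - v) (fun v => d + 1 + x - v) ?_ ?_ ?_ ?_ ?_
    any_goals intro v hv; simp only [Finset.mem_Ico] at *; omega
    intro v hv
    rw [Finset.mem_Ico] at hv
    rw [← hg]
    congr 1
    omega
  rw [← Finset.sum_range_add_sum_Ico _ (Nat.add_le_add_right (min_le_left x d) 1)]
  omega

theorem irredMult_eq_weightMult_sub (l : List ℕ) (d : ℕ) :
    (irredMult l d : ℤ) = weightMult l d - weightMult l (d + 2) := by
  induction l generalizing d with
  | nil =>
    have hd : (d : ℤ) + 2 ≠ 0 := by positivity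
    simp [irredMult, weightMult, hd]
  | cons x l ih =>
    set g : ℤ → ℤ := fun e => weightMult l e - weightMult l (e + 2) with hg
    have hanti : ∀ e, g (-e - 2) = -g e := fun e => by
      have h := weightMult_neg l (e + 2)
      rw [neg_add'] at h
      simp only [hg, h, sub_add_cancel, weightMult_neg l e, neg_sub]
    calc (irredMult (x :: l) d : ℤ)
        = ∑ v ∈ Finset.range (min x d + 1), g (d + x - 2 * v) := by
          simp only [irredMult, Nat.cast_sum, ih]
          refine Finset.sum_congr rfl fun v hv => ?_
          rw [Finset.mem_range] at hv
          rw [show ((d + x - 2 * v : ℕ) : ℤ) = d + x - 2 * v by omega]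
      _ = ∑ v ∈ Finset.range (x + 1), g (d + x - 2 * v) :=
          (sum_range_eq_sum_range_min_of_antisymm g hanti x d).symm
      _ = weightMult (x :: l) d - weightMult (x :: l) (d + 2) := by
          rw [hg]
          simp only [weightMult, Finset.sum_sub_distrib]
          ring_nf

theorem irredMult_perm {l l' : List ℕ} (h : l.Perm l') (d : ℕ) :
    irredMult l d = irredMult l' d := by
  have := irredMult_eq_weightMult_sub l d
  rw [weightMult_perm h, weightMult_perm h, ← irredMult_eq_weightMult_sub] at this
  exact_mod_cast this

theorem irredMult_cons_zero (x : ℕ) (l : List ℕ) : irredMult (x :: l) 0 = irredMult l x := by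
  simp [irredMult]

theorem irredMult_cons_comm (x d : ℕ) (l : List ℕ) :
    irredMult (x :: l) d = irredMult (d :: l) x := by
  simp only [irredMult, min_comm, add_comm]

theorem irredMult_eq_zero_of_sum_lt (l : List ℕ) (d : ℕ) (h : l.sum < d) :
    irredMult l d = 0 := by
  induction l generalizing d with
  | nil => simp_all [irredMult, Nat.ne_of_gt]
  | cons x l ih =>
    rw [List.sum_cons] at h
    refine Finset.sum_eq_zero fun v hv => ih _ ?_
    rw [Finset.mem_range] at hv
    omega

theorem irredMult_pos (l : List ℕ) (d : ℕ) (hle : d ≤ l.sum) (hpar : Even (l.sum + d))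
    (hmax : ∀ z ∈ l, 2 * z ≤ l.sum + d) : 0 < irredMult l d := by
  induction l generalizing d with
  | nil => simp_all [irredMult]
  | cons x l ih =>
    simp only [List.sum_cons, List.mem_cons, forall_eq_or_imp] at hle hpar hmax
    obtain ⟨hx, hmax⟩ := hmax
    set e := min (x + d) l.sum
    have hpar' : Even (l.sum + e) := by grind
    have hpos : 0 < irredMult l e := by
      refine ih e (min_le_right _ _) hpar' fun z hz => ?_
      have := hmax z hz
      have := List.le_sum_of_mem hz
      omega
    obtain ⟨v, hv⟩ : ∃ v, x + d = e + 2 * v := ⟨(x + d - e) / 2, by grind⟩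
    refine Finset.sum_pos_iff.2 ⟨v, Finset.mem_range.2 (by omega), ?_⟩
    rwa [show d + x - 2 * v = e by omega]

theorem irredMult_cons_cons_zero (x y : ℕ) (l : List ℕ) :
    irredMult ((x + 1) :: (y + 1) :: l) 0 =
      irredMult l (x + 1 + (y + 1)) + irredMult (x :: y :: l) 0 := by
  rw [irredMult_cons_zero, irredMult_cons_zero, irredMult, irredMult,
    show min (y + 1) (x + 1) = min y x + 1 by omega, Finset.sum_range_succ', add_comm]
  congr 1
  refine Finset.sum_congr rfl fun v _ => ?_
  congr 1
  omega

theorem irredMult_cons_cons_self (k d : ℕ) (l : List ℕ) :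
    irredMult (k :: k :: l) d = ∑ i ∈ Finset.range (k + 1), irredMult (2 * i :: l) d := by
  rw [irredMult_cons_comm, irredMult_perm (.swap k d l), irredMult, min_self,
    ← Finset.sum_range_reflect]
  refine Finset.sum_congr rfl fun i hi => ?_
  rw [Finset.mem_range] at hi
  rw [irredMult_cons_comm (2 * i) d]
  congr 1
  omega

/-! ### Unequal entries -/

theorem irredMult_cons_add_lt {m x y z : ℕ} {c : List ℕ} (hxy : x < y) (hz : 1 ≤ z)
    (hyz : y + z ≤ m) (hc : ∀ w ∈ c, y + w ≤ m) (hsum : x + y + z + c.sum = 2 * m) :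
    irredMult (x :: c) (y + z) < irredMult (y :: c) (x + z) := by
  have hpos : 0 < irredMult c (x + y + z - 2 * (x + 1)) := by
    refine irredMult_pos c _ (by omega) ⟨m - x - 1, by omega⟩ fun w hw => ?_
    have := hc w hw
    omega
  simp only [irredMult, show y + z + x = x + y + z by ring, show x + z + y = x + y + z by ring]
  refine Finset.sum_lt_sum_of_subset (i := x + 1) ?_ ?_ ?_ hpos fun _ _ _ => Nat.zero_le _
  · exact Finset.range_subset_range.2 (by omega)
  · exact Finset.mem_range.2 (by omega)
  · exact fun h => by have := Finset.mem_range.1 h; omega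

theorem exists_two_mul_irredMult_ne_of_lt {m : ℕ} {a : List ℕ} (hpos : ∀ z ∈ a, 1 ≤ z)
    (hpair : a.Pairwise fun u v => u + v ≤ m) (hsum : a.sum = 2 * m)
    {x y : ℕ} (hx : x ∈ a) (hy : y ∈ a) (hxy : x < y) :
    ∃ (c : List ℕ) (u v : ℕ), (u :: v :: c).Perm a ∧
      2 * irredMult c (u + v) ≠ irredMult a 0 := by
  obtain ⟨l, hl⟩ : ∃ l, (x :: y :: l).Perm a := by
    have hy' : y ∈ a.erase x := (List.mem_erase_of_ne hxy.ne').2 hy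
    exact ⟨(a.erase x).erase y,
      ((List.perm_cons_erase hy').symm.cons x).trans (List.perm_cons_erase hx).symm⟩
  replace hpair := hl.symm.pairwise hpair fun h => by rwa [add_comm]
  rw [← hl.sum_eq] at hsum
  rcases l with _ | ⟨z, c⟩
  · simp only [List.pairwise_cons, List.mem_cons, forall_eq_or_imp, List.sum_cons,
      List.sum_nil] at hpair hsum
    omega
  have hxyzc : (y :: z :: x :: c).Perm (x :: y :: z :: c) :=
    .trans (.cons y (.swap x z c)) (.swap x y (z :: c))
  simp only [List.pairwise_cons, List.mem_cons, forall_eq_or_imp, List.sum_cons] at hpair hsum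
  have hlt : irredMult (x :: c) (y + z) < irredMult (y :: c) (x + z) :=
    irredMult_cons_add_lt hxy (hpos z (hl.subset (by simp))) hpair.2.1.1 hpair.2.1.2 (by omega)
  by_cases h : 2 * irredMult (x :: c) (y + z) = irredMult a 0
  · exact ⟨y :: c, x, z, .trans (.cons x (.swap y z c)) hl, by omega⟩
  · exact ⟨x :: c, y, z, hxyzc.trans hl, h⟩

/-! ### Multiplicities relative to dimensions -/

/-- The multiplicity of `V_{2t}` in `V_{2s} ⊗ V_k ⊗ V_k = ⨁ V_{2s} ⊗ V_{2i}`, `i ≤ k`: by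
Clebsch–Gordan, the number of those `i` for which `s`, `i`, `t` satisfy the triangle
inequalities. -/
def tripleMult (k s t : ℕ) : ℕ :=
  ((Finset.range (k + 1)).filter fun i => s ≤ i + t ∧ i ≤ s + t ∧ t ≤ s + i).card

theorem tripleMult_eq (k s t : ℕ) :
    tripleMult k s t = min k (s + t) + 1 - (max s t - min s t) := by
  rw [tripleMult, ← Nat.card_Ico]
  congr 1
  ext i
  simp only [Finset.mem_filter, Finset.mem_range, Finset.mem_Ico]
  omega

theorem sum_tripleMult_mul (k s B : ℕ) (F : ℕ → ℕ) :
    ∑ t ∈ Finset.range B, tripleMult k s t * F t =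
      ∑ i ∈ Finset.range (k + 1),
        ∑ t ∈ Finset.range B with s ≤ i + t ∧ i ≤ s + t ∧ t ≤ s + i, F t := by
  simp only [tripleMult, Finset.card_filter, Finset.sum_mul, Finset.sum_filter]
  rw [Finset.sum_comm]
  simp only [ite_mul, one_mul, zero_mul]

theorem irredMult_two_mul_cons {i s B : ℕ} (hB : s + i < B) (l : List ℕ) :
    irredMult (2 * i :: l) (2 * s) =
      ∑ t ∈ Finset.range B with s ≤ i + t ∧ i ≤ s + t ∧ t ≤ s + i, irredMult l (2 * t) := by
  refine Finset.sum_nbij' (fun v => s + i - v) (fun t => s + i - t) ?_ ?_ ?_ ?_ ?_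
  any_goals
    intro v hv
    simp only [Finset.mem_filter, Finset.mem_range] at *
    omega
  intro v _
  congr 1
  omega

theorem irredMult_cons_cons_self_two_mul {k s B : ℕ} (hB : s + k < B) (l : List ℕ) :
    irredMult (k :: k :: l) (2 * s) =
      ∑ t ∈ Finset.range B, tripleMult k s t * irredMult l (2 * t) := by
  rw [irredMult_cons_cons_self, sum_tripleMult_mul]
  refine Finset.sum_congr rfl fun i hi => irredMult_two_mul_cons ?_ l
  rw [Finset.mem_range] at hi
  omega

theorem sum_Ico_odd {a b : ℕ} (h : a ≤ b) :
    ∑ t ∈ Finset.Ico a b, (2 * t + 1) + a ^ 2 = b ^ 2 := by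
  induction b, h using Nat.le_induction with
  | base => simp
  | succ b h ih =>
    rw [Finset.sum_Ico_succ_top h, add_right_comm, ih]
    ring

theorem sum_range_odd (k : ℕ) : ∑ t ∈ Finset.range k, (2 * t + 1) = k ^ 2 := by
  simpa using sum_Ico_odd (Nat.zero_le k)

theorem sum_triangle_odd {i s B : ℕ} (hB : s + i < B) :
    ∑ t ∈ Finset.range B with s ≤ i + t ∧ i ≤ s + t ∧ t ≤ s + i, (2 * t + 1) =
      (2 * s + 1) * (2 * i + 1) := by
  have hfilter : (Finset.range B).filter (fun t => s ≤ i + t ∧ i ≤ s + t ∧ t ≤ s + i) =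
      Finset.Ico (max s i - min s i) (s + i + 1) := by
    ext t
    simp only [Finset.mem_filter, Finset.mem_range, Finset.mem_Ico]
    omega
  have hsum := sum_Ico_odd (show max s i - min s i ≤ s + i + 1 by omega)
  have hsq : (2 * s + 1) * (2 * i + 1) + (max s i - min s i) ^ 2 = (s + i + 1) ^ 2 := by
    rcases le_total s i with h | h
    all_goals
      obtain ⟨e, rfl⟩ := Nat.exists_eq_add_of_le h
      simp only [le_add_iff_nonneg_right, zero_le, max_eq_left, max_eq_right, min_eq_left,
        min_eq_right, add_tsub_cancel_left]
      ring
  rw [hfilter]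
  omega

/-- The dimension count for `V_{2s} ⊗ V_k ⊗ V_k`. -/
theorem sum_tripleMult_mul_odd {k s B : ℕ} (hB : s + k < B) :
    ∑ t ∈ Finset.range B, tripleMult k s t * (2 * t + 1) = (2 * s + 1) * (k + 1) ^ 2 := by
  rw [sum_tripleMult_mul, ← sum_range_odd, Finset.mul_sum]
  refine Finset.sum_congr rfl fun i hi => sum_triangle_odd ?_
  rw [Finset.mem_range] at hi
  omega

theorem tripleMult_succ_le {k s t : ℕ} (h : t ≤ max k s) :
    (2 * s + 1) * tripleMult k (s + 1) t ≤ (2 * s + 3) * tripleMult k s t := by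
  rw [tripleMult_eq, tripleMult_eq]
  rcases le_or_gt t s with hts | hts
  · exact Nat.mul_le_mul (by omega) (by omega)
  obtain ⟨j, rfl⟩ : ∃ j, k = t + j := Nat.exists_eq_add_of_le (by omega)
  rcases le_or_gt (s + 1) j with hj | hj
  · rw [show min (t + j) (s + 1 + t) + 1 - (max (s + 1) t - min (s + 1) t) = 2 * s + 3 by omega,
      show min (t + j) (s + t) + 1 - (max s t - min s t) = 2 * s + 1 by omega, mul_comm]
  · rw [show min (t + j) (s + 1 + t) + 1 - (max (s + 1) t - min (s + 1) t) = j + s + 2 by omega,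
      show min (t + j) (s + t) + 1 - (max s t - min s t) = j + s + 1 by omega]
    nlinarith

theorem le_tripleMult_succ {k s t : ℕ} (h : max k s < t) :
    (2 * s + 3) * tripleMult k s t ≤ (2 * s + 1) * tripleMult k (s + 1) t := by
  rw [tripleMult_eq, tripleMult_eq]
  rcases le_or_gt t (s + k) with htk | htk
  · obtain ⟨j, hj⟩ := Nat.exists_eq_add_of_le htk
    rw [show min k (s + 1 + t) + 1 - (max (s + 1) t - min (s + 1) t) = j + 2 by omega,
      show min k (s + t) + 1 - (max s t - min s t) = j + 1 by omega]
    have : j + 1 ≤ s := by omega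
    nlinarith
  · rw [show min k (s + t) + 1 - (max s t - min s t) = 0 by omega, mul_zero]
    exact Nat.zero_le _

/-- `F t / (2 t + 1)` is weakly decreasing in `t`, where `2 t + 1 = dim V_{2t}`. -/
def DimDecreasing (F : ℕ → ℕ) : Prop := ∀ s, (2 * s + 1) * F (s + 1) ≤ (2 * s + 3) * F s

theorem DimDecreasing.mul_le {F : ℕ → ℕ} (hF : DimDecreasing F) {s t : ℕ} (h : s ≤ t) :
    (2 * s + 1) * F t ≤ (2 * t + 1) * F s := by
  induction t, h using Nat.le_induction with
  | base => rfl
  | succ t _ ih =>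
    refine Nat.le_of_mul_le_mul_left ?_ (Nat.succ_pos (2 * t))
    calc (2 * t + 1) * ((2 * s + 1) * F (t + 1))
        = (2 * s + 1) * ((2 * t + 1) * F (t + 1)) := by ring
      _ ≤ (2 * s + 1) * ((2 * t + 3) * F t) := Nat.mul_le_mul_left _ (hF t)
      _ = (2 * t + 3) * ((2 * s + 1) * F t) := by ring
      _ ≤ (2 * t + 3) * ((2 * t + 1) * F s) := Nat.mul_le_mul_left _ ih
      _ = (2 * t + 1) * ((2 * (t + 1) + 1) * F s) := by ring

theorem DimDecreasing.lt_sum_range {F : ℕ → ℕ} (hF : DimDecreasing F) {k : ℕ} (hk : 3 ≤ k)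
    (hpos : 0 < F k) : F k < ∑ s ∈ Finset.range k, F s := by
  refine Nat.lt_of_mul_lt_mul_left (a := 2 * k + 1) ?_
  calc (2 * k + 1) * F k
      < k ^ 2 * F k := Nat.mul_lt_mul_of_pos_right (by nlinarith) hpos
    _ = ∑ s ∈ Finset.range k, (2 * s + 1) * F k := by rw [← sum_range_odd, Finset.sum_mul]
    _ ≤ ∑ s ∈ Finset.range k, (2 * k + 1) * F s :=
        Finset.sum_le_sum fun s hs => hF.mul_le (Finset.mem_range.1 hs).le
    _ = (2 * k + 1) * ∑ s ∈ Finset.range k, F s := by rw [Finset.mul_sum]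

theorem sum_mul_le_sum_mul_of_single_crossing {ι R : Type*} [LinearOrder ι] [CommSemiring R]
    [LinearOrder R] [IsStrictOrderedRing R] [ExistsAddOfLE R] {S : Finset ι} {a b D F : ι → R}
    (e : ι) (hD : 0 < D e) (htotal : ∑ t ∈ S, a t * D t = ∑ t ∈ S, b t * D t)
    (hle : ∀ t ≤ e, a t ≤ b t) (hge : ∀ t, e < t → b t ≤ a t)
    (hF : ∀ s t, s ≤ t → D s * F t ≤ D t * F s) :
    ∑ t ∈ S, a t * F t ≤ ∑ t ∈ S, b t * F t := by
  -- This says `0 ≤ (b t - a t) * (D e * F t - D t * F e)`, with both sides free of subtraction.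
  have hterm : ∀ t, a t * (D e * F t) + b t * (D t * F e) ≤
      a t * (D t * F e) + b t * (D e * F t) := fun t => by
    rcases le_or_gt t e with h | h
    · exact mul_add_mul_le_mul_add_mul (hle t h) (hF t e h)
    · exact mul_add_mul_le_mul_add_mul' (hge t h) (hF e t h.le)
  have hsum := Finset.sum_le_sum fun t (_ : t ∈ S) => hterm t
  simp only [Finset.sum_add_distrib, mul_left_comm _ (D e), ← mul_assoc _ _ (F e),
    ← Finset.sum_mul, ← Finset.mul_sum, htotal] at hsum
  rw [add_comm] at hsum
  exact le_of_mul_le_mul_left (le_of_add_le_add_left hsum) hD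

theorem DimDecreasing.cons_cons_self {l : List ℕ}
    (hl : DimDecreasing fun t => irredMult l (2 * t)) (k : ℕ) :
    DimDecreasing fun s => irredMult (k :: k :: l) (2 * s) := by
  intro s
  have hB : s + k < s + k + 2 := by omega
  have hB' : s + 1 + k < s + k + 2 := by omega
  simp only [irredMult_cons_cons_self_two_mul hB, irredMult_cons_cons_self_two_mul hB',
    Finset.mul_sum, ← mul_assoc]
  refine sum_mul_le_sum_mul_of_single_crossing (D := fun t => 2 * t + 1) (max k s)
    (Nat.succ_pos _) ?_ (fun _ => tripleMult_succ_le) (fun _ => le_tripleMult_succ)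
    fun _ _ => hl.mul_le
  simp only [mul_assoc, ← Finset.mul_sum, sum_tripleMult_mul_odd hB, sum_tripleMult_mul_odd hB']
  ring

theorem dimDecreasing_cons_cons_self_of_sum_le {k : ℕ} {l : List ℕ} (hl : l.sum ≤ 2 * k) :
    DimDecreasing fun s => irredMult (k :: k :: l) (2 * s) := by
  intro s
  simp only [irredMult_cons_cons_self_two_mul (show s + k < s + k + 2 by omega),
    irredMult_cons_cons_self_two_mul (show s + 1 + k < s + k + 2 by omega), Finset.mul_sum,
    ← mul_assoc]
  refine Finset.sum_le_sum fun t _ => ?_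
  rcases le_or_gt t k with h | h
  · exact Nat.mul_le_mul_right _ (tripleMult_succ_le (h.trans (le_max_left k s)))
  · simp only [irredMult_eq_zero_of_sum_lt l (2 * t) (by omega), mul_zero, le_refl]

theorem dimDecreasing_replicate (k p : ℕ) :
    DimDecreasing fun s => irredMult (List.replicate (p + 2) k) (2 * s) := by
  induction p using Nat.twoStepInduction with
  | zero => exact dimDecreasing_cons_cons_self_of_sum_le (l := []) (by simp)
  | one => exact dimDecreasing_cons_cons_self_of_sum_le (l := [k]) (by simp; omega)
  | more p ih _ => exact ih.cons_cons_self k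

/-! ### Equal entries -/

theorem irredMult_replicate_pos {p k d : ℕ} (hp : 2 ≤ p) (hd : d ≤ p * k)
    (heven : Even (p * k + d)) : 0 < irredMult (List.replicate p k) d := by
  refine irredMult_pos _ _ ?_ ?_ fun z hz => ?_ <;> rw [List.sum_replicate, smul_eq_mul]
  · exact hd
  · exact heven
  · rw [List.eq_of_mem_replicate hz]
    nlinarith

theorem irredMult_cons_cons_self_zero (k : ℕ) (l : List ℕ) :
    irredMult (k :: k :: l) 0 =
      ∑ s ∈ Finset.range k, irredMult l (2 * s) + irredMult l (2 * k) := by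
  rw [irredMult_cons_cons_self]
  simp only [irredMult_cons_zero, Finset.sum_range_succ]

theorem irredMult_replicate_one_zero_lt_two {p : ℕ} (hp : 4 ≤ p) (heven : Even p) :
    irredMult (List.replicate p 1) 0 < irredMult (List.replicate p 1) 2 := by
  obtain ⟨q, rfl⟩ := Nat.exists_eq_add_of_le' (show 2 ≤ p by omega)
  have hpos : 0 < irredMult (List.replicate q 1) 2 :=
    irredMult_replicate_pos (by omega) (by omega) (by grind)
  have h₀ : irredMult (1 :: 1 :: List.replicate q 1) 0 =
      irredMult (List.replicate q 1) 0 + irredMult (List.replicate q 1) 2 := by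
    simpa using irredMult_cons_cons_self_zero 1 (List.replicate q 1)
  have h₂ : irredMult (1 :: 1 :: List.replicate q 1) 2 = irredMult (List.replicate q 1) 0 +
      2 * irredMult (List.replicate q 1) 2 + irredMult (List.replicate q 1) 4 := by
    simpa [Finset.sum_range_succ, tripleMult_eq] using
      irredMult_cons_cons_self_two_mul (s := 1) (show 1 + 1 < 3 by norm_num) (List.replicate q 1)
  rw [List.replicate_succ, List.replicate_succ, h₀, h₂]
  omega

/-- The trinomial coefficient: the coefficient of `x ^ j` in `(x⁻¹ + 1 + x) ^ p`. -/
def trinomial (p : ℕ) (j : ℤ) : ℤ := weightMult (List.replicate p 2) (2 * j)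

theorem trinomial_succ (p : ℕ) (j : ℤ) :
    trinomial (p + 1) j = trinomial p (j - 1) + trinomial p j + trinomial p (j + 1) := by
  simp only [trinomial, List.replicate_succ, weightMult, Finset.sum_range_succ,
    Finset.sum_range_zero]
  push_cast
  ring_nf

theorem trinomial_neg (p : ℕ) (j : ℤ) : trinomial p (-j) = trinomial p j := by
  rw [trinomial, mul_neg, weightMult_neg, trinomial]

-- Compare coefficients in `θ (f ^ (p + 1)) = (p + 1) f ^ p θ f`, `f = x⁻¹ + 1 + x`, `θ = x d/dx`.
theorem mul_trinomial_succ (p : ℕ) (j : ℤ) :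
    j * trinomial (p + 1) j = (p + 1) * (trinomial p (j - 1) - trinomial p (j + 1)) := by
  induction p generalizing j with
  | zero =>
    rw [trinomial_succ]
    simp only [trinomial, List.replicate_zero, weightMult]
    split_ifs <;> omega
  | succ p ih =>
    have hleft := ih (j - 1)
    have hmid := ih j
    have hright := ih (j + 1)
    simp only [trinomial_succ, sub_add_cancel, add_sub_cancel_right] at *
    push_cast
    linarith

theorem trinomial_succ_zero (p : ℕ) :
    trinomial (p + 1) 0 = trinomial p 0 + 2 * trinomial p 1 := by
  rw [trinomial_succ, zero_sub, trinomial_neg, zero_add]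
  ring

theorem trinomial_succ_one (p : ℕ) :
    (p + 2) * trinomial (p + 1) 1 = (2 * p + 2) * trinomial p 0 + (p + 1) * trinomial p 1 := by
  have hrec : trinomial (p + 1) 1 = trinomial p 0 + trinomial p 1 + trinomial p 2 :=
    trinomial_succ p 1
  have hdiff : 1 * trinomial (p + 1) 1 = (p + 1) * (trinomial p 0 - trinomial p 2) :=
    mul_trinomial_succ p 1
  linear_combination hdiff + (p + 1) * hrec

theorem irredMult_replicate_two_zero (p : ℕ) :
    (irredMult (List.replicate p 2) 0 : ℤ) = trinomial p 0 - trinomial p 1 := by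
  simp [irredMult_eq_weightMult_sub, trinomial]

theorem irredMult_replicate_two_recurrence (p : ℕ) :
    (p + 3) * irredMult (List.replicate (p + 2) 2) 0 = (p + 1) *
      (2 * irredMult (List.replicate (p + 1) 2) 0 + 3 * irredMult (List.replicate p 2) 0) := by
  have h₁ := trinomial_succ_one p
  have h₂ := trinomial_succ_one (p + 1)
  zify
  simp only [irredMult_replicate_two_zero]
  push_cast at h₂
  rw [trinomial_succ_zero (p + 1)]
  rw [trinomial_succ_zero p] at *
  linear_combination 3 * h₁ - h₂

/-- The Riordan numbers `1, 0, 1, 1, 3, 6, 15, …`, given by their recurrence, in which the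
division is exact. -/
def riordan : ℕ → ℕ
  | 0 => 1
  | 1 => 0
  | p + 2 => (p + 1) * (2 * riordan (p + 1) + 3 * riordan p) / (p + 3)

theorem irredMult_replicate_two_eq_riordan (p : ℕ) :
    irredMult (List.replicate p 2) 0 = riordan p := by
  induction p using Nat.twoStepInduction with
  | zero => simp [irredMult, riordan]
  | one => simp [irredMult, riordan]
  | more p ih₀ ih₁ =>
    rw [riordan, ← ih₀, ← ih₁]
    exact (Nat.div_eq_of_eq_mul_right (Nat.succ_pos _)
      (irredMult_replicate_two_recurrence p).symm).symm

theorem mul_riordan_ne_of_le : ∀ p ≤ 15, p * riordan p ≠ 4 * riordan (p + 1) + 3 * riordan p := by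
  decide

theorem irredMult_replicate_two_four_ne {p : ℕ} (hp : 2 ≤ p) :
    irredMult (List.replicate p 2) 4 ≠
      irredMult (List.replicate p 2) 0 + irredMult (List.replicate p 2) 2 := by
  intro h
  have hone : irredMult (List.replicate (p + 1) 2) 0 = irredMult (List.replicate p 2) 2 :=
    irredMult_cons_zero 2 _
  have htwo : irredMult (List.replicate (p + 2) 2) 0 = irredMult (List.replicate p 2) 0 +
      irredMult (List.replicate p 2) 2 + irredMult (List.replicate p 2) 4 := by
    simp only [List.replicate_succ, irredMult_cons_cons_self_zero, Finset.sum_range_succ,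
      Finset.sum_range_zero]
    simp only [mul_zero, mul_one, zero_add, Nat.reduceMul]
  have heq : p * irredMult (List.replicate p 2) 0 =
      4 * irredMult (List.replicate (p + 1) 2) 0 + 3 * irredMult (List.replicate p 2) 0 := by
    have hrec := irredMult_replicate_two_recurrence p
    rw [htwo, h, ← hone] at hrec
    nlinarith
  have hle : irredMult (List.replicate (p + 1) 2) 0 ≤ 3 * irredMult (List.replicate p 2) 0 := by
    obtain ⟨q, rfl⟩ := Nat.exists_eq_add_of_le' hp
    simpa [hone] using dimDecreasing_replicate 2 q 0
  have hpos : 0 < irredMult (List.replicate p 2) 0 :=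
    irredMult_replicate_pos hp (Nat.zero_le _) (by simp)
  have hp15 : p ≤ 15 := by
    refine Nat.le_of_mul_le_mul_right ?_ hpos
    rw [heq]
    omega
  simp only [irredMult_replicate_two_eq_riordan] at heq
  exact mul_riordan_ne_of_le p hp15 heq

theorem two_mul_irredMult_replicate_ne {k p : ℕ} (hk : 1 ≤ k) (hp : 2 ≤ p)
    (heven : Even (p * k)) (hne : k = 1 → p ≠ 2) :
    2 * irredMult (List.replicate p k) (k + k) ≠ irredMult (List.replicate (p + 2) k) 0 := by
  rw [List.replicate_succ, List.replicate_succ, irredMult_cons_cons_self_zero, two_mul, ← two_mul k,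
    Ne, Nat.add_right_cancel_iff]
  rcases Nat.lt_or_ge k 3 with h | h
  · obtain rfl | rfl : k = 1 ∨ k = 2 := by omega
    · have := irredMult_replicate_one_zero_lt_two (p := p) (by grind) (by simpa using heven)
      simpa using this.ne'
    · simpa [Finset.sum_range_succ] using irredMult_replicate_two_four_ne hp
  · have hpos : 0 < irredMult (List.replicate p k) (2 * k) :=
      irredMult_replicate_pos hp (by nlinarith) (by grind)
    obtain ⟨q, rfl⟩ := Nat.exists_eq_add_of_le' hp
    exact ((dimDecreasing_replicate k q).lt_sum_range h hpos).ne

theorem exists_two_mul_irredMult_ne {m : ℕ} {a : List ℕ} (hm : 1 ≤ m)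
    (hbd : ∀ z ∈ a, 1 ≤ z ∧ z < m) (hpair : a.Pairwise fun u v => u + v ≤ m)
    (hsum : a.sum = 2 * m) (hne : a ≠ [1, 1, 1, 1]) :
    ∃ (c : List ℕ) (u v : ℕ), (u :: v :: c).Perm a ∧
      2 * irredMult c (u + v) ≠ irredMult a 0 := by
  by_cases hlt : ∃ x ∈ a, ∃ y ∈ a, x < y
  · obtain ⟨x, hx, y, hy, hxy⟩ := hlt
    exact exists_two_mul_irredMult_ne_of_lt (fun z hz => (hbd z hz).1) hpair hsum hx hy hxy
  push Not at hlt
  obtain ⟨k, r, rfl⟩ : ∃ k r, a = List.replicate r k := by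
    rcases a with _ | ⟨k, l⟩
    · exact ⟨0, 0, rfl⟩
    · exact ⟨k, _, List.eq_replicate_of_mem fun z hz =>
        le_antisymm (hlt k List.mem_cons_self z hz) (hlt z hz k List.mem_cons_self)⟩
  rw [List.sum_replicate, smul_eq_mul] at hsum
  rcases r with _ | _ | p
  · omega
  · have := hbd k (by simp)
    omega
  · have hk := (hbd k (by simp)).1
    have hkk : k + k ≤ m := (List.pairwise_cons.1 hpair).1 k (by simp [List.replicate_succ])
    have hp : 2 ≤ p := by nlinarith
    refine ⟨List.replicate p k, k, k, .refl _,
      two_mul_irredMult_replicate_ne hk hp (by grind) ?_⟩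
    rintro rfl rfl
    exact hne rfl

/-! ### Tableaux -/

/-- The sequences of numbers of entries `1, 2, …` in the second row of a two-row tableau of
content `a`, both of whose rows end in the same column, when the first `d` boxes of the first row
are already filled. -/
def secondRows : List ℕ → ℕ → Finset (List ℕ)
  | [], d => if d = 0 then {[]} else ∅
  | x :: l, d => (Finset.range (min x d + 1)).biUnion fun v =>
      (secondRows l (d + x - 2 * v)).image (List.cons v)

theorem card_secondRows (a : List ℕ) (d : ℕ) : (secondRows a d).card = irredMult a d := by
  induction a generalizing d with
  | nil => by_cases hd : d = 0 <;> simp [secondRows, irredMult, hd]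
  | cons x l ih =>
    rw [secondRows, irredMult, Finset.card_biUnion]
    · simp only [Finset.card_image_of_injective _ List.cons_injective, ih]
    · intro v _ w _ hvw
      simp only [Finset.disjoint_left, Finset.mem_image]
      rintro _ ⟨s, -, rfl⟩ ⟨t, -, h⟩
      exact hvw (List.cons.inj h).1.symm

theorem mem_secondRows {a w : List ℕ} {d : ℕ} :
    w ∈ secondRows a d ↔ List.Forall₂ (· ≤ ·) w a ∧
      (∀ i, (w.take (i + 1)).sum + (w.take i).sum ≤ d + (a.take i).sum) ∧
      2 * w.sum = d + a.sum := by
  induction a generalizing w d with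
  | nil => by_cases hd : d = 0 <;> cases w <;> simp [secondRows, hd, eq_comm (a := 0)]
  | cons x l ih =>
    cases w with
    | nil => simp [secondRows]
    | cons v w =>
      have hmem : v :: w ∈ secondRows (x :: l) d ↔
          v ≤ min x d ∧ w ∈ secondRows l (d + x - 2 * v) := by
        simp [secondRows]
      rw [hmem, ih, ← Nat.and_forall_add_one (p := fun i =>
        ((v :: w).take (i + 1)).sum + ((v :: w).take i).sum ≤ d + ((x :: l).take i).sum)]
      simp only [List.forall₂_cons, List.take_succ_cons, List.take_zero, List.sum_cons,
        List.sum_nil, le_min_iff]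
      constructor
      · rintro ⟨⟨hvx, hvd⟩, hle, hprefix, hsum⟩
        refine ⟨⟨hvx, hle⟩, ⟨by omega, fun i => ?_⟩, by omega⟩
        have := hprefix i
        omega
      · rintro ⟨⟨hvx, hle⟩, ⟨hvd, hprefix⟩, hsum⟩
        refine ⟨⟨hvx, by omega⟩, hle, fun i => ?_, by omega⟩
        have := hprefix i
        omega

section Tableaux

variable {m r : ℕ}

/-- The content of a row: the number of occurrences of each entry. -/
def rowContent (f : Fin m → Fin r) (j : Fin r) : ℕ :=
  (Finset.univ.filter fun q => f q = j).card

/-- The number of entries of a row that are less than `i`. -/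
def countBelow (f : Fin m → Fin r) (i : ℕ) : ℕ :=
  (Finset.univ.filter fun q => (f q).val < i).card

theorem sum_rowContent (f : Fin m → Fin r) : ∑ j, rowContent f j = m := by
  have hfiber := Finset.card_eq_sum_card_fiberwise (f := f) (s := .univ) (t := .univ) (by simp)
  simpa [rowContent] using hfiber.symm

theorem countBelow_eq_sum_take (f : Fin m → Fin r) (i : ℕ) :
    countBelow f i = ((List.ofFn (rowContent f)).take i).sum := by
  rw [List.sum_take_ofFn, countBelow, Finset.card_eq_sum_card_fiberwise (f := f)
    (t := Finset.univ.filter fun j : Fin r => j.val < i) (by intro q; simp)]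
  refine Finset.sum_congr rfl fun j hj => congrArg Finset.card ?_
  ext q
  simp only [Finset.mem_filter, Finset.mem_univ, true_and] at *
  exact and_iff_right_of_imp fun h => h ▸ hj

theorem lt_countBelow_iff {f : Fin m → Fin r} (hf : Monotone f) {i : ℕ} {q : Fin m} :
    q.val < countBelow f i ↔ (f q).val < i := by
  constructor <;> intro h
  · by_contra! hq
    have hsub : (Finset.univ.filter fun q => (f q).val < i) ⊆ Finset.Iio q := fun q' hq' => by
      rw [Finset.mem_filter] at hq'
      exact Finset.mem_Iio.2 (hf.reflect_lt (hq'.2.trans_le hq))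
    exact h.not_ge ((Finset.card_le_card hsub).trans_eq (Fin.card_Iio q))
  · have hsub : Finset.Iic q ⊆ Finset.univ.filter fun q => (f q).val < i := fun q' hq' =>
      Finset.mem_filter.2 ⟨Finset.mem_univ _,
        (Fin.le_def.1 (hf (Finset.mem_Iic.1 hq'))).trans_lt h⟩
    exact (Fin.card_Iic q).symm.trans_le (Finset.card_le_card hsub)

theorem eq_of_rowContent_eq {f g : Fin m → Fin r} (hf : Monotone f) (hg : Monotone g)
    (h : rowContent f = rowContent g) : f = g := by
  funext q
  refine Fin.ext (eq_of_forall_gt_iff fun i => ?_)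
  rw [← lt_countBelow_iff hf, ← lt_countBelow_iff hg, countBelow_eq_sum_take, h,
    countBelow_eq_sum_take]

theorem exists_monotone_rowContent_eq (w : Fin r → ℕ) (hw : ∑ j, w j = m) :
    ∃ f : Fin m → Fin r, Monotone f ∧ rowContent f = w := by
  let e : Fin m ≃ Σ j, Fin (w j) := Fintype.equivOfCardEq (by simp [hw])
  let g : Fin m → Fin r := fun q => (e q).1
  refine ⟨g ∘ Tuple.sort g, Tuple.monotone_sort g, funext fun j => ?_⟩
  calc rowContent (g ∘ Tuple.sort g) j
      = Fintype.card {q // (e (Tuple.sort g q)).1 = j} := (Fintype.card_subtype _).symm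
    _ = Fintype.card {p : Σ j, Fin (w j) // p.1 = j} :=
        Fintype.card_congr (((Tuple.sort g).trans e).subtypeEquiv fun _ => Iff.rfl)
    _ = w j := by
        rw [Fintype.card_congr (Equiv.sigmaSubtype j), Fintype.card_fin]

theorem sum_take_ofFn_add (u w : Fin r → ℕ) (i : ℕ) :
    ((List.ofFn (u + w)).take i).sum =
      ((List.ofFn u).take i).sum + ((List.ofFn w).take i).sum := by
  simp only [List.sum_take_ofFn, Pi.add_apply, Finset.sum_add_distrib]

theorem forall_lt_iff_countBelow_succ_le {f g : Fin m → Fin r} (hf : Monotone f)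
    (hg : Monotone g) : (∀ q, f q < g q) ↔ ∀ i, countBelow g (i + 1) ≤ countBelow f i := by
  constructor
  · intro h i
    refine Finset.card_le_card (Finset.monotone_filter_right _ fun q _ hq => ?_)
    exact (Fin.lt_def.1 (h q)).trans_le (Nat.lt_succ_iff.1 hq)
  · intro h q
    have hq : q.val < countBelow g ((g q).val + 1) := (lt_countBelow_iff hg).2 (Nat.lt_succ_self _)
    exact (lt_countBelow_iff hf).1 (hq.trans_le (h _))

theorem forall_lt_iff_ofFn_rowContent_mem_secondRows {f g : Fin m → Fin r} (hf : Monotone f)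
    (hg : Monotone g) : (∀ q, f q < g q) ↔ List.ofFn (rowContent g) ∈
      secondRows (List.ofFn (rowContent f + rowContent g)) 0 := by
  have hle : List.Forall₂ (· ≤ ·) (List.ofFn (rowContent g))
      (List.ofFn (rowContent f + rowContent g)) := by
    simp [List.forall₂_iff_get]
  have hsum : 2 * (List.ofFn (rowContent g)).sum =
      (List.ofFn (rowContent f + rowContent g)).sum := by
    simp [List.sum_ofFn, Finset.sum_add_distrib, sum_rowContent, two_mul]
  simp only [forall_lt_iff_countBelow_succ_le hf hg, mem_secondRows, hle, hsum, zero_add,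
    true_and, and_true, sum_take_ofFn_add, countBelow_eq_sum_take, add_le_add_iff_right]

/-- The semistandard tableaux of shape `(m, m)` with `b i` entries `i`, as pairs of rows. -/
def tableaux (m : ℕ) (b : Fin r → ℕ) : Set (Fin 2 → Fin m → Fin r) :=
  {T | (∀ p, Monotone (T p)) ∧ (∀ q, T 0 q < T 1 q) ∧
    rowContent (T 0) + rowContent (T 1) = b}

theorem kostka_eq_ncard_tableaux (m : ℕ) {a : List ℤ} {b : Fin a.length → ℕ}
    (hb : ∀ i, a.get i = b i) : Kostka m a = (tableaux m b).ncard := by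
  simp only [Kostka, tableaux, hb, Nat.cast_inj, funext_iff, Pi.add_apply, rowContent,
    Finset.card_filter, Fintype.sum_prod_type, Fin.sum_univ_two, eq_comm]

theorem bijOn_tableaux_secondRows {b : Fin r → ℕ} (hsum : ∑ i, b i = 2 * m) :
    Set.BijOn (fun T => List.ofFn (rowContent (T 1))) (tableaux m b)
      (secondRows (List.ofFn b) 0) := by
  refine ⟨?_, ?_, ?_⟩
  · rintro T ⟨hmono, hcol, rfl⟩
    exact (forall_lt_iff_ofFn_rowContent_mem_secondRows (hmono 0) (hmono 1)).1 hcol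
  · rintro T ⟨hmono, -, hT⟩ T' ⟨hmono', -, hT'⟩ heq
    have h₁ : rowContent (T 1) = rowContent (T' 1) := List.ofFn_injective heq
    have h₀ : rowContent (T 0) = rowContent (T' 0) := by
      rw [← hT', h₁] at hT
      exact add_right_cancel hT
    funext p
    fin_cases p
    exacts [eq_of_rowContent_eq (hmono 0) (hmono' 0) h₀,
      eq_of_rowContent_eq (hmono 1) (hmono' 1) h₁]
  · intro l hl
    obtain ⟨hle, -, hlsum⟩ := mem_secondRows.1 hl
    obtain ⟨w, rfl⟩ : ∃ w : Fin r → ℕ, l = List.ofFn w := by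
      obtain rfl : l.length = r := by simpa using hle.length_eq
      exact ⟨l.get, (List.ofFn_get l).symm⟩
    have hwb : w ≤ b := fun i => by
      simpa using (List.forall₂_iff_get.1 hle).2 i (by simp) (by simp)
    rw [zero_add, List.sum_ofFn, List.sum_ofFn, hsum] at hlsum
    obtain ⟨f₁, hmono₁, hf₁⟩ := exists_monotone_rowContent_eq (m := m) w (by omega)
    obtain ⟨f₀, hmono₀, hf₀⟩ := exists_monotone_rowContent_eq (m := m) (b - w) (by
      simp only [Pi.sub_apply]
      rw [Finset.sum_tsub_distrib _ fun i _ => hwb i]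
      omega)
    have hb : rowContent f₀ + rowContent f₁ = b := by rw [hf₀, hf₁, tsub_add_cancel_of_le hwb]
    have hcol : ∀ q, f₀ q < f₁ q := by
      rw [forall_lt_iff_ofFn_rowContent_mem_secondRows hmono₀ hmono₁, hb, hf₁]
      exact hl
    exact ⟨![f₀, f₁], ⟨Fin.forall_fin_two.2 ⟨hmono₀, hmono₁⟩, hcol, hb⟩, congrArg _ hf₁⟩

end Tableaux

theorem kostka_natCast_eq_irredMult {m : ℕ} {a : List ℕ} (hsum : a.sum = 2 * m) :
    Kostka m (a.map (↑)) = irredMult a 0 := by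
  set b : Fin (a.map ((↑) : ℕ → ℤ)).length → ℕ := fun i => a.get (i.cast (List.length_map _))
  have hb : List.ofFn b = a := List.ext_getElem (by simp) (by simp [b])
  rw [kostka_eq_ncard_tableaux m (b := b) (by simp [b]),
    (bijOn_tableaux_secondRows (by rw [← List.sum_ofFn, hb, hsum])).ncard_eq,
    Set.ncard_coe_finset, card_secondRows, hb]

theorem kostka_ne_of_two_mul_irredMult_ne {m u v : ℕ} {c : List ℕ} (hu : 1 ≤ u) (hv : 1 ≤ v)
    (hsum : (u :: v :: c).sum = 2 * m)
    (hne : 2 * irredMult c (u + v) ≠ irredMult (u :: v :: c) 0) :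
    Kostka m ((c ++ [u + v]).map (↑)) ≠ Kostka (m - 1) ((c ++ [u - 1, v - 1]).map (↑)) := by
  simp only [List.sum_cons] at hsum
  rw [kostka_natCast_eq_irredMult (by simp; omega), kostka_natCast_eq_irredMult (by simp; omega),
    irredMult_perm (l := c ++ [u + v]) List.perm_append_comm,
    irredMult_perm (l := c ++ [u - 1, v - 1]) List.perm_append_comm]
  have hsplit := irredMult_cons_cons_zero (u - 1) (v - 1) c
  rw [Nat.sub_add_cancel hu, Nat.sub_add_cancel hv] at hsplit
  simp only [List.cons_append, List.nil_append, irredMult_cons_zero (u + v)]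
  omega

theorem exists_perm_kostka_ne {m : ℕ} {a : List ℕ} (hm : 1 ≤ m)
    (hbd : ∀ z ∈ a, 1 ≤ z ∧ z < m) (hpair : a.Pairwise fun u v => u + v ≤ m)
    (hsum : a.sum = 2 * m) (hne : a ≠ [1, 1, 1, 1]) :
    ∃ (c : List ℤ) (x y : ℤ), (c ++ [x, y]).Perm (a.map (↑)) ∧
      Kostka m (c ++ [x + y]) ≠ Kostka (m - 1) (c ++ [x - 1, y - 1]) := by
  obtain ⟨c, u, v, hperm, hmult⟩ := exists_two_mul_irredMult_ne hm hbd hpair hsum hne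
  have hu := (hbd u (hperm.subset (by simp))).1
  have hv := (hbd v (hperm.subset (by simp))).1
  refine ⟨c.map (↑), u, v, ?_, ?_⟩
  · simpa using (List.perm_append_comm.trans hperm : (c ++ [u, v]).Perm a).map ((↑) : ℕ → ℤ)
  · rw [← irredMult_perm hperm] at hmult
    simpa [Nat.cast_sub hu, Nat.cast_sub hv] using
      kostka_ne_of_two_mul_irredMult_ne hu hv (hperm.sum_eq.trans hsum) hmult

/-- **Lemma of Brooks–Martín del Campo–Sottile.** Let `a` be a reduced special Schubert
problem for `Gr(2,n)`: `1 ≤ a_i ≤ n−3`, `a_i + a_j ≤ n−2` for `i < j`, and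
`Σ a_i = 2(n−2)`.  If `a ≠ (1,1,1,1)` then some rearrangement `(b₁,…,b_r)` of `a`
satisfies `K_{n−2}(b₁,…,b_{r−2}, b_{r−1}+b_r) ≠ K_{n−3}(b₁,…,b_{r−2}, b_{r−1}−1, b_r−1)`;
when `a = (1,1,1,1)` both of these numbers equal `1`. -/
theorem reduced_problem_inequality (n : ℕ) (hn : 4 ≤ n) (a : List ℤ)
    (hbd : ∀ z ∈ a, 1 ≤ z ∧ z ≤ (n : ℤ) - 3)
    (hpair : a.Pairwise fun u v => u + v ≤ (n : ℤ) - 2)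
    (hsum : a.sum = 2 * ((n : ℤ) - 2)) :
    (a ≠ [1, 1, 1, 1] →
      ∃ (c : List ℤ) (x y : ℤ), (c ++ [x, y]).Perm a ∧
        Kostka (n - 2) (c ++ [x + y]) ≠ Kostka (n - 3) (c ++ [x - 1, y - 1])) ∧
    (a = [1, 1, 1, 1] →
      Kostka (n - 2) [1, 1, 2] = 1 ∧ Kostka (n - 3) [1, 1, 0, 0] = 1) := by
  constructor
  · intro hne
    lift a to List ℕ using fun z hz => zero_le_one.trans (hbd z hz).1
    rw [show n - 3 = n - 2 - 1 by omega]
    refine exists_perm_kostka_ne (by omega) (fun z hz => ?_) ?_ ?_ ?_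
    · have := hbd z (List.mem_map_of_mem hz)
      omega
    · exact (List.pairwise_map.1 hpair).imp fun h => by omega
    · rw [← Nat.cast_list_sum] at hsum
      omega
    · rintro rfl
      exact hne rfl
  · rintro rfl
    obtain rfl : n = 4 := by norm_num at hsum; omega
    exact ⟨(kostka_natCast_eq_irredMult (a := [1, 1, 2]) rfl).trans (by decide),
      (kostka_natCast_eq_irredMult (a := [1, 1, 0, 0]) rfl).trans (by decide)⟩
end

section
/- Let k ≥ 1 and equip ℂ^{2k} with the symplectic (nondegenerate, skew-symmetric) bilinear form ⟨·,·⟩ determined by ⟨e_i, e_{2k+1−i}⟩ = (−1)^i for 1 ≤ i ≤ 2k and ⟨e_i, e_j⟩ = 0 whenever i + j ≠ 2k+1, where e₁,…,e_{2k} is the standard basis. Let γ be the rational normal curve in ℂ^{2k}. Then for every t ∈ ℂ and every 1 ≤ i ≤ 2k−1, the annihilator F_i(t)^⊥ := { w ∈ ℂ^{2k} : ⟨w, v⟩ = 0 for all v ∈ F_i(t) } equals F_{2k−i}(t); that is, the flags osculating γ are symplectic. [Asserted in Section 4.4 in the study of symmetric Schubert problems.] -/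
/-- The symplectic bilinear form on `ℂ^{2k}` determined (in 1-indexed notation) by
`⟨e_i, e_{2k+1−i}⟩ = (−1)^i` and `⟨e_i, e_j⟩ = 0` for `i + j ≠ 2k + 1`; in 0-indexed
coordinates, `⟨e_a, e_b⟩ = (−1)^{a+1}` when `a + b = 2k − 1` and `0` otherwise. -/
noncomputable def sympForm (k : ℕ) (v w : Fin (2 * k) → ℂ) : ℂ :=
  ∑ a : Fin (2 * k), ∑ b : Fin (2 * k),
    v a * w b *
      (if (a : ℕ) + (b : ℕ) = 2 * k - 1 then (-1 : ℂ) ^ ((a : ℕ) + 1) else 0)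

/-!
The coordinates of `γ^{(m)}(t)` are the first `2k` coefficients of the power series
`X ^ m * exp (t X)`, and the symplectic form sends the coefficient vectors of `f` and `g` to minus
the coefficient of `X ^ (2k - 1)` in `f(-X) g(X)`. Since `exp (-t X) * exp (t X) = 1`, the product
for `γ^{(m)}(t)` and `γ^{(l)}(t)` is `(-1) ^ m * X ^ (m + l)`: these vectors pair to zero unless
`m + l = 2k - 1`. Their Gram matrix is therefore antidiagonal with nonzero antidiagonal entries,
so they form a basis, and a vector annihilates `γ^{(m)}(t)` for all `m < i` exactly when its
coefficients along `γ^{(2k - 1 - m)}(t)` vanish for these `m`.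
-/

section MonomialGramMatrix

variable {R M N P ι κ : Type*} [CommRing R] [IsDomain R]
  [AddCommMonoid M] [Module R M] [AddCommGroup N] [Module R N]
  [AddCommMonoid P] [Module R P] [Module.IsTorsionFree R P]
  {B : M →ₗ[R] N →ₗ[R] P} {v : ι → M} {w : κ → N} {σ : ι → κ}

lemma apply_linearCombination_eq_zero_iff (hB : ∀ i j, B (v i) (w j) = 0 ↔ j ≠ σ i)
    (c : κ →₀ R) (i : ι) :
    B (v i) (Finsupp.linearCombination R w c) = 0 ↔ c (σ i) = 0 := by
  have extract : B (v i) (Finsupp.linearCombination R w c) = c (σ i) • B (v i) (w (σ i)) := by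
    rw [Finsupp.apply_linearCombination, Finsupp.linearCombination_apply]
    exact Finsupp.sum_eq_single (σ i)
      (fun j _ hj => by rw [Function.comp_apply, (hB i j).mpr hj, smul_zero])
      (fun _ => zero_smul R _)
  have diag_ne_zero : B (v i) (w (σ i)) ≠ 0 := fun h => (hB i (σ i)).mp h rfl
  rw [extract, smul_eq_zero_iff_left diag_ne_zero]

lemma linearIndependent_of_apply_eq_zero_iff (hB : ∀ i j, B (v i) (w j) = 0 ↔ j ≠ σ i)
    (hσ : Function.Surjective σ) : LinearIndependent R w := by
  rw [linearIndependent_iff]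
  intro c hc
  ext j
  obtain ⟨i, rfl⟩ := hσ j
  rw [Finsupp.zero_apply, ← apply_linearCombination_eq_zero_iff hB, hc, map_zero]

lemma orthogonalBilin_span_image (hB : ∀ i j, B (v i) (w j) = 0 ↔ j ≠ σ i)
    (hw : Submodule.span R (Set.range w) = ⊤) (s : Set ι) :
    (Submodule.span R (v '' s)).orthogonalBilin B = Submodule.span R (w '' (σ '' s)ᶜ) := by
  apply le_antisymm
  · intro y hy
    obtain ⟨c, rfl⟩ : y ∈ LinearMap.range (Finsupp.linearCombination R w) := by
      rw [Finsupp.range_linearCombination, hw]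
      exact Submodule.mem_top
    refine (Finsupp.mem_span_image_iff_linearCombination R).mpr ⟨c, ?_, rfl⟩
    rw [Finsupp.mem_supported']
    rintro _ hj
    obtain ⟨i, hi, rfl⟩ := not_not.mp hj
    exact (apply_linearCombination_eq_zero_iff hB c i).mp
      (hy _ (Submodule.subset_span ⟨i, hi, rfl⟩))
  · rw [Submodule.span_le]
    rintro _ ⟨j, hj, rfl⟩
    suffices Submodule.span R (v '' s) ≤ LinearMap.ker (B.flip (w j)) from fun x hx => this hx
    rw [Submodule.span_le]
    rintro _ ⟨i, hi, rfl⟩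
    exact (hB i j).mpr fun h => hj ⟨i, hi, h.symm⟩

end MonomialGramMatrix

section ExpSeries

open PowerSeries

lemma rescale_neg_one_X_pow_mul_exp_mul {A : Type*} [CommRing A] [Algebra ℚ A] (m l : ℕ) (t : A) :
    rescale (-1) (X ^ m * rescale t (exp A)) * (X ^ l * rescale t (exp A)) =
      (-1) ^ m * X ^ (m + l) := by
  have exp_cancel : rescale (t * -1) (exp A) * rescale t (exp A) = 1 := by
    rw [exp_mul_exp_eq_exp_add]
    simp
  rw [map_mul, map_pow, rescale_neg_one_X, rescale_rescale, mul_mul_mul_comm, exp_cancel, neg_pow]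
  ring

lemma gammaVec_eq_coeff (n m : ℕ) (t : ℂ) :
    gammaVec n m t = fun a : Fin n => coeff (a : ℕ) (X ^ m * rescale t (exp ℂ)) := by
  ext a
  rw [gammaVec, Polynomial.iterate_derivative_C_mul, Polynomial.iterate_derivative_X_pow_eq_smul,
    coeff_X_pow_mul']
  split_ifs with h
  · have factorial_split : (((a : ℕ) - m).factorial : ℂ) * ((a : ℕ).descFactorial m : ℂ) =
        (a : ℕ).factorial := by
      exact_mod_cast Nat.factorial_mul_descFactorial h
    have factorial_ne_zero (b : ℕ) : (b.factorial : ℂ) ≠ 0 := by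
      exact_mod_cast b.factorial_ne_zero
    simp only [Polynomial.eval_mul, Polynomial.eval_C, Polynomial.eval_smul, Polynomial.eval_pow,
      Polynomial.eval_X, coeff_rescale, coeff_exp, smul_eq_mul, map_div₀, map_one, map_natCast]
    field_simp [factorial_ne_zero]
    rw [← factorial_split]
    ring
  · simp [Nat.descFactorial_of_lt (not_le.mp h)]

end ExpSeries

section SymplecticForm

open PowerSeries

/-- The symplectic form `sympForm k` bundled as a bilinear map, so that annihilators can be written
with `Submodule.orthogonalBilin`; it is defined by its matrix in the standard basis. -/
noncomputable def sympBilin (k : ℕ) :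
    (Fin (2 * k) → ℂ) →ₗ[ℂ] (Fin (2 * k) → ℂ) →ₗ[ℂ] ℂ :=
  Matrix.toBilin' (Matrix.of fun a b : Fin (2 * k) =>
    if (a : ℕ) + (b : ℕ) = 2 * k - 1 then (-1 : ℂ) ^ ((a : ℕ) + 1) else 0)

lemma sympBilin_apply (k : ℕ) (v w : Fin (2 * k) → ℂ) : sympBilin k v w = sympForm k v w := by
  simp only [sympBilin, sympForm, Matrix.toBilin'_apply, Matrix.of_apply, mul_right_comm]

lemma sympForm_eq_sum_rev (k : ℕ) (v w : Fin (2 * k) → ℂ) :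
    sympForm k v w = ∑ a : Fin (2 * k), (-1) ^ ((a : ℕ) + 1) * v a * w a.rev := by
  refine Finset.sum_congr rfl fun a _ => ?_
  have add_eq_iff (b : Fin (2 * k)) : (a : ℕ) + b = 2 * k - 1 ↔ b = a.rev := by
    rw [Fin.ext_iff, Fin.val_rev]
    omega
  simp only [add_eq_iff, mul_ite, mul_zero, Finset.sum_ite_eq', Finset.mem_univ, if_true]
  ring

lemma sympForm_coeff {k : ℕ} (hk : 1 ≤ k) (f g : ℂ⟦X⟧) :
    sympForm k (fun a => coeff (a : ℕ) f) (fun b => coeff (b : ℕ) g) =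
      -coeff (2 * k - 1) (rescale (-1) f * g) := by
  have hn : (2 * k - 1).succ = 2 * k := by omega
  rw [sympForm_eq_sum_rev, coeff_mul, Finset.Nat.sum_antidiagonal_eq_sum_range_succ_mk, hn,
    ← Fin.sum_univ_eq_sum_range
      (fun a => coeff a (rescale (-1) f) * coeff (2 * k - 1 - a) g), ← Finset.sum_neg_distrib]
  refine Finset.sum_congr rfl fun a _ => ?_
  rw [coeff_rescale, Fin.val_rev, Nat.sub_sub, Nat.add_comm 1, pow_succ]
  ring

lemma sympForm_gammaVec {k : ℕ} (hk : 1 ≤ k) (m l : ℕ) (t : ℂ) :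
    sympForm k (gammaVec (2 * k) m t) (gammaVec (2 * k) l t) =
      if m + l = 2 * k - 1 then (-1 : ℂ) ^ (m + 1) else 0 := by
  have coeff_neg_one_pow_mul (h : ℂ⟦X⟧) (d : ℕ) :
      coeff d ((-1) ^ m * h) = (-1) ^ m * coeff d h := by
    rw [← coeff_C_mul, map_pow, map_neg, map_one]
  rw [gammaVec_eq_coeff, gammaVec_eq_coeff, sympForm_coeff hk, rescale_neg_one_X_pow_mul_exp_mul,
    coeff_neg_one_pow_mul, coeff_X_pow]
  simp only [eq_comm (a := 2 * k - 1), pow_succ]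
  split_ifs <;> simp

end SymplecticForm

section OsculatingFlag

-- Flipped because `Submodule.orthogonalBilin` annihilates in the second argument.
lemma sympBilin_flip_gammaVec_eq_zero_iff {k : ℕ} (t : ℂ) (a b : Fin (2 * k)) :
    (sympBilin k).flip (gammaVec (2 * k) a t) (gammaVec (2 * k) b t) = 0 ↔ b ≠ a.rev := by
  have hk : 1 ≤ k := by have := a.pos; omega
  have add_eq_iff : (b : ℕ) + a = 2 * k - 1 ↔ b = a.rev := by
    rw [Fin.ext_iff, Fin.val_rev]
    omega
  simp [sympBilin_apply, sympForm_gammaVec hk, add_eq_iff]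

lemma span_range_gammaVec (k : ℕ) (t : ℂ) :
    Submodule.span ℂ (Set.range fun a : Fin (2 * k) => gammaVec (2 * k) a t) = ⊤ :=
  (linearIndependent_of_apply_eq_zero_iff (sympBilin_flip_gammaVec_eq_zero_iff t)
    Fin.rev_surjective).span_eq_top_of_card_eq_finrank' (by simp)

lemma oscFlag_eq_span_image {n i : ℕ} (hi : i ≤ n) (t : ℂ) :
    oscFlag n i t =
      Submodule.span ℂ ((fun a : Fin n => gammaVec n a t) '' {a | (a : ℕ) < i}) := by
  rw [oscFlag, ← Fin.range_castLE hi, ← Set.range_comp]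
  rfl

lemma compl_image_rev_setOf_lt (n i : ℕ) :
    (Fin.rev '' {a : Fin n | (a : ℕ) < i})ᶜ = {a : Fin n | (a : ℕ) < n - i} := by
  ext a
  rw [Set.mem_compl_iff, Set.mem_image_iff_of_inverse Fin.rev_rev Fin.rev_rev]
  simp only [Set.mem_ofPred_eq, Fin.val_rev]
  omega

end OsculatingFlag

/-- **Flags osculating the rational normal curve are symplectic.** For every `t ∈ ℂ`
and `1 ≤ i ≤ 2k − 1`, the annihilator of `F_i(t)` under the symplectic form equals
`F_{2k−i}(t)`. -/
theorem osculating_flags_are_symplectic (k : ℕ) (hk : 1 ≤ k) (t : ℂ)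
    (i : ℕ) (hi1 : 1 ≤ i) (hi2 : i ≤ 2 * k - 1) :
    {w : Fin (2 * k) → ℂ | ∀ v ∈ oscFlag (2 * k) i t, sympForm k w v = 0} =
      ↑(oscFlag (2 * k) (2 * k - i) t) := by
  ext w
  have mem_annihilator : (∀ v ∈ oscFlag (2 * k) i t, sympForm k w v = 0) ↔
      w ∈ (oscFlag (2 * k) i t).orthogonalBilin (sympBilin k).flip := by
    simp only [Submodule.mem_orthogonalBilin_iff, LinearMap.flip_apply, sympBilin_apply]
  rw [Set.mem_ofPred_eq, mem_annihilator, oscFlag_eq_span_image (by omega),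
    orthogonalBilin_span_image (sympBilin_flip_gammaVec_eq_zero_iff t) (span_range_gammaVec k t),
    compl_image_rev_setOf_lt, ← oscFlag_eq_span_image (Nat.sub_le _ _), SetLike.mem_coe]
end

section
/- Let n ≥ 1 and let G be a subgroup of the symmetric group S_n whose natural action on {1,…,n} is primitive (it is transitive and preserves no nontrivial partition of {1,…,n} into blocks). If G contains an ℓ-cycle for some prime number ℓ with ℓ < n−2, then G contains the alternating group A_n; that is, G is either S_n or A_n. [Jordan's theorem (1873), as stated in Section 5.5.] -/
/-!
Let `σ ∈ G` be a cycle of prime length `p` and let `s` be its set of fixed points. As `⟨σ⟩` is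
transitive of prime degree on the support, Jordan's criterion makes `G` multiply transitive enough
for the setwise stabilizer of `s` to induce every permutation of `s`. The kernel of this action on
`s` embeds into the symmetric group of degree `p`, so `⟨σ⟩` is one of its Sylow subgroups, and by
the Frattini argument the normalizer of `⟨σ⟩` in the stabilizer still induces every permutation of
`s`. Since `⟨σ⟩` is cyclic, its automorphism group is abelian, so commutators of elements of the
normalizer centralize `σ`. Hence every `τ` in the derived subgroup of the symmetric group of `s` is
induced by some `h ∈ G` commuting with `σ`; such an `h` acts on the support as a power of `σ`, and
cancelling this power shows that `τ`, extended by the identity, lies in `G`. If `s` has at least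
three points, this produces a 3-cycle in the primitive group `G`.
-/

open Equiv Equiv.Perm MulAction

open scoped Pointwise commutatorElement

theorem isPreprimitive_of_forall_invariant_setoid {M α : Type*} [Group M] [MulAction M α]
    [IsPretransitive M α]
    (h : ∀ s : Setoid α, (∀ (g : M) (x y : α), s.r x y → s.r (g • x) (g • y)) → s = ⊥ ∨ s = ⊤) :
    IsPreprimitive M α where
  isTrivialBlock_of_isBlock {B} hB := by
    rcases B.eq_empty_or_nonempty with rfl | ⟨b, hb⟩
    · exact Or.inl Set.subsingleton_empty
    -- As `B` is a block, it is a class of the relation saying that no translate of `B` separates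
    -- two points.
    let s : Setoid α := Setoid.ker fun x : α => (fun g : M => g • x) ⁻¹' B
    have rel_iff {x y : α} : s.r x y ↔ ∀ g : M, g • x ∈ B ↔ g • y ∈ B := Set.ext_iff
    have smul_mem {x y : α} (hx : x ∈ B) (hy : y ∈ B) (g : M) (hg : g • x ∈ B) : g • y ∈ B :=
      hB.smul_eq_of_mem hx hg ▸ Set.smul_mem_smul_set hy
    have invariant (g : M) (x y : α) (hxy : s.r x y) : s.r (g • x) (g • y) :=
      rel_iff.2 fun k => by simpa only [smul_smul] using rel_iff.1 hxy (k * g)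
    rcases h s invariant with hs | hs
    · refine Or.inl fun x hx y hy => ?_
      have hxy : s.r x y := rel_iff.2 fun g => ⟨smul_mem hx hy g, smul_mem hy hx g⟩
      rwa [hs] at hxy
    · refine Or.inr (Set.eq_univ_of_forall fun y => ?_)
      have hby : s.r b y := hs ▸ trivial
      simpa only [one_smul, hb, true_iff] using rel_iff.1 hby 1

section Frattini

open Subgroup

theorem commutator_normalizer_le_centralizer {G : Type*} [Group G] (H : Subgroup G)
    [hH : IsCyclic H] :
    ⁅normalizer (H : Set G), normalizer (H : Set G)⁆ ≤ centralizer (H : Set G) := by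
  let _ : CommGroup (MulAut H) :=
    (hH.mulAutMulEquiv _).toMonoidHom.commGroupOfInjective (hH.mulAutMulEquiv _).injective
  rw [← map_subtype_commutator, map_le_iff_le_comap, ← subgroupOf, ← normalizerMonoidHom_ker]
  exact Abelianization.commutator_subset_ker H.normalizerMonoidHom

theorem commutator_le_map_centralizer_sylow {H K : Type*} [Group H] [Group K] {f : H →* K}
    (hf : Function.Surjective f) {p : ℕ} [Fact p.Prime] [Finite (Sylow p f.ker)]
    (P : Sylow p f.ker) [IsCyclic P] :
    commutator K ≤ (centralizer ((P : Subgroup f.ker).map f.ker.subtype : Set H)).map f := by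
  let Q : Subgroup H := (P : Subgroup f.ker).map f.ker.subtype
  have : IsCyclic Q := (P : Subgroup f.ker).equivMapOfInjective _ f.ker.subtype_injective
    |>.isCyclic.1 ‹_›
  have frattini : (normalizer (Q : Set H)).map f = ⊤ := by
    rw [← sup_bot_eq ((normalizer _).map f), ← (map_eq_bot_iff f.ker).2 le_rfl, ← Subgroup.map_sup,
      Sylow.normalizer_sup_eq_top P, map_top_of_surjective f hf]
  calc commutator K = ⁅normalizer (Q : Set H), normalizer (Q : Set H)⁆.map f := by
        rw [map_commutator, frattini, _root_.commutator_def]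
    _ ≤ (centralizer (Q : Set H)).map f := map_mono (commutator_normalizer_le_centralizer Q)

theorem exists_sylow_eq_zpowers {H : Type*} [Group H] {p : ℕ} [hp : Fact p.Prime]
    {g : H} (hg : orderOf g = p) (hH : Nat.card H ∣ p.factorial) :
    ∃ P : Sylow p H, (P : Subgroup H) = zpowers g := by
  have card_zpowers : Nat.card (zpowers g) = p := (Nat.card_zpowers g).trans hg
  have index_dvd : (zpowers g).index ∣ (p - 1).factorial := by
    refine Nat.dvd_of_mul_dvd_mul_left hp.out.pos ?_
    rwa [Nat.mul_factorial_pred hp.out.ne_zero, ← card_zpowers, card_mul_index, card_zpowers]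
  have not_dvd_index : ¬ p ∣ (zpowers g).index := fun h =>
    (Nat.sub_lt hp.out.pos one_pos).not_ge (hp.out.dvd_factorial.1 (h.trans index_dvd))
  exact ⟨(IsPGroup.of_card (n := 1) (by rw [card_zpowers, pow_one])).toSylow not_dvd_index, rfl⟩

theorem exists_commute_map_eq {H K : Type*} [Group H] [Group K] {f : H →* K}
    (hf : Function.Surjective f) {p : ℕ} (hp : p.Prime)
    (hcard : Nat.card f.ker ∣ p.factorial) {g : H} (hg : g ∈ f.ker) (hgp : orderOf g = p)
    {k : K} (hk : k ∈ commutator K) : ∃ h : H, Commute h g ∧ f h = k := by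
  have := Fact.mk hp
  have : Finite f.ker :=
    Nat.finite_of_card_ne_zero (ne_zero_of_dvd_ne_zero p.factorial_ne_zero hcard)
  obtain ⟨P, hP⟩ := exists_sylow_eq_zpowers (g := (⟨g, hg⟩ : f.ker)) (by rwa [orderOf_mk]) hcard
  have : IsCyclic P := by rw [hP]; infer_instance
  obtain ⟨h, hh, rfl⟩ := commutator_le_map_centralizer_sylow hf P hk
  refine ⟨h, (mem_centralizer_iff.1 hh g ?_).symm, rfl⟩
  rw [hP]
  exact mem_map_of_mem f.ker.subtype (mem_zpowers _)

end Frattini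

theorem surjective_toPermHom_stabilizer {M α : Type*} [Group M] [MulAction M α] (s : Set α)
    [Finite s] (h : IsMultiplyPretransitive M α s.ncard) :
    Function.Surjective (toPermHom (stabilizer M s) s) := by
  intro τ
  let e : s ≃ Fin s.ncard := Finite.equivFinOfCardEq rfl
  obtain ⟨g, hg⟩ := exists_smul_eq M (e.symm.toEmbedding.trans (Function.Embedding.subtype (· ∈ s)))
    ((e.symm.trans τ).toEmbedding.trans (Function.Embedding.subtype (· ∈ s)))
  have smul_eq (x : s) : g • (x : α) = τ x := by
    simpa using! DFunLike.congr_fun hg (e x)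
  have hgs : g ∈ stabilizer M s := by
    rw [mem_stabilizer_set_iff_smul_set_subset s.toFinite]
    rintro _ ⟨x, hx, rfl⟩
    exact Set.mem_of_eq_of_mem (smul_eq ⟨x, hx⟩) (τ _).2
  exact ⟨⟨g, hgs⟩, Equiv.ext fun x => Subtype.ext (smul_eq x)⟩

theorem card_ker_toPermHom_stabilizer_dvd {M α : Type*} [Group M] [MulAction M α]
    [FaithfulSMul M α] (s : Set α) [Finite ↥sᶜ] :
    Nat.card (toPermHom (stabilizer M s) s).ker ∣ (sᶜ.ncard).factorial := by
  let ρ : (toPermHom (stabilizer M s) s).ker →* Perm ↥sᶜ :=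
    (toPermHom (stabilizer M sᶜ) ↥sᶜ).comp
      ((Subgroup.inclusion (stabilizer_compl M α).ge).comp (Subgroup.subtype _))
  have injective_ρ : Function.Injective ρ := by
    refine (injective_iff_map_eq_one ρ).2 fun g hg => ?_
    refine Subtype.ext (Subtype.ext (eq_of_smul_eq_smul (α := α) fun x => ?_))
    rw [Subgroup.coe_one, Subgroup.coe_one, one_smul]
    by_cases hx : x ∈ s
    · exact congrArg Subtype.val (Perm.congr_fun g.2 ⟨x, hx⟩)
    · exact congrArg Subtype.val (Perm.congr_fun hg ⟨x, hx⟩)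
  rw [← Nat.card_coe_set_eq, ← Nat.card_perm]
  exact Subgroup.card_dvd_of_injective ρ injective_ρ

section Perm

variable {α : Type*} [Fintype α] [DecidableEq α]

theorem exists_isThreeCycle_mem_commutator (h : 3 ≤ Fintype.card α) :
    ∃ τ ∈ commutator (Perm α), τ.IsThreeCycle := by
  obtain ⟨a, b, c, hab, hac, hbc⟩ := Fintype.two_lt_card_iff.1 h
  refine ⟨⁅swap a b, swap a c⁆,
    Subgroup.commutator_mem_commutator (Subgroup.mem_top _) (Subgroup.mem_top _), ?_⟩
  simpa only [commutatorElement_def, swap_inv, mul_assoc] using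
    (isThreeCycle_swap_mul_swap_same hab hac hbc).isThreeCycle_sq

theorem exists_mem_zpowers_ofSubtype_mul_eq {c g : Perm α} (hc : c.IsCycle) (hgc : Commute g c)
    {τ : Perm ↥(c.support : Set α)ᶜ} (hτ : ∀ x : ↥(c.support : Set α)ᶜ, g x = τ x) :
    ∃ z ∈ Subgroup.zpowers c, ofSubtype τ * z = g := by
  obtain ⟨support_invariant, restriction_mem⟩ := hc.commute_iff.1 hgc
  refine ⟨_, restriction_mem, Equiv.ext fun x => ?_⟩
  rw [mul_apply]
  by_cases hx : x ∈ c.support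
  · rw [ofSubtype_subtypePerm_of_mem _ hx]
    exact ofSubtype_apply_of_not_mem τ (not_not.2 ((support_invariant x).2 hx))
  · rw [ofSubtype_subtypePerm_of_not_mem _ hx, ofSubtype_apply_of_mem τ hx, hτ ⟨x, hx⟩]

variable {G : Subgroup (Perm α)} {σ : Perm α}

theorem isMultiplyPretransitive_of_isCycle_mem (hG : IsPreprimitive G α)
    (hσ : σ ∈ G) (hc : σ.IsCycle) (hp : σ.support.card.Prime) :
    IsMultiplyPretransitive G α ((σ.support : Set α)ᶜ.ncard + 1) := by
  rcases hn : (σ.support : Set α)ᶜ.ncard with _ | n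
  · exact is_one_pretransitive_iff.2 hG.toIsPretransitive
  have card_eq : σ.support.card + (n + 1) = Nat.card α := by
    rw [← hn, ← Set.ncard_coe_finset, Set.ncard_add_ncard_compl]
  have coe_eq : (SubMulAction.ofFixingSubgroup G (σ.support : Set α)ᶜ : Set α) = σ.support :=
    compl_compl _
  have transitive_on_support := isPretransitive_of_isCycle_mem hc hσ
  have primitive_on_support : IsPreprimitive (fixingSubgroup G (σ.support : Set α)ᶜ)
      (SubMulAction.ofFixingSubgroup G (σ.support : Set α)ᶜ) := by
    apply IsPreprimitive.of_prime_card
    rwa [← SetLike.coe_sort_coe, coe_eq, Nat.card_coe_set_eq, Set.ncard_coe_finset]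
  have := hG.isMultiplyPreprimitive hn (by have := hp.two_le; omega) primitive_on_support
  exact this.isMultiplyPretransitive

theorem ofSubtype_mem_of_mem_commutator (hG : IsPreprimitive G α)
    (hσ : σ ∈ G) (hc : σ.IsCycle) (hp : σ.support.card.Prime)
    {τ : Perm ↥(σ.support : Set α)ᶜ} (hτ : τ ∈ commutator (Perm ↥(σ.support : Set α)ᶜ)) :
    ofSubtype τ ∈ G := by
  set s : Set α := (σ.support : Set α)ᶜ with hs
  have card_eq : σ.support.card + s.ncard = Nat.card α := by
    rw [← Set.ncard_coe_finset, Set.ncard_add_ncard_compl]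
  have := isMultiplyPretransitive_of_isCycle_mem hG hσ hc hp
  have restriction_surjective : Function.Surjective (toPermHom (stabilizer G s) s) :=
    surjective_toPermHom_stabilizer s <|
      isMultiplyPretransitive_of_le (Nat.le_succ _) (by have := hp.pos; omega)
  have card_ker := card_ker_toPermHom_stabilizer_dvd (M := G) s
  rw [hs, compl_compl, Set.ncard_coe_finset] at card_ker
  have σ_mem_fixing : (⟨σ, hσ⟩ : G) ∈ fixingSubgroup G s :=
    (mem_fixingSubgroup_iff G).2 fun _ hx => notMem_support.1 hx
  let σ' : stabilizer G s := ⟨⟨σ, hσ⟩, fixingSubgroup_le_stabilizer G s σ_mem_fixing⟩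
  have mem_ker : σ' ∈ (toPermHom (stabilizer G s) s).ker :=
    Equiv.ext fun x => Subtype.ext (notMem_support.1 x.2)
  have order_eq : orderOf σ' = σ.support.card := by
    rw [Subgroup.orderOf_mk, Subgroup.orderOf_mk, hc.orderOf]
  obtain ⟨h, h_commute, h_restrict⟩ :=
    exists_commute_map_eq restriction_surjective hp card_ker mem_ker order_eq hτ
  have coe_commute : Commute (h : Perm α) σ :=
    h_commute.map (G.subtype.comp (stabilizer G s).subtype)
  obtain ⟨z, hz, hzh⟩ := exists_mem_zpowers_ofSubtype_mul_eq hc coe_commute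
    fun x => congrArg Subtype.val (Perm.congr_fun h_restrict x)
  rw [← G.mul_mem_cancel_right (Subgroup.zpowers_le.2 hσ hz), hzh]
  exact h.1.2

theorem jordan_primitive_contains_alternating_general (hG : IsPreprimitive G α)
    (hσ : σ ∈ G) (hc : σ.IsCycle) (hp : σ.support.card.Prime)
    (hcard : σ.support.card + 3 ≤ Fintype.card α) : alternatingGroup α ≤ G := by
  have three_le_card : 3 ≤ Fintype.card ↥(σ.support : Set α)ᶜ := by
    simp only [Fintype.card_compl_set, Finset.coe_sort_coe, Fintype.card_coe]
    omega
  obtain ⟨τ, hτ, hτ3⟩ := exists_isThreeCycle_mem_commutator three_le_card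
  exact alternatingGroup_le_of_isPreprimitive_of_isThreeCycle_mem hG
    (cycleType_ofSubtype.trans hτ3) (ofSubtype_mem_of_mem_commutator hG hσ hc hp hτ)

end Perm

/-- **Jordan's theorem (1873).** Let `G ≤ S_n` be a permutation group that is
transitive and primitive (the only `G`-invariant equivalence relations, i.e.
partitions, of `{1, …, n}` are the partition into singletons (`⊥`) and the partition
with a single block (`⊤`)).  If `G` contains an `ℓ`-cycle for some prime `ℓ < n − 2`,
then `G` contains the alternating group `A_n`; that is, `G` is `S_n` or `A_n`. -/
theorem jordan_primitive_contains_alternating (n : ℕ) (hn : 1 ≤ n)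
    (G : Subgroup (Equiv.Perm (Fin n)))
    (htrans : ∀ x y : Fin n, ∃ g ∈ G, g x = y)
    (hprim : ∀ s : Setoid (Fin n),
      (∀ g ∈ G, ∀ x y : Fin n, s.r x y → s.r (g x) (g y)) → s = ⊥ ∨ s = ⊤)
    (ℓ : ℕ) (hℓ : ℓ.Prime) (hℓn : ℓ < n - 2)
    (σ : Equiv.Perm (Fin n)) (hσG : σ ∈ G) (hcyc : σ.IsCycle)
    (hsupp : σ.support.card = ℓ) :
    alternatingGroup (Fin n) ≤ G := by
  have : IsPretransitive G (Fin n) :=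
    ⟨fun x y => let ⟨g, hg, hgx⟩ := htrans x y; ⟨⟨g, hg⟩, hgx⟩⟩
  have hG : IsPreprimitive G (Fin n) := isPreprimitive_of_forall_invariant_setoid
    fun s hs => hprim s fun g hg => hs ⟨g, hg⟩
  exact jordan_primitive_contains_alternating_general hG hσG hcyc (hsupp ▸ hℓ)
    (by rw [hsupp, Fintype.card_fin]; omega)
end
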